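/- For every integer α ≥ 1 there exists an integer x such that, in the d_5 tower, L_{2α+1} ≡ x·L_{2α−1} (mod 7^α), where congruence of Laurent series means all corresponding coefficients are congruent. -/

import Mathlib

noncomputable section

/-- `J b = ∏_{k=1}^∞ (1 - q^{b·k})` as a formal power series with integer coefficients. -/
def J (b : ℕ) : PowerSeries ℤ :=
  PowerSeries.mk fun n =>
    PowerSeries.coeff n
      (∏ k ∈ Finset.range (n + 1), (1 - (PowerSeries.X : PowerSeries ℤ) ^ (b * (k + 1))))

section
open PowerSeries Finset

/-- the complex function `F` on the open unit disc is the sum of the power series `g` -/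
def RepC (g : ℂ⟦X⟧) (F : ℂ → ℂ) : Prop :=
  ∀ q : ℂ, ‖q‖ < 1 → HasSum (fun n => coeff n g * q ^ n) (F q)

lemma RepC.congr {g : ℂ⟦X⟧} {F G : ℂ → ℂ} (h : RepC g F) (hFG : ∀ q, ‖q‖ < 1 → F q = G q) :
    RepC g G := fun q hq => hFG q hq ▸ h q hq

lemma RepC.add {g g' : ℂ⟦X⟧} {F F' : ℂ → ℂ} (h : RepC g F) (h' : RepC g' F') :
    RepC (g + g') (fun q => F q + F' q) := fun q hq => by
  simpa [add_mul] using (h q hq).add (h' q hq)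

lemma RepC.sub {g g' : ℂ⟦X⟧} {F F' : ℂ → ℂ} (h : RepC g F) (h' : RepC g' F') :
    RepC (g - g') (fun q => F q - F' q) := fun q hq => by
  simpa [sub_mul] using (h q hq).sub (h' q hq)

lemma RepC.smul {g : ℂ⟦X⟧} {F : ℂ → ℂ} (h : RepC g F) (c : ℂ) :
    RepC (C c * g) (fun q => c * F q) := fun q hq => by
  simpa [mul_assoc] using (h q hq).mul_left c

lemma RepC.norm_summable {g : ℂ⟦X⟧} {F : ℂ → ℂ} (h : RepC g F) {q : ℂ} (hq : ‖q‖ < 1) :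
    Summable fun n => ‖coeff n g * q ^ n‖ := (h q hq).summable.norm

lemma RepC.mul {g g' : ℂ⟦X⟧} {F F' : ℂ → ℂ} (h : RepC g F) (h' : RepC g' F') :
    RepC (g * g') (fun q => F q * F' q) := fun q hq => by
  have h1 := h.norm_summable hq
  have h2 := h'.norm_summable hq
  have h3 := tsum_mul_tsum_eq_tsum_sum_antidiagonal_of_summable_norm h1 h2
  have h4 := (summable_norm_sum_mul_antidiagonal_of_summable_norm h1 h2).of_norm
  rw [(h q hq).tsum_eq, (h' q hq).tsum_eq] at h3
  simp only [] at h3 ⊢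
  rw [h3]
  have h5 : (fun n => coeff n (g * g') * q ^ n) = fun n => ∑ kl ∈ HasAntidiagonal.antidiagonal n,
      (coeff kl.1) g * q ^ kl.1 * ((coeff kl.2) g' * q ^ kl.2) := ?_
  · rw [h5]; exact h4.hasSum
  funext n
  rw [coeff_mul, Finset.sum_mul]
  refine Finset.sum_congr rfl fun x hx => ?_
  rw [← Finset.HasAntidiagonal.mem_antidiagonal.1 hx, pow_add]; ring

lemma RepC.const (c : ℂ) : RepC (C c) (fun _ => c) := fun q hq => by
  have := hasSum_single (f := fun n => coeff n (C c : ℂ⟦X⟧) * q ^ n) 0 (by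
    intro n hn; simp [coeff_C, hn])
  simpa using this

lemma RepC.one : RepC 1 (fun _ => 1) := by simpa using RepC.const 1
lemma RepC.zero : RepC 0 (fun _ => 0) := by simpa using RepC.const 0

lemma RepC.X : RepC PowerSeries.X (fun q => q) := fun q hq => by
  have := hasSum_single (f := fun n => coeff n (PowerSeries.X : ℂ⟦X⟧) * q ^ n) 1 (by
    intro n hn; simp [coeff_X, hn])
  simpa using this

lemma RepC.pow {g : ℂ⟦X⟧} {F : ℂ → ℂ} (h : RepC g F) (n : ℕ) :
    RepC (g ^ n) (fun q => F q ^ n) := by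
  induction n with
  | zero => simpa using RepC.one
  | succ n ih => simpa [pow_succ] using ih.mul h

lemma RepC.prod {ι : Type*} (s : Finset ι) {g : ι → ℂ⟦X⟧} {F : ι → ℂ → ℂ}
    (h : ∀ i ∈ s, RepC (g i) (F i)) :
    RepC (∏ i ∈ s, g i) (fun q => ∏ i ∈ s, F i q) := by
  classical
  induction s using Finset.induction_on with
  | empty => simpa using RepC.one
  | insert a s ha ih =>
    simp only [Finset.prod_insert ha]
    exact (h a (by simp)).mul (ih fun i hi => h i (by simp [hi]))

lemma RepC.sum {ι : Type*} (s : Finset ι) {g : ι → ℂ⟦X⟧} {F : ι → ℂ → ℂ}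
    (h : ∀ i ∈ s, RepC (g i) (F i)) :
    RepC (∑ i ∈ s, g i) (fun q => ∑ i ∈ s, F i q) := by
  classical
  induction s using Finset.induction_on with
  | empty => simpa using RepC.zero
  | insert a s ha ih =>
    simp only [Finset.sum_insert ha]
    exact (h a (by simp)).add (ih fun i hi => h i (by simp [hi]))

lemma RepC.hasFP {g : ℂ⟦X⟧} {F : ℂ → ℂ} (h : RepC g F) :
    HasFPowerSeriesAt F (FormalMultilinearSeries.ofScalars ℂ (fun n => coeff n g)) 0 := by
  rw [hasFPowerSeriesAt_iff]
  filter_upwards [Metric.ball_mem_nhds (0 : ℂ) one_pos] with z hz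
  have := h z (by simpa using hz)
  simpa [FormalMultilinearSeries.coeff_ofScalars, mul_comm] using this

lemma RepC.unique {g g' : ℂ⟦X⟧} {F : ℂ → ℂ} (h : RepC g F) (h' : RepC g' F) : g = g' := by
  have := h.hasFP.eq_formalMultilinearSeries h'.hasFP
  ext n
  have h2 := congrArg (fun p => FormalMultilinearSeries.coeff p n) this
  simpa [FormalMultilinearSeries.coeff_ofScalars] using h2

lemma RepC.exists {F : ℂ → ℂ} (hF : DifferentiableOn ℂ F (Metric.ball 0 1)) :
    RepC (PowerSeries.mk fun n => (n.factorial : ℂ)⁻¹ * iteratedDeriv n F 0) F := fun q hq => by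
  have := Complex.hasSum_taylorSeries_on_ball hF (z := q) (by simpa using hq)
  simp only [coeff_mk]
  have h5 : (fun n => (n.factorial : ℂ)⁻¹ * iteratedDeriv n F 0 * q ^ n)
    = fun n : ℕ => (n.factorial : ℂ)⁻¹ • (q - 0) ^ n • iteratedDeriv n F 0 := by
    funext n; simp; ring
  rw [h5]; exact this

lemma RepC.analyticAt {g : ℂ⟦X⟧} {F : ℂ → ℂ} (h : RepC g F) (q : ℂ) (hq : ‖q‖ < 1) :
    DifferentiableAt ℂ F q := by
  have hb : HasFPowerSeriesOnBall F
      (FormalMultilinearSeries.ofScalars ℂ (fun n => coeff n g)) 0 1 := by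
    refine ⟨?_, one_pos, ?_⟩
    · refine ENNReal.le_of_forall_nnreal_lt fun r hr => ?_
      refine FormalMultilinearSeries.le_radius_of_summable_norm _ ?_
      have hr' : r < 1 := by exact_mod_cast hr
      have := h.norm_summable (q := (r : ℂ)) (by simpa using hr')
      simpa [FormalMultilinearSeries.ofScalars_norm] using this
    · intro y hy
      have hy' : ‖y‖ < 1 := by
        simpa [← ofReal_norm, ENNReal.ofReal_lt_one] using hy
      simpa [FormalMultilinearSeries.ofScalars_apply_eq, mul_comm] using h y hy'
  have := hb.differentiableOn
  refine this.differentiableAt (Metric.isOpen_eball.mem_nhds ?_)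
  simpa [← ofReal_norm, ENNReal.ofReal_lt_one] using hq

lemma RepC.coeff_le {g : ℂ⟦X⟧} {F : ℂ → ℂ} (h : RepC g F) (B : ℝ)
    (hB : ∀ q : ℂ, ‖q‖ = 1 / 2 → ‖F q‖ ≤ B) (n : ℕ) : ‖coeff n g‖ ≤ B * 2 ^ n := by
  have hd : DifferentiableOn ℂ F (Metric.ball 0 1) := fun q hq =>
    (h.analyticAt q (by simpa using hq)).differentiableWithinAt
  have h1 := h.unique (RepC.exists hd)
  have h2 := Complex.norm_iteratedDeriv_le_of_forall_mem_sphere_norm_le (c := 0) (R := 1 / 2)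
    (C := B) n (by norm_num) (f := F) (by
      apply DifferentiableOn.diffContOnCl
      refine hd.mono ?_
      rw [closure_ball _ (by norm_num)]
      intro z hz
      simp at hz ⊢; linarith) (by
      intro z hz; exact hB z (by simpa using hz))
  rw [h1, coeff_mk, norm_mul, norm_inv]
  have hn : (0 : ℝ) < n.factorial := by positivity
  rw [Complex.norm_natCast, inv_mul_le_iff₀ hn]
  refine h2.trans (le_of_eq ?_)
  rw [one_div, inv_pow]; field_simp

/-- integer version -/
def RepZ (f : ℤ⟦X⟧) (F : ℂ → ℂ) : Prop := RepC (PowerSeries.map (Int.castRingHom ℂ) f) F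

lemma map_inj {f g : ℤ⟦X⟧}
    (h : PowerSeries.map (Int.castRingHom ℂ) f = PowerSeries.map (Int.castRingHom ℂ) g) :
    f = g := PowerSeries.map_injective _ Int.cast_injective h

lemma RepZ.unique {f g : ℤ⟦X⟧} {F : ℂ → ℂ} (h : RepZ f F) (h' : RepZ g F) : f = g :=
  map_inj (RepC.unique h h')

lemma RepZ.mul {g g' : ℤ⟦X⟧} {F F' : ℂ → ℂ} (h : RepZ g F) (h' : RepZ g' F') :
    RepZ (g * g') (fun q => F q * F' q) := by
  unfold RepZ; rw [map_mul]; exact RepC.mul h h'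

lemma RepZ.add {g g' : ℤ⟦X⟧} {F F' : ℂ → ℂ} (h : RepZ g F) (h' : RepZ g' F') :
    RepZ (g + g') (fun q => F q + F' q) := by
  unfold RepZ; rw [map_add]; exact RepC.add h h'

lemma RepZ.sub {g g' : ℤ⟦X⟧} {F F' : ℂ → ℂ} (h : RepZ g F) (h' : RepZ g' F') :
    RepZ (g - g') (fun q => F q - F' q) := by
  unfold RepZ; rw [map_sub]; exact RepC.sub h h'

lemma RepZ.pow {g : ℤ⟦X⟧} {F : ℂ → ℂ} (h : RepZ g F) (n : ℕ) :
    RepZ (g ^ n) (fun q => F q ^ n) := by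
  unfold RepZ; rw [map_pow]; exact RepC.pow h n

lemma RepZ.smul {g : ℤ⟦X⟧} {F : ℂ → ℂ} (h : RepZ g F) (c : ℤ) :
    RepZ (C c * g) (fun q => (c : ℂ) * F q) := by
  unfold RepZ; rw [map_mul, map_C]; exact RepC.smul h c

lemma RepZ.X : RepZ PowerSeries.X (fun q => q) := by
  unfold RepZ; rw [map_X]; exact RepC.X

lemma RepZ.one : RepZ 1 (fun _ => 1) := by
  unfold RepZ; rw [map_one]; exact RepC.one

lemma RepZ.sum {ι : Type*} (s : Finset ι) {g : ι → ℤ⟦X⟧} {F : ι → ℂ → ℂ}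
    (h : ∀ i ∈ s, RepZ (g i) (F i)) :
    RepZ (∑ i ∈ s, g i) (fun q => ∑ i ∈ s, F i q) := by
  unfold RepZ; rw [map_sum]; exact RepC.sum s h

lemma RepC.expand {g : ℂ⟦X⟧} {F : ℂ → ℂ} (h : RepC g F) (p : ℕ) (hp : p ≠ 0) :
    RepC (PowerSeries.expand p hp g) (fun q => F (q ^ p)) := fun q hq => by
  have h1 := h (q ^ p) (by rw [norm_pow]; exact pow_lt_one₀ (norm_nonneg _) hq hp)
  have hinj : Function.Injective (fun n : ℕ => p * n) := fun a b hab =>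
    Nat.eq_of_mul_eq_mul_left (Nat.pos_of_ne_zero hp) hab
  rw [← hinj.hasSum_iff]
  · convert h1 using 2 with n
    simp [coeff_expand_mul, pow_mul]
  · intro x hx
    rw [coeff_expand_of_not_dvd, zero_mul]
    rintro ⟨k, rfl⟩
    exact hx ⟨k, rfl⟩

lemma RepZ.expand {g : ℤ⟦X⟧} {F : ℂ → ℂ} (h : RepZ g F) (p : ℕ) (hp : p ≠ 0) :
    RepZ (PowerSeries.expand p hp g) (fun q => F (q ^ p)) := by
  unfold RepZ; rw [map_expand]; exact RepC.expand h p hp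

lemma RepC.inv {g g' : ℂ⟦X⟧} {F : ℂ → ℂ} (h : RepC g F) (hF : ∀ q, ‖q‖ < 1 → F q ≠ 0)
    (hg : g * g' = 1) : RepC g' (fun q => (F q)⁻¹) := by
  have hd : DifferentiableOn ℂ (fun q => (F q)⁻¹) (Metric.ball 0 1) := fun q hq => by
    have hq' : ‖q‖ < 1 := by simpa using hq
    exact ((h.analyticAt q hq').inv (hF q hq')).differentiableWithinAt
  have h1 := RepC.exists hd
  have h2 := (h.mul h1).congr (G := fun _ => 1) (fun q hq => mul_inv_cancel₀ (hF q hq))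
  have h3 := h2.unique RepC.one
  convert h1
  exact (left_inv_eq_right_inv (by rw [mul_comm]; exact hg) h3)

lemma RepZ.inv {g g' : ℤ⟦X⟧} {F : ℂ → ℂ} (h : RepZ g F) (hF : ∀ q, ‖q‖ < 1 → F q ≠ 0)
    (hg : g * g' = 1) : RepZ g' (fun q => (F q)⁻¹) :=
  RepC.inv h hF (by rw [← map_mul, hg, map_one])

/-- Euler function -/
def PP (q : ℂ) : ℂ := ∏' n : ℕ, (1 - q ^ (n + 1))

lemma coeff_prod_stable {b : ℕ} (hb : b ≠ 0) (n N : ℕ) (hN : n + 1 ≤ N) :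
    coeff n (∏ k ∈ range N, (1 - (PowerSeries.X : ℤ⟦X⟧) ^ (b * (k + 1)))) = coeff n (J b) := by
  induction N, hN using Nat.le_induction with
  | base => simp [J]
  | succ N hN ih =>
    rw [Finset.prod_range_succ, mul_sub, mul_one, map_sub, ih, coeff_mul_X_pow', if_neg, sub_zero]
    have : N + 1 ≤ b * (N + 1) := Nat.le_mul_of_pos_left _ (Nat.pos_of_ne_zero hb)
    omega

lemma rep_J1 : RepZ (J 1) PP := by
  have h0 : RepC _ PP := RepC.exists ModularForm.differentiableOn_tprod_one_sub_pow
  unfold RepZ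
  convert h0
  symm
  set g := (PowerSeries.mk fun n => (n.factorial : ℂ)⁻¹ * iteratedDeriv n PP 0)
  ext n
  have hpart : ∀ N : ℕ, RepC (∏ k ∈ range N, (1 - (PowerSeries.X : ℂ⟦X⟧) ^ (k + 1)))
      (fun q => ∏ k ∈ range N, (1 - q ^ (k + 1))) := fun N =>
    RepC.prod _ fun i _ => RepC.one.sub (RepC.X.pow _)
  have hlu : TendstoUniformlyOn (fun (N : ℕ) (q : ℂ) => ∏ k ∈ range N, (1 - q ^ (k + 1))) PP
      Filter.atTop (Metric.sphere 0 (1 / 2)) := by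
    have h1 := ModularForm.multipliableLocallyUniformlyOn_one_sub_pow.hasProdLocallyUniformlyOn
    have h2 := h1.tendstoLocallyUniformlyOn_finsetRange
    have h3 := (tendstoLocallyUniformlyOn_iff_forall_isCompact Metric.isOpen_ball).1 h2
      (Metric.sphere 0 (1 / 2)) (by
        intro z hz; simp at hz ⊢; rw [hz]; norm_num) (isCompact_sphere _ _)
    exact h3
  rw [Metric.tendstoUniformlyOn_iff] at hlu
  rw [← sub_eq_zero, ← norm_le_zero_iff]
  refine le_of_forall_pos_le_add fun ε hε => ?_
  obtain ⟨N, hN1, hN2⟩ := ((hlu (ε / 2 ^ n) (by positivity)).and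
    (Filter.eventually_ge_atTop (n + 1))).exists
  have h4 := (h0.sub (hpart N)).coeff_le (ε / 2 ^ n) (by
    intro q hq
    have := hN1 q (by simpa using hq)
    rw [dist_eq_norm] at this
    exact this.le) n
  rw [map_sub] at h4
  have h5 : coeff n (∏ k ∈ range N, (1 - (PowerSeries.X : ℂ⟦X⟧) ^ (k + 1)))
      = coeff n (PowerSeries.map (Int.castRingHom ℂ) (J 1)) := by
    rw [coeff_map, ← coeff_prod_stable one_ne_zero n N hN2, ← coeff_map]
    congr 1
    rw [map_prod]
    simp
  rw [h5] at h4
  refine h4.trans (le_of_eq ?_)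
  field_simp; ring

lemma J_expand (b : ℕ) (hb : b ≠ 0) : J b = PowerSeries.expand b hb (J 1) := by
  ext n
  rw [← coeff_prod_stable hb n (n + 1) le_rfl, coeff_expand]
  have : (∏ k ∈ range (n + 1), (1 - (PowerSeries.X : ℤ⟦X⟧) ^ (b * (k + 1))))
      = PowerSeries.expand b hb (∏ k ∈ range (n + 1), (1 - (PowerSeries.X : ℤ⟦X⟧) ^ (1 * (k + 1)))) := by
    rw [map_prod]
    refine Finset.prod_congr rfl fun k _ => ?_
    simp [← pow_mul]
  rw [this, coeff_expand]
  split_ifs with h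
  · refine coeff_prod_stable one_ne_zero _ _ ?_
    have := Nat.div_le_self n b
    omega
  · rfl

lemma rep_J (b : ℕ) (hb : b ≠ 0) : RepZ (J b) (fun q => PP (q ^ b)) := by
  rw [J_expand b hb]; exact rep_J1.expand b hb

lemma PP_ne_zero {q : ℂ} (hq : ‖q‖ < 1) : PP q ≠ 0 := by
  unfold PP
  simp_rw [sub_eq_add_neg]
  refine tprod_one_add_ne_zero_of_summable (f := fun n : ℕ => -q ^ (n + 1)) ?_ ?_
  · intro n h
    have h1 : q ^ (n + 1) = 1 := by linear_combination -h
    have h2 : ‖q ^ (n + 1)‖ < 1 := by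
      rw [norm_pow]; exact pow_lt_one₀ (norm_nonneg _) hq (by omega)
    rw [h1] at h2; simp at h2
  · simpa using (summable_nat_add_iff 1).mpr (summable_geometric_of_lt_one (norm_nonneg _) hq)

end

section
open PowerSeries Finset

open Complex in
/-- `exp (2 π i z)` -/
def ee (z : ℂ) : ℂ := Complex.exp (2 * Real.pi * Complex.I * z)

lemma ee_norm {z : ℂ} (hz : 0 < z.im) : ‖ee z‖ < 1 := by
  have := UpperHalfPlane.norm_exp_two_pi_I_lt_one ⟨z, hz⟩
  simpa [ee] using this

lemma ee_add (z w : ℂ) : ee (z + w) = ee z * ee w := by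
  unfold ee; rw [mul_add, Complex.exp_add]

lemma ee_int (n : ℤ) : ee n = 1 := by
  unfold ee; rw [show 2 * (Real.pi : ℂ) * Complex.I * n = n * (2 * Real.pi * Complex.I) by ring]
  exact Complex.exp_int_mul_two_pi_mul_I n

lemma ee_add_int (z : ℂ) (n : ℤ) : ee (z + n) = ee z := by rw [ee_add, ee_int, mul_one]

lemma ee_pow (z : ℂ) (n : ℕ) : ee z ^ n = ee (n * z) := by
  unfold ee; rw [← Complex.exp_nat_mul]; congr 1; ring

lemma ee_ne (z : ℂ) : ee z ≠ 0 := Complex.exp_ne_zero _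

lemma ee_surj {q : ℂ} (h0 : q ≠ 0) (h1 : ‖q‖ < 1) : ∃ z : ℂ, 0 < z.im ∧ ee z = q := by
  refine ⟨Function.Periodic.invQParam 1 q,
    Function.Periodic.im_invQParam_pos_of_norm_lt_one one_pos h1 h0, ?_⟩
  have := Function.Periodic.qParam_right_inv (h := 1) one_ne_zero h0
  simpa [Function.Periodic.qParam, ee] using this

lemma im_inv_pos {z : ℂ} (hz : 0 < z.im) : 0 < (-1 / z).im := by
  have h0 : z ≠ 0 := by rintro rfl; simp at hz
  rw [neg_div, one_div, Complex.neg_im, Complex.inv_im, neg_div, neg_neg]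
  exact div_pos hz (Complex.normSq_pos.2 h0)

lemma im_ne {z : ℂ} (hz : 0 < z.im) : z ≠ 0 := by rintro rfl; simp at hz

lemma im_div2 {z : ℂ} (hz : 0 < z.im) : 0 < (z / 2).im := by
  simpa using hz

/-- pairs of power series related by the Fricke-type involution `z ↦ -1/z` -/
def Pr (k : ℕ) (g g' : ℂ⟦X⟧) : Prop :=
  ∃ G G' : ℂ → ℂ, RepC g G ∧ RepC g' G' ∧
    ∀ z : ℂ, 0 < z.im → G (ee (-1 / z)) = z ^ k * G' (ee (z / 2))

lemma Pr.add {k : ℕ} {g g' h h' : ℂ⟦X⟧} (H : Pr k g g') (H' : Pr k h h') :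
    Pr k (g + h) (g' + h') := by
  obtain ⟨G, G', a, b, c⟩ := H
  obtain ⟨G1, G1', a1, b1, c1⟩ := H'
  exact ⟨_, _, a.add a1, b.add b1, fun z hz => by simp only [c z hz, c1 z hz]; ring⟩

lemma Pr.sub {k : ℕ} {g g' h h' : ℂ⟦X⟧} (H : Pr k g g') (H' : Pr k h h') :
    Pr k (g - h) (g' - h') := by
  obtain ⟨G, G', a, b, c⟩ := H
  obtain ⟨G1, G1', a1, b1, c1⟩ := H'
  exact ⟨_, _, a.sub a1, b.sub b1, fun z hz => by simp only [c z hz, c1 z hz]; ring⟩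

lemma Pr.mul {k l : ℕ} {g g' h h' : ℂ⟦X⟧} (H : Pr k g g') (H' : Pr l h h') :
    Pr (k + l) (g * h) (g' * h') := by
  obtain ⟨G, G', a, b, c⟩ := H
  obtain ⟨G1, G1', a1, b1, c1⟩ := H'
  exact ⟨_, _, a.mul a1, b.mul b1, fun z hz => by simp only [c z hz, c1 z hz]; ring⟩

lemma Pr.smul {k : ℕ} {g g' : ℂ⟦X⟧} (H : Pr k g g') (c : ℂ) : Pr k (C c * g) (C c * g') := by
  obtain ⟨G, G', a, b, d⟩ := H
  exact ⟨_, _, a.smul c, b.smul c, fun z hz => by simp only [d z hz]; ring⟩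

lemma Pr.zero {k : ℕ} : Pr k 0 0 :=
  ⟨_, _, RepC.zero, RepC.zero, fun z hz => by simp⟩

lemma Pr.one : Pr 0 1 1 :=
  ⟨_, _, RepC.one, RepC.one, fun z hz => by simp⟩

lemma Pr.pow {k : ℕ} {g g' : ℂ⟦X⟧} (H : Pr k g g') (n : ℕ) : Pr (k * n) (g ^ n) (g' ^ n) := by
  induction n with
  | zero => simpa using Pr.one
  | succ n ih => simpa [pow_succ, mul_add] using ih.mul H

lemma Pr.sum {ι : Type*} {k : ℕ} (s : Finset ι) {g g' : ι → ℂ⟦X⟧}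
    (h : ∀ i ∈ s, Pr k (g i) (g' i)) : Pr k (∑ i ∈ s, g i) (∑ i ∈ s, g' i) := by
  classical
  induction s using Finset.induction_on with
  | empty => simpa using Pr.zero
  | insert a s ha ih =>
    rw [Finset.sum_insert ha, Finset.sum_insert ha]
    exact (h a (by simp)).add (ih fun i hi => h i (by simp [hi]))

lemma RepC.shift {n : ℕ} {g : ℂ⟦X⟧} {F : ℂ → ℂ} (h : RepC (PowerSeries.X ^ n * g) F) :
    ∃ F1, RepC g F1 ∧ ∀ q, ‖q‖ < 1 → F q = q ^ n * F1 q := by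
  have hs : ∀ q : ℂ, ‖q‖ < 1 → Summable fun m => coeff m g * q ^ m := by
    intro q hq
    by_cases h0 : q = 0
    · subst h0
      refine summable_of_ne_finset_zero (s := {0}) fun b hb => ?_
      simp at hb; simp [hb]
    have h1 := (summable_nat_add_iff n).2 (h q hq).summable
    have h2 := h1.mul_left (q ^ n)⁻¹
    refine h2.congr fun m => ?_
    rw [add_comm m n, coeff_X_pow_mul', if_pos (by omega), Nat.add_sub_cancel_left, pow_add]
    field_simp
  have hr : RepC g (fun q => ∑' m, coeff m g * q ^ m) := fun q hq => (hs q hq).hasSum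
  refine ⟨_, hr, fun q hq => ?_⟩
  exact (h q hq).unique (((RepC.X.pow n).mul hr) q hq)

lemma RepC.contAt {g : ℂ⟦X⟧} {F : ℂ → ℂ} (h : RepC g F) {q : ℂ} (hq : ‖q‖ < 1) :
    ContinuousAt F q := (h.analyticAt q hq).continuousAt

lemma ee_diff : Differentiable ℂ ee := by unfold ee; fun_prop

lemma eta_eq (z : ℂ) : ModularForm.eta z = ee (z / 24) * PP (ee z) := by
  unfold ModularForm.eta PP
  congr 1
  · simp [Function.Periodic.qParam, ee]; ring_nf
  · simp_rw [ModularForm.eta_q_eq_pow]; rfl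

lemma eta_S {z : ℂ} (hz : 0 < z.im) :
    ModularForm.eta (-1 / z) ^ 8 = z ^ 4 * ModularForm.eta z ^ 8 := by
  have h : ModularForm.eta (-1 / z) = (Complex.sqrt Complex.I)⁻¹ * (Complex.sqrt z * ModularForm.eta z) := by
    simpa using ModularForm.eta_comp_eq_csqrt_I_inv hz
  have hs : ∀ w : ℂ, w ≠ 0 → Complex.sqrt w ^ 2 = w := fun w hw => by
    rw [sqrt_eq_exp hw, ← Complex.exp_nat_mul]
    push_cast
    rw [mul_div_cancel₀ _ two_ne_zero, Complex.exp_log hw]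
  have hI : Complex.sqrt Complex.I ^ 8 = 1 := by
    rw [show (8 : ℕ) = 2 * 4 by rfl, pow_mul, hs _ Complex.I_ne_zero, Complex.I_pow_four]
  have hz' : Complex.sqrt z ^ 8 = z ^ 4 := by
    rw [show (8 : ℕ) = 2 * 4 by rfl, pow_mul, hs _ (im_ne hz)]
  rw [h, mul_pow, mul_pow, inv_pow, hI, hz']; ring

/-- the discriminant -/
def DD (z : ℂ) : ℂ := ee z * PP (ee z) ^ 24

lemma DD_eq (z : ℂ) : DD z = ModularForm.eta z ^ 24 := by
  rw [eta_eq, mul_pow, ee_pow, DD]; congr 2; push_cast; ring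

lemma DD_S {z : ℂ} (hz : 0 < z.im) : DD (-1 / z) = z ^ 12 * DD z := by
  rw [DD_eq, DD_eq, show (24 : ℕ) = 8 * 3 by rfl, pow_mul, eta_S hz, mul_pow]; ring

lemma DD_ne {z : ℂ} (hz : 0 < z.im) : DD z ≠ 0 :=
  mul_ne_zero (ee_ne z) (pow_ne_zero _ (PP_ne_zero (ee_norm hz)))

open UpperHalfPlane in
lemma ee_tendsto (c d : ℂ) (hc : 0 < c.re) (hc' : c.im = 0) :
    Filter.Tendsto (fun τ : ℍ => ee (c * τ + d)) atImInfty (nhds 0) := by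
  rw [tendsto_zero_iff_norm_tendsto_zero]
  have : (fun τ : ℍ => ‖ee (c * τ + d)‖)
      = fun τ : ℍ => Real.exp (-(2 * Real.pi * (c.re * τ.im + d.im))) := by
    funext τ
    simp [ee, Complex.norm_exp, hc']
  rw [this]
  refine Real.tendsto_exp_neg_atTop_nhds_zero.comp ?_
  refine Filter.Tendsto.const_mul_atTop (by positivity) ?_
  refine Filter.tendsto_atTop_add_const_right _ _ ?_
  refine Filter.Tendsto.const_mul_atTop hc ?_
  exact Filter.tendsto_comap

open UpperHalfPlane ModularForm MatrixGroups in
/-- a level one function of weight zero vanishing at infinity is zero -/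
lemma level_one_zero (f : ℂ → ℂ) (hd : DifferentiableOn ℂ f {z | 0 < z.im})
    (hT : ∀ z : ℂ, 0 < z.im → f (z + 1) = f z) (hS : ∀ z : ℂ, 0 < z.im → f (-1 / z) = f z)
    (hlim : Filter.Tendsto (fun τ : ℍ => f τ) atImInfty (nhds 0)) (z : ℂ) (hz : 0 < z.im) :
    f z = 0 := by
  have hsl : ∀ γ : SL(2, ℤ), ((fun τ : ℍ => f τ) ∣[(0 : ℤ)] γ) = fun τ : ℍ => f τ := by
    refine SlashInvariantForm.slash_action_generators_SL2Z ?_ ?_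
    · ext τ
      rw [SL_slash_apply, UpperHalfPlane.modular_S_smul]
      have := hS τ τ.im_pos
      simp only [neg_zero, zpow_zero, mul_one]
      rw [← this]; congr 1
      rw [neg_div, one_div, neg_inv]
    · ext τ
      rw [SL_slash_apply, modular_T_smul]
      have := hT τ τ.im_pos
      simp only [neg_zero, zpow_zero, mul_one]
      rw [← this]; congr 1
      simp [add_comm]
  let F : ModularForm 𝒮ℒ 0 :=
    { toFun := fun τ : ℍ => f τ
      slash_action_eq' := fun _ ⟨γ, hγ⟩ ↦ hγ ▸ hsl γ
      holo' := by
        rw [UpperHalfPlane.mdifferentiable_iff]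
        refine hd.congr fun w hw => ?_
        simp [ofComplex_apply_of_im_pos hw]
      bdd_at_cusps' := fun {c} hc => by
        rw [Subgroup.IsArithmetic.isCusp_iff_isCusp_SL2Z] at hc
        rw [OnePoint.isBoundedAt_iff_forall_SL2Z hc]
        intro γ _
        rw [hsl γ]
        exact hlim.isBigO_one ℝ }
  obtain ⟨c, hc⟩ := ModularFormClass.levelOne_weight_zero_const F
  have hc' : ∀ τ : ℍ, f τ = c := fun τ => congrFun hc τ
  have : c = 0 := by
    simp_rw [hc'] at hlim
    exact tendsto_nhds_unique tendsto_const_nhds hlim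
  rw [← this]; exact hc' ⟨z, hz⟩

lemma Pr.rev {k : ℕ} (hk : Even k) {G G' : ℂ → ℂ}
    (h : ∀ z : ℂ, 0 < z.im → G (ee (-1 / z)) = z ^ k * G' (ee (z / 2))) (z : ℂ) (hz : 0 < z.im) :
    G' (ee (-1 / z / 2)) = z ^ k * G (ee z) := by
  have h1 := h (-1 / z) (im_inv_pos hz)
  have hz0 := im_ne hz
  rw [show -1 / (-1 / z) = z by field_simp] at h1
  rw [h1, ← mul_assoc, ← mul_pow, show z * (-1 / z) = -1 by field_simp, hk.neg_one_pow, one_mul]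

lemma RepC.comp_ee {g : ℂ⟦X⟧} {G : ℂ → ℂ} (h : RepC g G) {u : ℂ → ℂ} (hu : Differentiable ℂ u)
    {z : ℂ} (hz : 0 < (u z).im) : DifferentiableAt ℂ (fun w => G (ee (u w))) z := by
  have h1 := h.analyticAt (ee (u z)) (ee_norm hz)
  exact DifferentiableAt.comp z (f := fun w => ee (u w)) h1 ((ee_diff.comp hu) z)

open UpperHalfPlane in
/-- Sturm-type vanishing criterion -/
theorem Pr.sturm {m : ℕ} {g g' : ℂ⟦X⟧} (H : Pr (4 * m) g g')
    (hg : PowerSeries.X ^ (m + 1) ∣ g) : g = 0 := by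
  obtain ⟨g1, rfl⟩ := hg
  obtain ⟨G, G', a, b, c⟩ := H
  have hk : Even (4 * m) := ⟨2 * m, by ring⟩
  obtain ⟨G1, a1, hG1⟩ := a.shift
  have c' := Pr.rev hk c
  set f : ℂ → ℂ := fun z => G (ee z) * G' (ee (z / 2)) * G' (ee ((z + 1) / 2)) / DD z ^ m with hf
  have hz2 : ∀ z : ℂ, 0 < z.im → 0 < ((z + 1) / 2).im := fun z hz => im_div2 (by simpa using hz)
  have key := level_one_zero f ?_ ?_ ?_ ?_
  · have hN : ∀ z : ℂ, 0 < z.im → G (ee z) * G' (ee (z / 2)) * G' (ee ((z + 1) / 2)) = 0 := by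
      intro z hz
      have := key z hz
      simp only [hf, div_eq_zero_iff] at this
      exact this.resolve_right (pow_ne_zero _ (DD_ne hz))
    have r1 := a.expand 2 two_ne_zero
    have r3 : RepC (PowerSeries.rescale (-1) g') (fun q => G' (-q)) := fun q hq => by
      have := b (-q) (by simpa using hq)
      simp only [coeff_rescale]
      convert this using 2 with n
      rw [neg_pow q]; ring
    have hr : ∀ q : ℂ, q ≠ 0 → ‖q‖ < 1 → G (q ^ 2) * G' q * G' (-q) = 0 := by
      intro q hq0 hq
      obtain ⟨z, hz, rfl⟩ := ee_surj hq0 hq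
      have := hN (2 * z) (by simpa using hz)
      have e1 : ee (2 * z) = ee z ^ 2 := by rw [ee_pow]; norm_num
      have e2 : ee ((2 * z + 1) / 2) = - ee z := by
        rw [show (2 * z + 1) / 2 = z + 1 / 2 by ring, ee_add]
        have : ee (1 / 2) = -1 := by
          unfold ee
          rw [show 2 * (Real.pi : ℂ) * Complex.I * (1 / 2) = Real.pi * Complex.I by ring,
            Complex.exp_pi_mul_I]
        rw [this]; ring
      rw [e1, e2, show 2 * z / 2 = z by ring] at this
      exact this
    have r4 := (r1.mul b).mul r3
    have r5 : RepC _ (fun _ => 0) := (RepC.X.mul r4).congr (fun q hq => by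
      by_cases h0 : q = 0
      · simp [h0]
      · simp [hr q h0 hq])
    have r6 := r5.unique RepC.zero
    have hg' : g' = 0 → PowerSeries.X ^ (m + 1) * g1 = 0 := by
      intro h0
      have b0 : ∀ q, ‖q‖ < 1 → G' q = 0 := fun q hq => by
        rw [h0] at b; exact (b q hq).unique (RepC.zero q hq)
      have : RepC (PowerSeries.X * (PowerSeries.X ^ (m + 1) * g1)) (fun _ => 0) :=
        (RepC.X.mul a).congr (fun q hq => by
          by_cases h0 : q = 0
          · simp [h0]
          · obtain ⟨z, hz, rfl⟩ := ee_surj h0 hq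
            have h1 := c' z hz
            rw [b0 _ (ee_norm (im_div2 (im_inv_pos hz)))] at h1
            have := (mul_eq_zero.1 h1.symm).resolve_left (pow_ne_zero _ (im_ne hz))
            simp [this])
      have := this.unique RepC.zero
      exact (mul_eq_zero.1 this).resolve_left X_ne_zero
    rcases mul_eq_zero.1 r6 with h | h
    · exact absurd h X_ne_zero
    rcases mul_eq_zero.1 h with h | h
    · rcases mul_eq_zero.1 h with h | h
      · ext n
        have := congrArg (coeff (2 * n)) h
        rw [coeff_expand_mul] at this
        simpa using this
      · exact hg' h
    · refine hg' ?_
      ext n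
      have := congrArg (coeff n) h
      rw [coeff_rescale] at this
      simpa using this
  · intro z hz
    have hz : 0 < z.im := hz
    refine DifferentiableAt.differentiableWithinAt ?_
    have d1 : DifferentiableAt ℂ (fun w => G (ee w)) z :=
      a.comp_ee (u := fun w => w) differentiable_id hz
    have d2 : DifferentiableAt ℂ (fun w => G' (ee (w / 2))) z :=
      b.comp_ee (u := fun w => w / 2) (by fun_prop) (im_div2 hz)
    have d3 : DifferentiableAt ℂ (fun w => G' (ee ((w + 1) / 2))) z :=
      b.comp_ee (u := fun w => (w + 1) / 2) (by fun_prop) (hz2 z hz)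
    have d4 : DifferentiableAt ℂ DD z := by
      have : DifferentiableAt ℂ (fun w => PP (ee w)) z :=
        RepC.comp_ee rep_J1 (u := fun w => w) differentiable_id hz
      exact (ee_diff z).mul (this.pow 24)
    exact ((d1.mul d2).mul d3).div (d4.pow m) (pow_ne_zero _ (DD_ne hz))
  · intro z hz
    simp only [hf]
    have e1 : ∀ w, ee (w + 1) = ee w := fun w => by simpa using ee_add_int w 1
    have e2 : ee ((z + 1 + 1) / 2) = ee (z / 2) := by
      rw [show (z + 1 + 1) / 2 = z / 2 + 1 by ring, e1]
    rw [e2, e1, DD, e1, DD]; ring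
  · intro z hz
    have hz0 := im_ne hz
    have hz1 : 0 < (z - 1).im := by simpa using hz
    have hz10 := im_ne hz1
    simp only [hf]
    have e1 : ∀ w, ee (w + 1) = ee w := fun w => by simpa using ee_add_int w 1
    have e3 : G' (ee ((-1 / z + 1) / 2)) = z ^ (4 * m) * G' (ee ((z + 1) / 2)) := by
      have h1 := c' (-1 / (-1 / z + 1)) (im_inv_pos (by simpa using im_inv_pos hz))
      have hne : -1 / z + 1 ≠ 0 := by
        intro h; field_simp at h; exact hz10 (by linear_combination h)
      rw [show -1 / (-1 / (-1 / z + 1)) = -1 / z + 1 by field_simp] at h1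
      have h2 : -1 / (-1 / z + 1) + 1 = -1 / (z - 1) := by
        rw [show -1 / z + 1 = (z - 1) / z by field_simp; ring]
        field_simp; ring
      have h3 : ee (-1 / (-1 / z + 1)) = ee (-1 / (z - 1)) := by rw [← h2, e1]
      rw [h3, c _ hz1] at h1
      have h4 : ee ((z - 1) / 2) = ee ((z + 1) / 2) := by
        rw [← e1]; congr 1; ring
      rw [h1, h4, ← mul_assoc, ← mul_pow]
      congr 1
      have : -1 / (-1 / z + 1) * (z - 1) = - z := by
        rw [show -1 / z + 1 = (z - 1) / z by field_simp; ring]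
        field_simp
      rw [this, hk.neg_pow]
    rw [c z hz, c' z hz, e3, DD_S hz, mul_pow]
    have := pow_ne_zero m (DD_ne hz)
    field_simp
    ring
  · have hb1 := b.contAt (q := 0) (by simp)
    have ha1 := a1.contAt (q := 0) (by simp)
    have hp1 := RepC.contAt rep_J1 (q := 0) (by simp)
    have t0 := ee_tendsto 1 0 (by simp) (by simp)
    have t1 := ee_tendsto (1 / 2) 0 (by simp) (by simp)
    have t2 := ee_tendsto (1 / 2) (1 / 2) (by simp) (by simp)
    have T := t0.mul (((ha1.tendsto.comp t0).mul ((hb1.tendsto.comp t1).mul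
      (hb1.tendsto.comp t2))).div ((hp1.tendsto.comp t0).pow (24 * m))
        (pow_ne_zero _ (PP_ne_zero (by simp))))
    rw [zero_mul] at T
    refine T.congr fun τ => ?_
    have hτ := τ.im_pos
    have hne := PP_ne_zero (ee_norm (z := τ) hτ)
    have hne2 := ee_ne τ
    simp only [Function.comp_apply, hf, one_mul, add_zero, Pi.div_apply]
    rw [hG1 _ (ee_norm hτ), DD, show (1 / 2 : ℂ) * τ = τ / 2 by ring,
      show (τ : ℂ) / 2 + 1 / 2 = (τ + 1) / 2 by ring, mul_pow, ← pow_mul]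
    field_simp
    ring

end

section
open PowerSeries Finset

/-- the operator `U_7` on power series -/
def U7 {R : Type*} [CommRing R] (f : R⟦X⟧) : R⟦X⟧ := PowerSeries.mk fun n => coeff (7 * n) f

lemma zeta_sum (n : ℕ) : ∑ j ∈ range 7, ee (j / 7) ^ n = if 7 ∣ n then 7 else 0 := by
  have hp : IsPrimitiveRoot (ee (1 / 7)) 7 := by
    have := Complex.isPrimitiveRoot_exp 7 (by norm_num)
    unfold ee
    convert this using 2
    push_cast; ring
  have h1 : ∀ j : ℕ, ee (j / 7) ^ n = (ee (1 / 7) ^ n) ^ j := fun j => by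
    rw [← pow_mul, mul_comm, pow_mul, ee_pow (1 / 7) j]; congr 2; ring
  simp_rw [h1]
  split_ifs with h
  · rw [(hp.pow_eq_one_iff_dvd n).2 h]; simp
  · have hne : ee (1 / 7) ^ n ≠ 1 := fun h' => h ((hp.pow_eq_one_iff_dvd n).1 h')
    rw [geom_sum_eq hne, ← pow_mul, mul_comm, pow_mul, hp.pow_eq_one]; simp

lemma RepC.U7 {g : ℂ⟦X⟧} {G : ℂ → ℂ} (h : RepC g G) :
    ∃ F, RepC (U7 g) F ∧ ∀ z : ℂ, 0 < z.im →
      F (ee z) = 1 / 7 * ∑ j ∈ range 7, G (ee ((z + j) / 7)) := by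
  have hinj : Function.Injective (fun n : ℕ => 7 * n) := fun a b hab => by simpa using hab
  have hs : RepC (_root_.U7 g) (fun q => ∑' n, coeff n (_root_.U7 g) * q ^ n) := by
    intro q hq
    obtain ⟨q1, rfl⟩ := IsAlgClosed.exists_pow_nat_eq q (n := 7) (by norm_num)
    have h1 : ‖q1‖ < 1 := by
      by_contra hc
      rw [norm_pow] at hq
      exact absurd (one_le_pow₀ (not_lt.1 hc) (n := 7)) (not_le.2 hq)
    have h2 := (h q1 h1).summable.comp_injective hinj
    refine Summable.hasSum (h2.congr fun n => ?_)
    simp [_root_.U7, pow_mul]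
  refine ⟨_, hs, fun z hz => ?_⟩
  have h0 : ∀ j : ℕ, 0 < ((z + j) / 7).im := fun j => by simpa using hz
  have h3 : HasSum (fun n => 1 / 7 * ∑ j ∈ range 7, coeff n g * ee ((z + j) / 7) ^ n)
      (1 / 7 * ∑ j ∈ range 7, G (ee ((z + j) / 7))) :=
    (hasSum_sum fun j _ => h _ (ee_norm (h0 j))).mul_left _
  have h4 : ∀ n, 1 / 7 * ∑ j ∈ range 7, coeff n g * ee ((z + j) / 7) ^ n
      = if 7 ∣ n then coeff n g * ee (z / 7) ^ n else 0 := by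
    intro n
    have : ∀ j : ℕ, coeff n g * ee ((z + j) / 7) ^ n
        = coeff n g * ee (z / 7) ^ n * ee (j / 7) ^ n := fun j => by
      rw [add_div, ee_add, mul_pow]; ring
    simp_rw [this]
    rw [← Finset.mul_sum, zeta_sum]
    split_ifs <;> ring
  simp_rw [h4] at h3
  rw [← hinj.hasSum_iff] at h3
  · rw [← h3.tsum_eq]
    refine tsum_congr fun n => ?_
    have : ee z = ee (z / 7) ^ 7 := by rw [ee_pow]; congr 1; push_cast; ring
    simp [_root_.U7, pow_mul, this]
  · intro x hx
    rw [if_neg]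
    rintro ⟨k, rfl⟩
    exact hx ⟨k, rfl⟩

/-- Hecke operator -/
def T7 {R : Type*} [CommRing R] (k : ℕ) (f : R⟦X⟧) : R⟦X⟧ :=
  U7 f + C (7 ^ (k - 1)) * PowerSeries.expand 7 (by norm_num) f

lemma hecke_term {k : ℕ} (hk : Even k) {G G' : ℂ → ℂ}
    (c : ∀ z : ℂ, 0 < z.im → G (ee (-1 / z)) = z ^ k * G' (ee (z / 2)))
    (j s : ℤ) (hsj : s * j = 4) (z : ℂ) (hz : 0 < z.im) :
    G (ee ((-1 / z + j) / 7)) = z ^ k * G' (ee ((z / 2 - s) / 7)) := by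
  have c' := Pr.rev hk c
  have hsj' : (s : ℂ) * j = 4 := by exact_mod_cast hsj
  have hz0 := im_ne hz
  have hj : (j : ℝ) ≠ 0 := by
    intro h; have : j = 0 := by exact_mod_cast h
    subst this; simp at hsj
  have hjz : (j : ℂ) * z - 1 ≠ 0 := by
    intro h
    have := congrArg Complex.im h
    simp at this
    rcases this with h | h
    · exact hj (by simpa using h)
    · exact hz.ne' h
  have hv : 0 < ((-1 / z + j) / 7).im := by
    have := im_inv_pos hz
    simpa using this
  have hw := im_inv_pos hv
  have ew : -1 / ((-1 / z + j) / 7) = -(7 * z) / (j * z - 1) := by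
    rw [show (-1 / z + j) / 7 = (j * z - 1) / (7 * z) by field_simp; ring]
    field_simp
  have h1 := c _ hw
  have hv0 := im_ne hv
  rw [show -1 / (-1 / ((-1 / z + j) / 7)) = (-1 / z + j) / 7 by field_simp] at h1
  rw [ew] at h1 hw
  have hzt : 0 < (z - 2 * s).im := by simpa using hz
  have hzt0 := im_ne hzt
  have hw3 : 0 < (-(7 * z) / (j * z - 1) + 2 * s).im := by simpa using hw
  have ew3 : -(7 * z) / (j * z - 1) + 2 * s = (z - 2 * s) / (j * z - 1) := by
    rw [div_add' _ _ _ hjz, div_left_inj' hjz]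
    linear_combination (2 * z) * hsj'
  have h2 : G' (ee (-(7 * z) / (j * z - 1) / 2)) = G' (ee ((z - 2 * s) / (j * z - 1) / 2)) := by
    rw [← ew3, add_div, mul_div_cancel_left₀ _ (two_ne_zero), ee_add_int]
  rw [ew3] at hw3
  have hw2 := im_inv_pos hw3
  have h3 := c' _ hw2
  rw [show -1 / (-1 / ((z - 2 * s) / (j * z - 1))) = (z - 2 * s) / (j * z - 1) by
    field_simp] at h3
  have hx : 0 < ((z - 2 * s) / 7).im := by simpa using hz
  have h4 := c _ hx
  have h5 : -1 / ((z - 2 * s) / (j * z - 1)) + j = -1 / ((z - 2 * s) / 7) := by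
    field_simp
    linear_combination (-2) * hsj'
  have h6 : ee (-1 / ((z - 2 * s) / (j * z - 1))) = ee (-1 / ((z - 2 * s) / 7)) := by
    rw [← h5, ee_add_int]
  rw [h1, h2, h3, h6, h4, ← mul_assoc, ← mul_assoc, ← mul_pow, ← mul_pow]
  congr 2
  · have hjz' : z * (j : ℂ) - 1 ≠ 0 := by rwa [mul_comm]
    field_simp
  · congr 1; ring

lemma Pr.hecke {k : ℕ} (hk : Even k) (hk1 : 1 ≤ k) {g g' : ℂ⟦X⟧} (H : Pr k g g') :
    Pr k (T7 k g) (T7 k g') := by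
  obtain ⟨G, G', a, b, c⟩ := H
  obtain ⟨F, hF, eF⟩ := a.U7
  obtain ⟨F', hF', eF'⟩ := b.U7
  refine ⟨_, _, hF.add ((a.expand 7 (by norm_num)).smul (7 ^ (k - 1))),
    hF'.add ((b.expand 7 (by norm_num)).smul (7 ^ (k - 1))), fun z hz => ?_⟩
  rw [eF _ (im_inv_pos hz), eF' _ (im_div2 hz), ee_pow, ee_pow]
  have hz0 := im_ne hz
  have p1 : ∀ (w : ℂ) (j j' : ℤ), (7 : ℤ) ∣ j' - j → ee ((w + j) / 7) = ee ((w + j') / 7) := by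
    rintro w j j' ⟨d, hd⟩
    have : (j' : ℂ) = j + 7 * d := by
      have := congrArg (Int.cast (R := ℂ)) hd; push_cast at this; linear_combination this
    rw [this, show (w + (j + 7 * d)) / 7 = (w + j) / 7 + d by ring, ee_add_int]
  have t := fun j s h => hecke_term hk c j s h z hz
  have q0 : G (ee ((-1 / z + 0) / 7)) = (7 * z) ^ k * G' (ee (7 * (z / 2))) := by
    have := c (7 * z) (by simpa using hz)
    rw [show -1 / (7 * z) = (-1 / z + 0) / 7 by field_simp; ring] at this
    rw [this]; congr 3; ring
  have q7 : G (ee (7 * (-1 / z))) = (z / 7) ^ k * G' (ee ((z / 2 + 0) / 7)) := by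
    have := c (z / 7) (by simpa using hz)
    rw [show -1 / (z / 7) = 7 * (-1 / z) by field_simp] at this
    rw [this]; congr 3; ring
  have u1 := t 1 4 (by norm_num)
  have u2 := t 2 2 (by norm_num)
  have u3 := t (-4) (-1) (by norm_num)
  have u4 := t 4 1 (by norm_num)
  have u5 := t (-2) (-2) (by norm_num)
  have u6 := t (-1) (-4) (by norm_num)
  rw [p1 (-1 / z) (-4) 3 (by norm_num)] at u3
  rw [p1 (-1 / z) (-2) 5 (by norm_num)] at u5
  rw [p1 (-1 / z) (-1) 6 (by norm_num)] at u6
  have v : ∀ (s n : ℤ), (7 : ℤ) ∣ n + s → ee ((z / 2 - s) / 7) = ee ((z / 2 + n) / 7) := by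
    intro s n h
    have := p1 (z / 2) (-s) n (by simpa using h)
    rw [← this]; push_cast; rw [sub_eq_add_neg]
  rw [v 4 3 (by norm_num)] at u1
  rw [v 2 5 (by norm_num)] at u2
  rw [v (-1) 1 (by norm_num)] at u3
  rw [v 1 6 (by norm_num)] at u4
  rw [v (-2) 2 (by norm_num)] at u5
  rw [v (-4) 4 (by norm_num)] at u6
  push_cast at u1 u2 u3 u4 u5 u6
  simp only [Finset.sum_range_succ, Finset.sum_range_zero]
  push_cast
  rw [q0, q7, u1, u2, u3, u4, u5, u6]
  obtain ⟨k', rfl⟩ : ∃ k', k = k' + 1 := ⟨k - 1, by omega⟩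
  simp only [Nat.add_sub_cancel, div_pow, mul_pow, pow_succ]
  field_simp
  ring

end

section
open PowerSeries Finset

/-- inverse of `J b` -/
def Ji (b : ℕ) : ℤ⟦X⟧ := PowerSeries.invOfUnit (J b) 1

lemma J_const (b : ℕ) (hb : b ≠ 0) : constantCoeff (J b) = 1 := by
  rw [← coeff_zero_eq_constantCoeff_apply]
  simp [J, hb]

lemma J_Ji (b : ℕ) (hb : b ≠ 0) : J b * Ji b = 1 :=
  PowerSeries.mul_invOfUnit _ _ (by rw [J_const b hb]; rfl)

/-- `η(z)^16/η(2z)^8` -/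
def kap : ℤ⟦X⟧ := J 1 ^ 16 * Ji 2 ^ 8

/-- `η(2z)^16/η(z)^8` -/
def bb : ℤ⟦X⟧ := PowerSeries.X * (J 2 ^ 16 * Ji 1 ^ 8)

lemma PP2_ne {q : ℂ} (hq : ‖q‖ < 1) (b : ℕ) (hb : b ≠ 0) : PP (q ^ b) ≠ 0 :=
  PP_ne_zero (by rw [norm_pow]; exact pow_lt_one₀ (norm_nonneg _) hq hb)

lemma rep_Ji (b : ℕ) (hb : b ≠ 0) : RepZ (Ji b) (fun q => (PP (q ^ b))⁻¹) :=
  (rep_J b hb).inv (fun _ hq => PP2_ne hq b hb) (J_Ji b hb)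

lemma rep_kap : RepZ kap (fun q => PP q ^ 16 * (PP (q ^ 2))⁻¹ ^ 8) := by
  have := ((rep_J 1 one_ne_zero).pow 16).mul ((rep_Ji 2 two_ne_zero).pow 8)
  unfold kap; simpa using this

lemma rep_bb : RepZ bb (fun q => q * (PP (q ^ 2) ^ 16 * (PP q)⁻¹ ^ 8)) := by
  have := RepZ.X.mul (((rep_J 2 two_ne_zero).pow 16).mul ((rep_Ji 1 one_ne_zero).pow 8))
  unfold bb; simpa using this

lemma PP_S {z : ℂ} (hz : 0 < z.im) :
    ee (-1 / z / 24) ^ 8 * PP (ee (-1 / z)) ^ 8 = z ^ 4 * (ee (z / 24) ^ 8 * PP (ee z) ^ 8) := by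
  have := eta_S hz
  rwa [eta_eq, eta_eq, mul_pow, mul_pow] at this

lemma PP_S2 {z : ℂ} (hz : 0 < z.im) :
    ee (-1 / z / 24) ^ 16 * PP (ee (-1 / z) ^ 2) ^ 8
      = (z / 2) ^ 4 * (ee (z / 48) ^ 8 * PP (ee (z / 2)) ^ 8) := by
  have := PP_S (im_div2 hz)
  have hz0 := im_ne hz
  rw [show -1 / (z / 2) = 2 * (-1 / z) by field_simp] at this
  rw [ee_pow]
  push_cast
  rw [ee_pow] at this ⊢
  rw [show z / 2 / 24 = z / 48 by ring] at this
  rw [← this]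
  congr 2; push_cast; ring

lemma ee48 (z : ℂ) : ee (z / 24) = ee (z / 48) ^ 2 := by
  rw [ee_pow]; congr 1; push_cast; ring

lemma pr_kap : Pr 4 (PowerSeries.map (Int.castRingHom ℂ) kap)
    (C 16 * PowerSeries.map (Int.castRingHom ℂ) bb) := by
  refine ⟨_, _, rep_kap, RepC.smul rep_bb 16, fun z hz => ?_⟩
  have h1 := PP_S hz
  have h2 := PP_S2 hz
  have n0 := ee_ne (-1 / z / 24)
  have n1 := ee_ne (z / 48)
  have m1 := PP_ne_zero (ee_norm hz)
  have m2 := PP_ne_zero (ee_norm (im_div2 hz))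
  have m3 := PP_ne_zero (ee_norm (im_inv_pos hz))
  have m4 := PP2_ne (ee_norm (im_inv_pos hz)) 2 two_ne_zero
  have hz0 := im_ne hz
  have e1 : ee (z / 2) = ee (z / 48) ^ 24 := by rw [ee_pow]; congr 1; push_cast; ring
  have e2 : ee (z / 2) ^ 2 = ee z := by rw [ee_pow]; congr 1; push_cast; ring
  rw [e2]
  rw [ee48 z] at h1
  set a := ee (-1 / z / 24)
  set b := ee (z / 48)
  set p := PP (ee z)
  set r := PP (ee (z / 2))
  set s := PP (ee (-1 / z))
  set t := PP (ee (-1 / z) ^ 2)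
  rw [e1]
  have e3 : s ^ 8 = z ^ 4 * (b ^ 16 * p ^ 8) / a ^ 8 := by
    rw [eq_div_iff (pow_ne_zero _ n0)]; linear_combination h1
  have e4 : t ^ 8 = (z / 2) ^ 4 * (b ^ 8 * r ^ 8) / a ^ 16 := by
    rw [eq_div_iff (pow_ne_zero _ n0)]; linear_combination h2
  rw [inv_pow, e4, show (16 : ℕ) = 8 * 2 by rfl, pow_mul, e3]
  field_simp
  norm_num
  ring

lemma pr_bb : Pr 4 (PowerSeries.map (Int.castRingHom ℂ) bb)
    (C (1 / 256) * PowerSeries.map (Int.castRingHom ℂ) kap) := by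
  refine ⟨_, _, rep_bb, RepC.smul rep_kap (1 / 256), fun z hz => ?_⟩
  have h1 := PP_S hz
  have h2 := PP_S2 hz
  have n0 := ee_ne (-1 / z / 24)
  have n1 := ee_ne (z / 48)
  have m1 := PP_ne_zero (ee_norm hz)
  have m2 := PP_ne_zero (ee_norm (im_div2 hz))
  have hz0 := im_ne hz
  have e1 : ee (-1 / z) = ee (-1 / z / 24) ^ 24 := by
    rw [ee_pow]; congr 1; push_cast; ring
  have e2 : ee (z / 2) ^ 2 = ee z := by rw [ee_pow]; congr 1; push_cast; ring
  rw [e2]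
  rw [ee48 z] at h1
  have key : ∀ (a b p r s t : ℂ), a ≠ 0 → b ≠ 0 → p ≠ 0 → r ≠ 0 →
      a ^ 8 * s ^ 8 = z ^ 4 * ((b ^ 2) ^ 8 * p ^ 8) →
      a ^ 16 * t ^ 8 = (z / 2) ^ 4 * (b ^ 8 * r ^ 8) →
      a ^ 24 * (t ^ 16 * s⁻¹ ^ 8) = z ^ 4 * (1 / 256 * (r ^ 16 * p⁻¹ ^ 8)) := by
    intro a b p r s t n0 n1 m1 m2 h1 h2
    have e3 : s ^ 8 = z ^ 4 * (b ^ 16 * p ^ 8) / a ^ 8 := by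
      rw [eq_div_iff (pow_ne_zero _ n0)]; linear_combination h1
    have e4 : t ^ 8 = (z / 2) ^ 4 * (b ^ 8 * r ^ 8) / a ^ 16 := by
      rw [eq_div_iff (pow_ne_zero _ n0)]; linear_combination h2
    rw [inv_pow, e3, show (16 : ℕ) = 8 * 2 by rfl, pow_mul t, e4]
    field_simp
    norm_num
    ring
  rw [show ee (-1 / z) * (PP (ee (-1 / z) ^ 2) ^ 16 * (PP (ee (-1 / z)))⁻¹ ^ 8)
    = ee (-1 / z / 24) ^ 24 * (PP (ee (-1 / z) ^ 2) ^ 16 * (PP (ee (-1 / z)))⁻¹ ^ 8) by rw [← e1]]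
  exact key _ _ _ _ _ _ n0 n1 m1 m2 h1 h2

/-- the Eisenstein series of weight six -/
def E6 : ℤ⟦X⟧ := PowerSeries.mk fun n => if n = 0 then 1 else -504 * (ArithmeticFunction.sigma 5 n : ℤ)

lemma E6_coeff (m : ℕ) : (UpperHalfPlane.qExpansion 1 ModularForm.E₆).coeff m
    = coeff m (PowerSeries.map (Int.castRingHom ℂ) E6) := by
  rw [EisensteinSeries.E_qExpansion_coeff (k := 6) (by norm_num) (by decide)]
  have : bernoulli 6 = 1 / 42 := by decide +kernel
  simp only [this, E6, coeff_map, coeff_mk]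
  split_ifs
  · simp
  · simp; norm_num

open UpperHalfPlane ModularForm MatrixGroups in
lemma E6_S (τ : ℍ) : ModularForm.E₆ (ModularGroup.S • τ) = (τ : ℂ) ^ 6 * ModularForm.E₆ τ := by
  have h := SlashInvariantForm.slash_action_eqn'' ModularForm.E₆
    (γ := Matrix.SpecialLinearGroup.mapGL ℝ ModularGroup.S)
    (show _ ∈ (Matrix.SpecialLinearGroup.mapGL ℝ).range from ⟨ModularGroup.S, rfl⟩) τ
  have h1 : (Matrix.SpecialLinearGroup.mapGL ℝ ModularGroup.S) • τ = ModularGroup.S • τ := rfl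
  have h2 : denom (Matrix.SpecialLinearGroup.mapGL ℝ ModularGroup.S) τ = τ := by
    exact ModularGroup.denom_S τ
  rw [h1, h2] at h
  rw [h]
  norm_cast

open UpperHalfPlane in
lemma pr_E6 : Pr 6 (PowerSeries.map (Int.castRingHom ℂ) E6)
    (PowerSeries.expand 2 two_ne_zero (PowerSeries.map (Int.castRingHom ℂ) E6)) := by
  have hr : RepC (PowerSeries.map (Int.castRingHom ℂ) E6)
      (UpperHalfPlane.cuspFunction 1 ModularForm.E₆) := by
    intro q hq
    have := UpperHalfPlane.hasSum_qExpansion_of_norm_lt (h := 1) (f := ModularForm.E₆) one_pos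
      (SlashInvariantFormClass.periodic_comp_ofComplex _ one_mem_strictPeriods_SL)
      (ModularFormClass.holo _) (ModularFormClass.bdd_at_infty _) hq
    simpa [E6_coeff] using this
  refine ⟨_, _, hr, hr.expand 2 two_ne_zero, fun z hz => ?_⟩
  have hval : ∀ τ : ℍ, UpperHalfPlane.cuspFunction 1 ModularForm.E₆ (ee τ) = ModularForm.E₆ τ := by
    intro τ
    have h1 := hr (ee τ) (ee_norm τ.im_pos)
    have h2 := ModularForm.hasSum_qExpansion (f := ModularForm.E₆) (h := 1) one_pos one_mem_strictPeriods_SL τ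
    refine h1.unique ?_
    simpa [E6_coeff, ee, Function.Periodic.qParam] using h2
  have e2 : ee (z / 2) ^ 2 = ee z := by rw [ee_pow]; congr 1; push_cast; ring
  rw [e2]
  have h1 := hval ⟨z, hz⟩
  have h2 := hval (ModularGroup.S • ⟨z, hz⟩)
  rw [E6_S, modular_S_smul] at h2
  simp only at h1 h2
  rw [h1, ← h2]
  congr 2
  rw [neg_div, one_div, neg_inv]

end

section
open PowerSeries Finset

/-! ### computing with truncated series packed into natural numbers -/

/-- reduce the first `N` digits in base `B` modulo `m` -/
def nrm (m B N : ℕ) : ℕ → ℕ :=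
  Nat.rec (fun _ => 0) (fun _ ih x => x % B % m + B * ih (x / B)) N

/-- keep every seventh digit -/
def u7 (B N : ℕ) : ℕ → ℕ :=
  Nat.rec (fun _ => 0) (fun _ ih x => x % B + B * ih (x / B ^ 7)) N

def vl (B N : ℕ) (c : ℕ → ℕ) : ℕ := ∑ n ∈ range N, c n * B ^ n

lemma vl_succ (B N : ℕ) (c : ℕ → ℕ) : vl B (N + 1) c = c 0 + B * vl B N (fun n => c (n + 1)) := by
  unfold vl
  rw [Finset.sum_range_succ', Finset.mul_sum, add_comm]
  congr 1
  · simp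
  · exact Finset.sum_congr rfl fun n _ => by ring

lemma nrm_spec (m B : ℕ) (hB : 0 < B) (N : ℕ) : ∀ (d : ℕ → ℕ) (y : ℕ), (∀ n < N, d n < B) →
    nrm m B N (vl B N d + B ^ N * y) = vl B N (fun n => d n % m) := by
  induction N with
  | zero => intro d y _; rfl
  | succ N ih =>
    intro d y hd
    change (vl B (N + 1) d + B ^ (N + 1) * y) % B % m
      + B * nrm m B N ((vl B (N + 1) d + B ^ (N + 1) * y) / B) = _
    rw [vl_succ, vl_succ]
    have e : d 0 + B * vl B N (fun n => d (n + 1)) + B ^ (N + 1) * y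
        = d 0 + B * (vl B N (fun n => d (n + 1)) + B ^ N * y) := by ring
    rw [e, Nat.add_mul_mod_self_left, Nat.mod_eq_of_lt (hd 0 (by omega)),
      Nat.add_mul_div_left _ _ hB, Nat.div_eq_of_lt (hd 0 (by omega)), zero_add, ih]
    intro n hn; exact hd _ (by omega)

lemma nrm_digits (m B : ℕ) (hm : 0 < m) (N : ℕ) : ∀ z, ∃ c : ℕ → ℕ, (∀ n, c n < m) ∧
    nrm m B N z = vl B N c := by
  induction N with
  | zero => intro z; exact ⟨fun _ => 0, fun _ => hm, rfl⟩
  | succ N ih =>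
    intro z
    obtain ⟨c, h1, h2⟩ := ih (z / B)
    refine ⟨fun n => Nat.casesOn n (z % B % m) c, ?_, ?_⟩
    · rintro (_ | n)
      · exact Nat.mod_lt _ hm
      · exact h1 n
    · rw [vl_succ, ← h2]; rfl

/-- `x` encodes the coefficients of `f` below `N` modulo `m` -/
def Ag (m B N x : ℕ) (f : ℤ⟦X⟧) : Prop :=
  ∃ c : ℕ → ℕ, (∀ n, c n < m) ∧ x = vl B N c ∧ ∀ n < N, (m : ℤ) ∣ coeff n f - c n

lemma Ag.of {m B N : ℕ} {z y : ℕ} {f : ℤ⟦X⟧} (hm : 0 < m) (hB : 0 < B) (d : ℕ → ℕ)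
    (hd : ∀ n < N, d n < B) (hz : z = vl B N d + B ^ N * y)
    (hf : ∀ n < N, (m : ℤ) ∣ coeff n f - d n) : Ag m B N (nrm m B N z) f := by
  refine ⟨fun n => d n % m, fun n => Nat.mod_lt _ hm, ?_, fun n hn => ?_⟩
  · rw [hz, nrm_spec m B hB N d y hd]
  · have h1 := hf n hn
    have h2 : (m : ℤ) ∣ (d n : ℤ) - ((d n % m : ℕ) : ℤ) := by
      push_cast; exact Int.dvd_self_sub_emod
    have := dvd_add h1 h2
    simpa using this

lemma Ag.add {m B N x y : ℕ} {f g : ℤ⟦X⟧} (hB : 2 * m ≤ B) (h : Ag m B N x f)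
    (h' : Ag m B N y g) : Ag m B N (nrm m B N (x + y)) (f + g) := by
  obtain ⟨c, h1, h2, h3⟩ := h
  obtain ⟨c', h1', h2', h3'⟩ := h'
  have hm : 0 < m := lt_of_le_of_lt (Nat.zero_le _) (h1 0)
  refine Ag.of (y := 0) hm (by omega) (fun n => c n + c' n) ?_ ?_ ?_
  · intro n _; have := h1 n; have := h1' n; omega
  · rw [h2, h2', vl, vl, vl, ← Finset.sum_add_distrib]
    simp [add_mul]
  · intro n hn
    have := dvd_add (h3 n hn) (h3' n hn)
    rw [map_add]; push_cast
    have e : coeff n f + coeff n g - ((c n : ℤ) + c' n) = coeff n f - c n + (coeff n g - c' n) := by ring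
    rw [e]; exact this

lemma vl_mul (B N : ℕ) (c c' : ℕ → ℕ) : ∃ y, vl B N c * vl B N c'
    = vl B N (fun n => ∑ p ∈ antidiagonal n, c p.1 * c' p.2) + B ^ N * y := by
  have hv : ∀ c, vl B N c = (PowerSeries.trunc N (PowerSeries.mk c)).eval B := by
    intro c
    rw [← Polynomial.eval₂_id, PowerSeries.eval₂_trunc_eq_sum_range]
    simp [vl]
  set p := PowerSeries.trunc N (PowerSeries.mk c)
  set p' := PowerSeries.trunc N (PowerSeries.mk c')
  have h1 : (p * p').eval B = ∑ n ∈ range (N + (p * p').natDegree.succ), (p * p').coeff n * B ^ n :=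
    Polynomial.eval_eq_sum_range' (by omega) B
  rw [hv c, hv c', ← Polynomial.eval_mul, h1, Finset.sum_range_add]
  refine ⟨∑ x ∈ range (p * p').natDegree.succ, (p * p').coeff (N + x) * B ^ x, ?_⟩
  congr 1
  · unfold vl
    refine Finset.sum_congr rfl fun n hn => ?_
    rw [Polynomial.coeff_mul]
    congr 1
    refine Finset.sum_congr rfl fun q hq => ?_
    have h2 := mem_antidiagonal.1 hq
    have h3 := mem_range.1 hn
    simp only [p, p', PowerSeries.coeff_trunc, PowerSeries.coeff_mk]
    rw [if_pos (by omega), if_pos (by omega)]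
  · rw [Finset.mul_sum]
    exact Finset.sum_congr rfl fun n _ => by ring

lemma Ag.mul {m B N x y : ℕ} {f g : ℤ⟦X⟧} (hB : N * (m * m) < B) (h : Ag m B N x f)
    (h' : Ag m B N y g) : Ag m B N (nrm m B N (x * y)) (f * g) := by
  obtain ⟨c, h1, h2, h3⟩ := h
  obtain ⟨c', h1', h2', h3'⟩ := h'
  have hm : 0 < m := lt_of_le_of_lt (Nat.zero_le _) (h1 0)
  obtain ⟨z, hz⟩ := vl_mul B N c c'
  refine Ag.of hm (by omega) _ ?_ (by rw [h2, h2']; exact hz) ?_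
  · intro n hn
    refine lt_of_le_of_lt (Finset.sum_le_card_nsmul _ _ (m * m) fun p _ => ?_) ?_
    · exact Nat.mul_le_mul (h1 _).le (h1' _).le
    · rw [Finset.Nat.card_antidiagonal, smul_eq_mul]
      refine lt_of_le_of_lt (Nat.mul_le_mul_right _ ?_) hB
      omega
  · intro n hn
    rw [coeff_mul]
    push_cast
    rw [← Finset.sum_sub_distrib]
    refine Finset.dvd_sum fun p hp => ?_
    have hp' := mem_antidiagonal.1 hp
    have a := h3 p.1 (by omega)
    have b := h3' p.2 (by omega)
    have : coeff p.1 f * coeff p.2 g - (c p.1 : ℤ) * (c' p.2 : ℤ)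
      = (coeff p.1 f - c p.1) * coeff p.2 g + c p.1 * (coeff p.2 g - c' p.2) := by ring
    rw [this]
    exact dvd_add (Dvd.dvd.mul_right a _) (Dvd.dvd.mul_left b _)

lemma vl_single (B N k a : ℕ) (hk : k < N) : vl B N (fun n => if n = k then a else 0) = a * B ^ k := by
  unfold vl
  rw [Finset.sum_eq_single k]
  · simp
  · intro b _ hb; simp [hb]
  · intro h; exact absurd (mem_range.2 hk) h

lemma Ag.mono {m B N : ℕ} (k a : ℕ) (hk : k < N) (ha : a < m) :
    Ag m B N (a * B ^ k) (C (a : ℤ) * PowerSeries.X ^ k) := by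
  refine ⟨fun n => if n = k then a else 0, fun n => ?_, (vl_single B N k a hk).symm, fun n hn => ?_⟩
  · dsimp only; split_ifs <;> omega
  · rw [coeff_C_mul, coeff_X_pow]
    by_cases h : n = k <;> simp [h]

lemma Ag.congr {m B N x : ℕ} {f g : ℤ⟦X⟧} (h : Ag m B N x f)
    (hfg : ∀ n < N, (m : ℤ) ∣ coeff n g - coeff n f) : Ag m B N x g := by
  obtain ⟨c, h1, h2, h3⟩ := h
  exact ⟨c, h1, h2, fun n hn => by simpa using dvd_add (hfg n hn) (h3 n hn)⟩

lemma Ag.dvd {m B N x : ℕ} {f g : ℤ⟦X⟧} (hB : m ≤ B) (h : Ag m B N x f) (h' : Ag m B N x g) :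
    ∀ n < N, (m : ℤ) ∣ coeff n f - coeff n g := by
  obtain ⟨c, h1, h2, h3⟩ := h
  obtain ⟨c', h1', h2', h3'⟩ := h'
  have key : ∀ (N : ℕ) (c c' : ℕ → ℕ), (∀ n, c n < m) → (∀ n, c' n < m) → vl B N c = vl B N c' →
      ∀ n < N, c n = c' n := by
    intro N
    induction N with
    | zero => intro c c' _ _ _ n hn; omega
    | succ N ih =>
      intro c c' hc hc' he n hn
      have hB0 : 0 < B := by have := hc 0; omega
      rw [vl_succ, vl_succ] at he
      have e0 := congrArg (· % B) he
      simp only [Nat.add_mul_mod_self_left] at e0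
      rw [Nat.mod_eq_of_lt ((hc 0).trans_le hB), Nat.mod_eq_of_lt ((hc' 0).trans_le hB)] at e0
      rw [e0] at he
      have he2 := Nat.eq_of_mul_eq_mul_left hB0 (Nat.add_left_cancel he)
      rcases n with _ | n
      · exact e0
      · exact ih _ _ (fun n => hc _) (fun n => hc' _) he2 n (by omega)
  intro n hn
  have := dvd_sub (h3 n hn) (h3' n hn)
  rw [key N c c' h1 h1' (h2 ▸ h2') n hn] at this
  simpa using this

lemma Ag.U7 {m B N x : ℕ} {f : ℤ⟦X⟧} (hB : m ≤ B) (h : Ag m B (7 * N) x f) :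
    Ag m B N (u7 B N x) (U7 f) := by
  obtain ⟨c, h1, h2, h3⟩ := h
  refine ⟨fun n => c (7 * n), fun n => h1 _, ?_, fun n hn => by
    simpa [_root_.U7] using h3 (7 * n) (by omega)⟩
  have hB0 : 0 < B := by have := h1 0; omega
  rw [h2]
  clear h2 h3
  induction N generalizing c with
  | zero => rfl
  | succ N ih =>
    have e : vl B (7 * (N + 1)) c = vl B 7 c + B ^ 7 * vl B (7 * N) (fun n => c (n + 7)) := by
      rw [show 7 * (N + 1) = 7 * N + 1 + 1 + 1 + 1 + 1 + 1 + 1 by ring]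
      simp only [vl_succ, show vl B 0 = fun _ => 0 by rfl]
      ring
    have hlt : vl B 7 c < B ^ 7 := by
      have : ∀ (K : ℕ) (c : ℕ → ℕ), (∀ n, c n < m) → vl B K c < B ^ K := by
        intro K
        induction K with
        | zero => intro c _; simp [vl]
        | succ K ih =>
          intro c hc
          rw [vl_succ, pow_succ']
          have a := ih (fun n => c (n + 1)) (fun n => hc _)
          have b := hc 0
          calc c 0 + B * vl B K (fun n => c (n + 1)) < B + B * vl B K (fun n => c (n + 1)) := by omega
            _ = B * (vl B K (fun n => c (n + 1)) + 1) := by ring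
            _ ≤ B * B ^ K := Nat.mul_le_mul_left _ a
      exact this 7 c h1
    change vl B (7 * (N + 1)) c % B + B * u7 B N (vl B (7 * (N + 1)) c / B ^ 7) = _
    have e1 : vl B (7 * (N + 1)) c / B ^ 7 = vl B (7 * N) (fun n => c (n + 7)) := by
      rw [e, Nat.add_mul_div_left _ _ (pow_pos hB0 7), Nat.div_eq_of_lt hlt, zero_add]
    rw [e1, ih _ (fun n => h1 _), vl_succ B N]
    rw [show 7 * (N + 1) = 7 * N + 6 + 1 by ring, vl_succ, Nat.add_mul_mod_self_left,
      Nat.mod_eq_of_lt ((h1 0).trans_le hB)]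
    rfl

/-- truncated Euler product -/
def jN (m B N b : ℕ) : ℕ → ℕ :=
  Nat.rec 1 (fun k ih => nrm m B N (ih * (1 + (m - 1) * B ^ (b * (k + 1)))))

lemma Ag.J {m B N : ℕ} (hm : 2 ≤ m) (hB : N * (m * m) < B) (b : ℕ) (hb : b ≠ 0) (hN : 0 < N) :
    Ag m B N (jN m B N b ((N - 1) / b)) (J b) := by
  have hb' := Nat.pos_of_ne_zero hb
  have h1 : ∀ k, k ≤ (N - 1) / b → Ag m B N (jN m B N b k)
      (∏ i ∈ range k, (1 - (PowerSeries.X : ℤ⟦X⟧) ^ (b * (i + 1)))) := by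
    intro k
    induction k with
    | zero =>
      intro _
      simpa [jN] using Ag.mono (m := m) (B := B) (N := N) 0 1 hN (by omega)
    | succ k ih =>
      intro hk
      rw [Finset.prod_range_succ]
      refine Ag.mul hB (ih (by omega)) ?_
      have hlt : b * (k + 1) < N := by
        have := (Nat.le_div_iff_mul_le hb').1 hk
        rw [mul_comm] at this; omega
      have hpos : b * (k + 1) ≠ 0 := by positivity
      refine ⟨fun n => (if n = 0 then 1 else 0) + (if n = b * (k + 1) then m - 1 else 0),
        fun n => ?_, ?_, fun n hn => ?_⟩
      · dsimp only; split_ifs <;> omega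
      · have a := vl_single B N 0 1 hN
        have c := vl_single B N (b * (k + 1)) (m - 1) hlt
        unfold vl at a c ⊢
        simp only [add_mul, Finset.sum_add_distrib, a, c]; simp
      · rw [map_sub, coeff_one, coeff_X_pow]
        by_cases h0 : n = 0
        · subst h0; simp [hpos.symm]
        · by_cases h : n = b * (k + 1)
          · simp only [h, if_true]
            push_cast [Nat.cast_sub (show 1 ≤ m by omega)]; simp [hpos]
            exact ⟨-1, by ring⟩
          · simp [h0, h]
  refine (h1 _ le_rfl).congr fun n hn => ?_
  have h2 : ∀ M, (N - 1) / b ≤ M → coeff n (∏ i ∈ range M, (1 - (PowerSeries.X : ℤ⟦X⟧) ^ (b * (i + 1))))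
      = coeff n (∏ i ∈ range ((N - 1) / b), (1 - (PowerSeries.X : ℤ⟦X⟧) ^ (b * (i + 1)))) := by
    intro M hM
    induction M, hM using Nat.le_induction with
    | base => rfl
    | succ M hM ih =>
      rw [Finset.prod_range_succ, mul_sub, mul_one, map_sub, ih, coeff_mul_X_pow', if_neg, sub_zero]
      have := (Nat.div_lt_iff_lt_mul hb').1 (Nat.lt_succ_of_le hM)
      rw [mul_comm] at this
      have e : b * M.succ = b * (M + 1) := rfl
      omega
  rw [← coeff_prod_stable hb n (n + 1 + (N - 1) / b) (Nat.le_add_right _ _), h2 _ (Nat.le_add_left _ _)]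
  simp

/-- Newton iteration for the inverse -/
def invN (m B N x : ℕ) : ℕ → ℕ :=
  Nat.rec 1 (fun _ y => nrm m B N (y * nrm m B N (2 + (m - 1) * nrm m B N (x * y))))

lemma Ag.inv {m B N x k : ℕ} {f g : ℤ⟦X⟧} (hm : 2 ≤ m) (hN : 0 < N) (hB : N * (m * m) < B)
    (h : Ag m B N x f)
    (hfg : f * g = 1) (hc : nrm m B N (x * invN m B N x (k + 1)) = 1) :
    Ag m B N (invN m B N x (k + 1)) g := by
  obtain ⟨c, hc1, hc2⟩ := nrm_digits m B (by omega) N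
    (invN m B N x k * nrm m B N (2 + (m - 1) * nrm m B N (x * invN m B N x k)))
  change invN m B N x (k + 1) = _ at hc2
  have hy : Ag m B N (invN m B N x (k + 1)) (PowerSeries.mk fun n => (c n : ℤ)) :=
    ⟨c, hc1, hc2, fun n _ => by simp⟩
  have h1 := h.mul hB hy
  rw [hc] at h1
  have h0 : Ag m B N 1 1 := by
    simpa using Ag.mono (m := m) (B := B) (N := N) 0 1 hN (by omega)
  have hmB : m ≤ B := by nlinarith
  have h2 := Ag.dvd hmB h1 h0
  refine hy.congr fun n hn => ?_
  set y : ℤ⟦X⟧ := PowerSeries.mk fun n => (c n : ℤ)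
  have : g - y = -(g * (f * y - 1)) := by linear_combination y * hfg
  rw [← map_sub, this, map_neg, dvd_neg, coeff_mul]
  refine Finset.dvd_sum fun p hp => Dvd.dvd.mul_left ?_ _
  have := mem_antidiagonal.1 hp
  rw [map_sub]; exact h2 _ (by omega)

/-- powers -/
def pwN (m B N x : ℕ) : ℕ → ℕ := Nat.rec 1 (fun _ y => nrm m B N (y * x))

lemma Ag.pow {m B N x : ℕ} {f : ℤ⟦X⟧} (hm : 2 ≤ m) (hN : 0 < N) (hB : N * (m * m) < B)
    (h : Ag m B N x f) (k : ℕ) : Ag m B N (pwN m B N x k) (f ^ k) := by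
  induction k with
  | zero => simpa [pwN] using Ag.mono (m := m) (B := B) (N := N) 0 1 hN (by omega)
  | succ k ih => rw [pow_succ]; exact Ag.mul hB ih h

end

section
open PowerSeries Finset

/-- modulus, base, length -/
abbrev BB : ℕ := 1048576

/-- `kap` modulo 49 -/
def kapL : ℕ := 2287644948224451172754468976687064650447142527089862553530438615389868394943861486796962262532674621981953883205007804010753086768788658378550164359077889104942601935913984936761560913596601523583569808487861289540292014538422239865800509422227935066127483933350291123873315434508174344400383006043434328416030585078076949537143725601533996821115540065691001578659971484604302053099766798765357542760105761579251308657700957513735634247889671485306234856757578066873848641334152568857537633515448507615352022386549644756913171974809647770249532005987552482027579271016513785232092041458109192686659498925819185486513681635099611881667251945723948226970770896132543010496090616085433429115185738787804043515613093695708174318969911506755936966350404590502815449914248162289925960204930056684271945630709784510699491493221848489469309372060369931581187940484640382091975407995739330330496078045062278214173710734422435428967060497106612540319981203784045621992426717997929078962588448285945881706413522568961554365875492829828263332144020345534321635282193973059489847959098052161140914995093090583353014065471802739944119037562301632294189259635504464747726355596207643346278972953597681577187046997092289740009439936894491292991031405711174370981003153232867657598452694238354202850397540703147024522081821470638364248419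7501251141483887331615079710349956457418394620150491981302624101891667776618650831520913867652022152004978351322152354402703816465769900161254349998357843131606582408289702528170184511755402998870085809326511289464354504090332398747352509410032668471051921092202220104451839529839806627364348875726958381963592531040555471401368656843121262649671681

/-- `bb` modulo 49 -/
def bbL : ℕ := 1492569182518444673459754380194199257411388586688271397815130225014653503293593645472549247711680080047658018296437652484914215608154904032190225761219931010404503392329623221535812602118934015961330841906438336841186797184357352766662007765868006936842852517878418232165602640952704827759548175024791236273584889732450440253378814236353758635258513336390703258536091217066719253948241183826293759153140134985605480192292006180671195375423823653699166596746185229307484351779136490855559386950627928492707751188985314850586707145912858924239106276423229531367564224828551105850109211859836449068985596057368950532483952320547695563427029769953540768475510651638599534394913903634335434657439638481949451728137596329230176147962519792683227759811585120155640010769598332988723801125364564123577749944320831791153889105464226269350580549649026451118712165725055501943309476068961838875287475265168853427737702147189330209972442482810456162479286247158796478417756385353178543069208908925320260765374294757480806713221320720112356083101421588188521335434063736439356658047975531878489998315353974392287423117954656072299045420366812352205870394635621728462319517848631491521943068204083352908353825565570668507184069446700306127639281063146930677116086306911144422648800180623704819957175687813436129233064259923831465463471066738207154763306694863411448337575551426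0611827823390292673028860732556218222008925206795795451452549189886226610210650079112711096611206114540069026282981098542585488526495334506700178243677516392795395746444609481492610645626581812480284397036710102161255309994782434129761984766429852425373898825211744634416653211897997274348972680156514679922884608

abbrev j1N := jN 49 BB 280 1 279
abbrev j2N := jN 49 BB 280 2 139
abbrev i1N := invN 49 BB 280 j1N 9
abbrev i2N := invN 49 BB 280 j2N 9

theorem kernel1 : (nrm 49 BB 280 (j1N * i1N) = 1 ∧ nrm 49 BB 280 (j2N * i2N) = 1) ∧
    nrm 49 BB 280 (pwN 49 BB 280 j1N 16 * pwN 49 BB 280 i2N 8) = kapL ∧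
    nrm 49 BB 280 (BB * nrm 49 BB 280 (pwN 49 BB 280 j2N 16 * pwN 49 BB 280 i1N 8)) = bbL := by
  decide +kernel

attribute [local irreducible] nrm u7 jN invN pwN

lemma ag_inv {m B N x k k' : ℕ} {f g : ℤ⟦X⟧} (hm : 2 ≤ m) (hN : 0 < N) (hB : N * (m * m) < B)
    (h : Ag m B N x f) (hfg : f * g = 1) (hk : k' = k + 1)
    (hc : nrm m B N (x * invN m B N x k') = 1) :
    Ag m B N (invN m B N x k') g := by
  subst hk; exact Ag.inv hm hN hB h hfg hc

lemma agJ {m B N : ℕ} (hm : 2 ≤ m) (hB : N * (m * m) < B) (b : ℕ) (hb : b ≠ 0) (hN : 0 < N)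
    (K : ℕ) (hK : K = (N - 1) / b) : Ag m B N (jN m B N b K) (J b) := hK ▸ Ag.J hm hB b hb hN

lemma ag_kap : Ag 49 BB 280 kapL kap := by
  obtain ⟨⟨h1, h2⟩, h3, h4⟩ := kernel1
  rw [← h3]
  have a1 : Ag 49 BB 280 (jN 49 BB 280 1 279) (J 1) :=
    agJ (by norm_num) (by norm_num) 1 (by norm_num) (by norm_num) _ (by norm_num)
  have a2 : Ag 49 BB 280 (jN 49 BB 280 2 139) (J 2) :=
    agJ (by norm_num) (by norm_num) 2 (by norm_num) (by norm_num) _ (by norm_num)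
  have b2 : Ag 49 BB 280 i2N (Ji 2) := ag_inv (k := 8) (by norm_num) (by norm_num) (by norm_num) a2
    (J_Ji 2 two_ne_zero) rfl h2
  exact Ag.mul (by norm_num) (a1.pow (by norm_num) (by norm_num) (by norm_num) 16)
    (b2.pow (by norm_num) (by norm_num) (by norm_num) 8)

lemma ag_bb : Ag 49 BB 280 bbL bb := by
  obtain ⟨⟨h1, h2⟩, h3, h4⟩ := kernel1
  rw [← h4]
  have a1 : Ag 49 BB 280 (jN 49 BB 280 1 279) (J 1) :=
    agJ (by norm_num) (by norm_num) 1 (by norm_num) (by norm_num) _ (by norm_num)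
  have a2 : Ag 49 BB 280 (jN 49 BB 280 2 139) (J 2) :=
    agJ (by norm_num) (by norm_num) 2 (by norm_num) (by norm_num) _ (by norm_num)
  have b1 : Ag 49 BB 280 i1N (Ji 1) := ag_inv (k := 8) (by norm_num) (by norm_num) (by norm_num) a1
    (J_Ji 1 one_ne_zero) rfl h1
  have hx : Ag 49 BB 280 BB PowerSeries.X := by
    simpa using Ag.mono (m := 49) (B := BB) (N := 280) 1 1 (by norm_num) (by norm_num)
  exact Ag.mul (by norm_num) hx (Ag.mul (by norm_num)
    (a2.pow (by norm_num) (by norm_num) (by norm_num) 16)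
    (b1.pow (by norm_num) (by norm_num) (by norm_num) 8))

lemma Ag.red {m m' B N x : ℕ} {f : ℤ⟦X⟧} (hm' : 0 < m') (hd : m' ∣ m) (hB : m ≤ B)
    (h : Ag m B N x f) : Ag m' B N (nrm m' B N x) f := by
  obtain ⟨c, h1, h2, h3⟩ := h
  have := h1 0
  refine Ag.of (y := 0) hm' (by omega) c (fun n _ => (h1 n).trans_le hB) (by rw [h2]; ring) ?_
  intro n hn
  exact (Int.natCast_dvd_natCast.2 hd).trans (h3 n hn)

end

section
open PowerSeries Finset

/-- integral span of the monomials of degree `d` -/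
def W (d : ℕ) : Submodule ℤ ℤ⟦X⟧ :=
  Submodule.span ℤ {f | ∃ i l, i + l = d ∧ f = kap ^ i * bb ^ l}

lemma W_mono (i l : ℕ) : kap ^ i * bb ^ l ∈ W (i + l) := Submodule.subset_span ⟨i, l, rfl, rfl⟩

lemma W_mono' {i l d : ℕ} (h : i + l = d) : kap ^ i * bb ^ l ∈ W d := h ▸ W_mono i l

lemma zsm (a : ℤ) (f : ℤ⟦X⟧) : a • f = C a * f := by
  ext n; simp

lemma W_mul {d e : ℕ} {f g : ℤ⟦X⟧} (hf : f ∈ W d) (hg : g ∈ W e) : f * g ∈ W (d + e) := by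
  induction hf using Submodule.span_induction with
  | zero => rw [zero_mul]; exact Submodule.zero_mem _
  | add x y _ _ h1 h2 => rw [add_mul]; exact Submodule.add_mem _ h1 h2
  | smul a x _ h => rw [zsm, mul_assoc, ← zsm]; exact Submodule.smul_mem _ _ h
  | mem f h =>
    obtain ⟨i, l, h1, rfl⟩ := h
    induction hg using Submodule.span_induction with
    | zero => rw [mul_zero]; exact Submodule.zero_mem _
    | add x y _ _ h1 h2 => rw [mul_add]; exact Submodule.add_mem _ h1 h2
    | smul a x _ h => rw [zsm, mul_left_comm, ← zsm]; exact Submodule.smul_mem _ _ h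
    | mem g h =>
      obtain ⟨i', l', h2, rfl⟩ := h
      refine Submodule.subset_span ⟨i + i', l + l', by omega, ?_⟩
      ring

lemma W_Cmul {d : ℕ} {f : ℤ⟦X⟧} (c : ℤ) (hf : f ∈ W d) : C c * f ∈ W d := by
  rw [← zsm]; exact Submodule.smul_mem _ _ hf

lemma W_cast {d e : ℕ} {f : ℤ⟦X⟧} (h : d = e) (hf : f ∈ W d) : f ∈ W e := h ▸ hf

/-- unit part of `bb` -/
def bet : ℤ⟦X⟧ := J 2 ^ 16 * Ji 1 ^ 8

lemma bb_eq : bb = PowerSeries.X * bet := rfl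

lemma Ji_const (b : ℕ) (hb : b ≠ 0) : constantCoeff (Ji b) = 1 := by
  have := congrArg constantCoeff (J_Ji b hb)
  simpa [J_const b hb] using this

lemma kap_const : constantCoeff kap = 1 := by
  simp [kap, J_const, Ji_const]

lemma bet_const : constantCoeff bet = 1 := by
  simp [bet, J_const, Ji_const]

lemma W_repr {d : ℕ} {f : ℤ⟦X⟧} (hf : f ∈ W d) : ∃ c : ℕ → ℤ,
    f = ∑ k ∈ range (d + 1), C (c k) * (PowerSeries.X ^ k * (kap ^ (d - k) * bet ^ k)) := by
  induction hf using Submodule.span_induction with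
  | mem f h =>
    obtain ⟨i, l, rfl, rfl⟩ := h
    refine ⟨fun k => if k = l then 1 else 0, ?_⟩
    rw [Finset.sum_eq_single l]
    · simp [bb_eq, mul_pow]; ring
    · intro b _ hb; simp [hb]
    · intro h; exact absurd (mem_range.2 (by omega)) h
  | zero => exact ⟨fun _ => 0, by simp⟩
  | add f g _ _ h1 h2 =>
    obtain ⟨c, hc⟩ := h1
    obtain ⟨c', hc'⟩ := h2
    refine ⟨fun k => c k + c' k, ?_⟩
    conv_lhs => rw [hc, hc']
    rw [← Finset.sum_add_distrib]
    exact Finset.sum_congr rfl fun k _ => by rw [map_add]; ring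
  | smul a f _ h =>
    obtain ⟨c, hc⟩ := h
    refine ⟨fun k => a * c k, ?_⟩
    conv_lhs => rw [hc, zsm, Finset.mul_sum]
    exact Finset.sum_congr rfl fun k _ => by rw [map_mul]; ring

lemma W_basis {d k : ℕ} (hk : k ≤ d) : PowerSeries.X ^ k * (kap ^ (d - k) * bet ^ k) ∈ W d := by
  have := W_mono' (i := d - k) (l := k) (d := d) (by omega)
  rw [bb_eq, mul_pow] at this
  convert this using 1; ring

/-- triangularity -/
lemma tri {K : Type*} [CommRing K] (I : Ideal K) (c : ℕ → K) (u : ℕ → K⟦X⟧)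
    (hu : ∀ k, IsUnit (constantCoeff (u k))) (N i : ℕ)
    (h : ∀ n < i, coeff n (∑ k ∈ range N, C (c k) * (PowerSeries.X ^ k * u k)) ∈ I) :
    ∀ k, k < i → k < N → c k ∈ I := by
  intro k
  induction k using Nat.strong_induction_on with
  | _ k ih =>
    intro hki hkN
    have h1 := h k hki
    rw [map_sum, ← Finset.add_sum_erase _ _ (mem_range.2 hkN)] at h1
    have h2 : ∑ x ∈ (range N).erase k, coeff k (C (c x) * (PowerSeries.X ^ x * u x)) ∈ I := by
      refine Submodule.sum_mem _ fun x hx => ?_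
      rw [coeff_C_mul, coeff_X_pow_mul']
      rw [mem_erase, mem_range] at hx
      rcases lt_or_gt_of_ne hx.1 with h' | h'
      · exact I.mul_mem_right _ (ih x h' (by omega) hx.2)
      · rw [if_neg (by omega)]; simp
    have h3 := (Submodule.add_mem_iff_left _ h2).1 h1
    rw [coeff_C_mul, coeff_X_pow_mul', if_pos le_rfl, Nat.sub_self,
      coeff_zero_eq_constantCoeff_apply] at h3
    exact (Ideal.mul_unit_mem_iff_mem I (hu k)).1 h3

lemma unit_const (i j : ℕ) : constantCoeff (kap ^ i * bet ^ j) = 1 := by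
  simp [kap_const, bet_const]

lemma W_sat {d m : ℕ} {f : ℤ⟦X⟧} (hf : f ∈ W d) (h : ∀ n < d + 1, (m : ℤ) ∣ coeff n f) :
    ∃ g ∈ W d, f = (m : ℤ⟦X⟧) * g := by
  obtain ⟨c, hc⟩ := W_repr hf
  have h1 := tri (Ideal.span {(m : ℤ)}) c (fun k => kap ^ (d - k) * bet ^ k)
    (fun k => by rw [unit_const]; exact isUnit_one) (d + 1) (d + 1)
    (fun n hn => by rw [← hc]; exact Ideal.mem_span_singleton.2 (h n hn))
  have h2 : ∀ k, ∃ a, k < d + 1 → c k = m * a := by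
    intro k
    by_cases hk : k < d + 1
    · obtain ⟨a, ha⟩ := Ideal.mem_span_singleton.1 (h1 k hk hk)
      exact ⟨a, fun _ => ha⟩
    · exact ⟨0, fun h => absurd h hk⟩
  choose a ha using h2
  refine ⟨∑ k ∈ range (d + 1), C (a k) * (PowerSeries.X ^ k * (kap ^ (d - k) * bet ^ k)), ?_, ?_⟩
  · refine Submodule.sum_mem _ fun k hk => W_Cmul _ (W_basis ?_)
    have := mem_range.1 hk; omega
  · rw [hc, Finset.mul_sum]
    refine Finset.sum_congr rfl fun k hk => ?_
    rw [ha k (mem_range.1 hk), map_mul]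
    simp only [map_natCast]; ring

local notation "mp" => PowerSeries.map (Int.castRingHom ℂ)

lemma pr_mono (i l : ℕ) : Pr (4 * (i + l)) (mp (kap ^ i * bb ^ l))
    ((C 16 * mp bb) ^ i * (C (1 / 256) * mp kap) ^ l) := by
  rw [mul_add, map_mul, map_pow, map_pow]
  exact (pr_kap.pow i).mul (pr_bb.pow l)

lemma W_pr {d : ℕ} {f : ℤ⟦X⟧} (hf : f ∈ W d) : ∃ g', Pr (4 * d) (mp f) g' := by
  induction hf using Submodule.span_induction with
  | mem f h =>
    obtain ⟨i, l, rfl, rfl⟩ := h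
    exact ⟨_, pr_mono i l⟩
  | zero => exact ⟨0, by rw [map_zero]; exact Pr.zero⟩
  | add f g _ _ h1 h2 =>
    obtain ⟨a, ha⟩ := h1
    obtain ⟨b, hb⟩ := h2
    exact ⟨_, by rw [map_add]; exact ha.add hb⟩
  | smul a f _ h =>
    obtain ⟨b, hb⟩ := h
    exact ⟨_, by rw [zsm, map_mul, map_C]; exact hb.smul _⟩

lemma W_approx (m : ℕ) (g : ℤ⟦X⟧) (n : ℕ) (hn : n ≤ m + 1) :
    ∃ w ∈ W m, PowerSeries.X ^ n ∣ g - w := by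
  induction n with
  | zero => exact ⟨0, Submodule.zero_mem _, by simp⟩
  | succ n ih =>
    obtain ⟨w, hw, r, hr⟩ := ih (by omega)
    refine ⟨w + C (constantCoeff r) * (PowerSeries.X ^ n * (kap ^ (m - n) * bet ^ n)),
      Submodule.add_mem _ hw (W_Cmul _ (W_basis (by omega))), ?_⟩
    rw [← sub_sub, hr, show PowerSeries.X ^ n * r - C (constantCoeff r) *
      (PowerSeries.X ^ n * (kap ^ (m - n) * bet ^ n))
      = PowerSeries.X ^ n * (r - C (constantCoeff r) * (kap ^ (m - n) * bet ^ n)) by ring, pow_succ]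
    refine mul_dvd_mul_left _ ?_
    rw [X_dvd_iff, map_sub, map_mul, unit_const]
    simp

lemma W_of_pr {m : ℕ} {g : ℤ⟦X⟧} {g' : ℂ⟦X⟧} (h : Pr (4 * m) (mp g) g') : g ∈ W m := by
  obtain ⟨w, hw, r, hr⟩ := W_approx m g (m + 1) le_rfl
  obtain ⟨w', hw'⟩ := W_pr hw
  have h1 := h.sub hw'
  rw [← map_sub, hr] at h1
  have h2 := h1.sturm ⟨mp r, by simp⟩
  rw [← hr] at h2
  have h3 : g - w = 0 := map_inj (by rw [h2, map_zero])
  rw [sub_eq_zero.1 h3]; exact hw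

lemma Pr.unique {k : ℕ} {g g1 g2 : ℂ⟦X⟧} (h1 : Pr k g g1) (h2 : Pr k g g2) : g1 = g2 := by
  obtain ⟨G, G1, a, b, c⟩ := h1
  obtain ⟨G', G2, a', b', c'⟩ := h2
  have hG : ∀ q, ‖q‖ < 1 → G q = G' q := fun q hq => (a q hq).unique (a' q hq)
  have h0 : ∀ q, ‖q‖ < 1 → q ≠ 0 → G1 q - G2 q = 0 := by
    intro q hq hq0
    obtain ⟨z, hz, rfl⟩ := ee_surj hq0 hq
    have hz2 : 0 < (2 * z).im := by simpa using hz
    have e1 := c (2 * z) hz2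
    have e2 := c' (2 * z) hz2
    rw [hG _ (ee_norm (im_inv_pos hz2)), e2] at e1
    have hne : (2 * z) ^ k ≠ 0 := pow_ne_zero _ (im_ne hz2)
    have := mul_left_cancel₀ hne e1
    rw [mul_div_cancel_left₀ _ (two_ne_zero)] at this
    rw [this, sub_self]
  have hr := b.sub b'
  have hc : ContinuousAt (fun q => G1 q - G2 q) 0 := hr.contAt (by simp)
  have h00 : G1 0 - G2 0 = 0 := by
    have t1 : Filter.Tendsto (fun q => G1 q - G2 q) (nhdsWithin 0 {0}ᶜ) (nhds (G1 0 - G2 0)) :=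
      hc.tendsto.mono_left nhdsWithin_le_nhds
    have t2 : Filter.Tendsto (fun q => G1 q - G2 q) (nhdsWithin 0 {0}ᶜ) (nhds 0) := by
      refine tendsto_const_nhds.congr' ?_
      have hb : Metric.ball (0 : ℂ) 1 ∈ nhds (0 : ℂ) := Metric.ball_mem_nhds _ one_pos
      filter_upwards [self_mem_nhdsWithin, mem_nhdsWithin_of_mem_nhds hb] with q hq hq'
      exact (h0 q (by simpa using hq') hq).symm
    exact tendsto_nhds_unique t1 t2
  have hz : RepC (g1 - g2) (fun _ => 0) := hr.congr fun q hq => by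
    by_cases h : q = 0
    · rw [h]; exact h00
    · exact h0 q hq h
  exact sub_eq_zero.1 (hz.unique RepC.zero)

lemma T7_map (k : ℕ) (f : ℤ⟦X⟧) : mp (T7 k f) = T7 k (mp f) := by
  unfold T7
  rw [map_add, map_mul, map_C, map_expand]
  congr 1
  ext n; simp

lemma T7_coeff {K : Type*} [CommRing K] (k i : ℕ) (u : K⟦X⟧) (n : ℕ) (hn : 7 * n < i) :
    coeff n (T7 k (PowerSeries.X ^ i * u)) = 0 := by
  unfold T7
  rw [map_add, coeff_C_mul, coeff_expand]
  simp only [U7, coeff_mk, coeff_X_pow_mul']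
  rw [if_neg (by omega)]
  split_ifs with h1 h2
  · obtain ⟨t, rfl⟩ := h1
    rw [Nat.mul_div_cancel_left _ (by norm_num)] at h2
    omega
  · simp
  · simp

lemma hecke_mono (i l i' l' e : ℕ) (hm : 1 ≤ i + l) (hi : 7 * i' < i + 7) (hl : 7 * l' < l + 7)
    (he : i' + l' + e = i + l) :
    ∃ w ∈ W e, T7 (4 * (i + l)) (kap ^ i * bb ^ l) = kap ^ i' * bb ^ l' * w := by
  have h1 := (pr_mono i l).hecke ⟨2 * (i + l), by ring⟩ (by omega)
  rw [← T7_map] at h1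
  obtain ⟨c, hc⟩ := W_repr (W_of_pr h1)
  set m := i + l with hm'
  -- the second expression for the partner
  have h2 : Pr (4 * m) (mp (T7 (4 * m) (kap ^ i * bb ^ l))) (∑ k ∈ range (m + 1),
      C (c k : ℂ) * ((C 16 * mp bb) ^ (m - k) * (C (1 / 256) * mp kap) ^ k)) := by
    rw [hc, map_sum]
    refine Pr.sum _ fun k hk => ?_
    have hk' := mem_range.1 hk
    rw [map_mul, map_C]
    have := pr_mono (m - k) k
    rw [Nat.sub_add_cancel (by omega), bb_eq, mul_pow PowerSeries.X,
      show kap ^ (m - k) * (PowerSeries.X ^ k * bet ^ k)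
        = PowerSeries.X ^ k * (kap ^ (m - k) * bet ^ k) by ring] at this
    exact this.smul _
  have h3 := h1.unique h2
  have z1 : ∀ k, k < l' → k < m + 1 → c k = 0 := by
    have := tri (⊥ : Ideal ℤ) c (fun k => kap ^ (m - k) * bet ^ k)
      (fun k => by rw [unit_const]; exact isUnit_one) (m + 1) l' ?_
    · simpa using this
    · intro n hn
      rw [← hc, Ideal.mem_bot, bb_eq, mul_pow, show kap ^ i * (PowerSeries.X ^ l * bet ^ l)
        = PowerSeries.X ^ l * (kap ^ i * bet ^ l) by ring]
      exact T7_coeff _ _ _ _ (by omega)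
  have z2 : ∀ k, k < i' → k < m + 1 → c (m - k) = 0 := by
    have := tri (⊥ : Ideal ℂ) (fun k => (c (m - k) : ℂ) * (16 ^ k * (1 / 256) ^ (m - k)))
      (fun k => mp (kap ^ (m - k) * bet ^ k))
      (fun k => by
        rw [← coeff_zero_eq_constantCoeff_apply, coeff_map, coeff_zero_eq_constantCoeff_apply,
          unit_const]
        simp) (m + 1) i' ?_
    · intro k h1 h2
      have := this k h1 h2
      simpa using this
    · intro n hn
      rw [Ideal.mem_bot]
      have e1 : ∑ k ∈ range (m + 1), C ((c (m - k) : ℂ) * (16 ^ k * (1 / 256) ^ (m - k))) *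
          (PowerSeries.X ^ k * mp (kap ^ (m - k) * bet ^ k))
          = ∑ k ∈ range (m + 1),
      C (c k : ℂ) * ((C 16 * mp bb) ^ (m - k) * (C (1 / 256) * mp kap) ^ k) := by
        rw [← Finset.sum_range_reflect]
        refine Finset.sum_congr rfl fun k hk => ?_
        have hk' := mem_range.1 hk
        have e2 : m + 1 - 1 - k = m - k := by omega
        rw [e2, show m - (m - k) = k by omega]
        simp only [bb_eq, map_mul, map_pow, mul_pow, map_X]
        ring
      rw [e1, ← h3]
      have e3 : (C (16 : ℂ) * mp bb) ^ i * (C (1 / 256) * mp kap) ^ l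
          = PowerSeries.X ^ i * ((C (16 : ℂ) * mp bet) ^ i * (C (1 / 256) * mp kap) ^ l) := by
        rw [bb_eq, map_mul, map_X]; ring
      rw [e3]
      exact T7_coeff _ _ _ _ (by omega)
  refine ⟨∑ k ∈ range (m + 1), C (c k) * (if l' ≤ k ∧ k + i' ≤ m then
    kap ^ (m - k - i') * bb ^ (k - l') else 0), ?_, ?_⟩
  · refine Submodule.sum_mem _ fun k hk => W_Cmul _ ?_
    split_ifs with h
    · exact W_mono' (by omega)
    · exact Submodule.zero_mem _
  · rw [hc, Finset.mul_sum]
    refine Finset.sum_congr rfl fun k hk => ?_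
    have hk' := mem_range.1 hk
    split_ifs with h
    · obtain ⟨a, rfl⟩ := Nat.exists_eq_add_of_le h.1
      obtain ⟨b, hb⟩ := Nat.exists_eq_add_of_le h.2
      rw [show m - (l' + a) - i' = b by omega, show m - (l' + a) = i' + b by omega,
        show l' + a - l' = a by omega, bb_eq]
      ring
    · by_cases h4 : l' ≤ k
      · have := z2 (m - k) (by omega) (by omega)
        rw [show m - (m - k) = k by omega] at this
        simp [this]
      · simp [z1 k (by omega) hk']

end

section
open PowerSeries Finset

/-- congruence modulo `7 ^ i` -/
def E7 (i : ℕ) (f g : ℤ⟦X⟧) : Prop := (7 : ℤ⟦X⟧) ^ i ∣ f - g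

lemma E7.refl (i : ℕ) (f : ℤ⟦X⟧) : E7 i f f := by simp [E7]
lemma E7.of_eq {i : ℕ} {f g : ℤ⟦X⟧} (h : f = g) : E7 i f g := h ▸ E7.refl i f
lemma E7.symm {i : ℕ} {f g : ℤ⟦X⟧} (h : E7 i f g) : E7 i g f := by
  rw [E7, ← neg_sub]; exact (dvd_neg.2 h)
lemma E7.trans {i : ℕ} {f g k : ℤ⟦X⟧} (h : E7 i f g) (h' : E7 i g k) : E7 i f k := by
  have := dvd_add h h'
  rwa [sub_add_sub_cancel] at this
lemma E7.add {i : ℕ} {f g f' g' : ℤ⟦X⟧} (h : E7 i f g) (h' : E7 i f' g') : E7 i (f + f') (g + g') := by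
  have := dvd_add h h'
  rwa [sub_add_sub_comm] at this
lemma E7.sub {i : ℕ} {f g f' g' : ℤ⟦X⟧} (h : E7 i f g) (h' : E7 i f' g') : E7 i (f - f') (g - g') := by
  have := dvd_sub h h'
  rwa [sub_sub_sub_comm] at this
lemma E7.mul {i : ℕ} {f g f' g' : ℤ⟦X⟧} (h : E7 i f g) (h' : E7 i f' g') : E7 i (f * f') (g * g') := by
  have := dvd_add (h.mul_right f') (h'.mul_left g)
  rw [E7]; convert this using 1; ring
lemma E7.mulL {i : ℕ} {f g : ℤ⟦X⟧} (k : ℤ⟦X⟧) (h : E7 i f g) : E7 i (k * f) (k * g) :=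
  (E7.refl i k).mul h
lemma E7.mulR {i : ℕ} {f g : ℤ⟦X⟧} (k : ℤ⟦X⟧) (h : E7 i f g) : E7 i (f * k) (g * k) :=
  h.mul (E7.refl i k)
lemma E7.pow {i : ℕ} {f g : ℤ⟦X⟧} (h : E7 i f g) (n : ℕ) : E7 i (f ^ n) (g ^ n) :=
  h.trans (E7.refl _ _) |> fun h => dvd_trans h (sub_dvd_pow_sub_pow f g n)
lemma E7.mono {i i' : ℕ} {f g : ℤ⟦X⟧} (h : E7 i f g) (hi : i' ≤ i) : E7 i' f g :=
  dvd_trans (pow_dvd_pow _ hi) h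
lemma E7.lift {f g : ℤ⟦X⟧} (h : E7 1 f g) (j : ℕ) : E7 (j + 1) (f ^ 7 ^ j) (g ^ 7 ^ j) := by
  have := dvd_sub_pow_of_dvd_sub (p := 7) (a := f) (b := g) (by simpa [E7] using h) j
  simpa [E7] using this
lemma E7.seven {i : ℕ} {f g : ℤ⟦X⟧} (h : E7 i f g) : E7 (i + 1) (7 * f) (7 * g) := by
  rw [E7, ← mul_sub, pow_succ']; exact mul_dvd_mul_left _ h
lemma E7.of_seven {i : ℕ} {f g : ℤ⟦X⟧} (h : E7 (i + 1) (7 * f) (7 * g)) : E7 i f g := by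
  rw [E7, ← mul_sub, pow_succ'] at h
  refine (mul_dvd_mul_iff_left (fun h0 => ?_)).1 h
  have := congrArg constantCoeff h0
  rw [map_ofNat] at this
  simp at this
lemma E7.cancel {i : ℕ} {f g k k' : ℤ⟦X⟧} (hk : k' * k = 1) (h : E7 i (k * f) (k * g)) : E7 i f g := by
  have := h.mulL k'
  rwa [← mul_assoc, ← mul_assoc, hk, one_mul, one_mul] at this

lemma seven_coeff (i : ℕ) (f : ℤ⟦X⟧) : (7 : ℤ⟦X⟧) ^ i ∣ f ↔ ∀ n, (7 : ℤ) ^ i ∣ coeff n f := by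
  have e : (7 : ℤ⟦X⟧) ^ i = C ((7 : ℤ) ^ i) := by rw [map_pow]; rfl
  rw [e]
  constructor
  · rintro ⟨g, rfl⟩ n
    rw [coeff_C_mul]; exact dvd_mul_right _ _
  · intro h
    choose g hg using h
    refine ⟨PowerSeries.mk g, ?_⟩
    ext n
    rw [coeff_C_mul, coeff_mk, hg]

lemma U7_coeff (f : ℤ⟦X⟧) (n : ℕ) : coeff n (U7 f) = coeff (7 * n) f := by simp [U7]
lemma U7_add (f g : ℤ⟦X⟧) : U7 (f + g) = U7 f + U7 g := by ext n; simp [U7_coeff]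
lemma U7_sub (f g : ℤ⟦X⟧) : U7 (f - g) = U7 f - U7 g := by ext n; simp [U7_coeff]
lemma U7_Cmul (a : ℤ) (f : ℤ⟦X⟧) : U7 (C a * f) = C a * U7 f := by
  ext n; rw [U7_coeff, coeff_C_mul, coeff_C_mul, U7_coeff]
lemma U7_zero : U7 (0 : ℤ⟦X⟧) = 0 := by ext n; simp [U7_coeff]
lemma E7.U7 {i : ℕ} {f g : ℤ⟦X⟧} (h : E7 i f g) : E7 i (U7 f) (U7 g) := by
  unfold E7 at *
  rw [← U7_sub, seven_coeff]
  rw [seven_coeff] at h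
  intro n
  rw [U7_coeff]; exact h _

/-- the substitution `q ↦ q ^ 7` -/
def x7 : ℤ⟦X⟧ →ₐ[ℤ] ℤ⟦X⟧ := PowerSeries.expand 7 (by norm_num)

lemma U7_x7 (f g : ℤ⟦X⟧) : U7 (x7 g * f) = g * U7 f := by
  ext n
  rw [U7_coeff, coeff_mul, coeff_mul]
  refine (Finset.sum_of_injOn (fun p : ℕ × ℕ => (7 * p.1, 7 * p.2)) ?_ ?_ ?_ ?_).symm
  · rintro ⟨a, b⟩ _ ⟨c, d⟩ _ h; simp at h; ext <;> simp <;> omega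
  · rintro ⟨a, b⟩ h; simp at h ⊢; omega
  · rintro ⟨a, b⟩ h h'
    simp at h h'
    have : ¬ 7 ∣ a := by
      rintro ⟨c, rfl⟩
      refine h' c (b / 7) (by omega) rfl (by omega)
    simp [x7, coeff_expand_of_not_dvd _ _ _ this]
  · rintro ⟨a, b⟩ h
    simp [x7, coeff_expand_mul, U7_coeff]

lemma E7_iff_map {f g : ℤ⟦X⟧} (h : PowerSeries.map (Int.castRingHom (ZMod 7)) f
    = PowerSeries.map (Int.castRingHom (ZMod 7)) g) : E7 1 f g := by
  rw [E7, seven_coeff]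
  intro n
  have := congrArg (coeff n) h
  simp only [coeff_map] at this
  rw [pow_one, map_sub]
  exact (ZMod.intCast_eq_intCast_iff_dvd_sub _ _ 7).1 this.symm

lemma frob (f : ℤ⟦X⟧) : E7 1 (f ^ 7) (x7 f) := by
  refine E7_iff_map ?_
  rw [map_pow, x7, map_expand]
  have : Fact (Nat.Prime 7) := ⟨by norm_num⟩
  have := MvPowerSeries.map_frobenius_expand (R := ZMod 7) (p := 7) (hp := by norm_num)
    (f := PowerSeries.map (Int.castRingHom (ZMod 7)) f)
  rw [ZMod.frobenius_zmod] at this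
  rw [← this]
  ext n
  simp [PowerSeries.expand, PowerSeries.coeff]

lemma frob' (f : ℤ⟦X⟧) (j k : ℕ) : E7 (j + 1) (f ^ (7 * (7 ^ j * k))) (x7 (f ^ (7 ^ j * k))) := by
  have := ((frob f).lift j).pow k
  rw [map_pow, pow_mul, pow_mul, pow_mul]
  exact this

/-- action of `U7` on the monomial spaces -/
lemma U_W {e v u v' u' e' j : ℕ} {f : ℤ⟦X⟧} (hf : f ∈ W e) (hv : 7 * v' < v + 7)
    (hu : 7 * u' < u + 7) (he : v' + u' + e' = e + v + u) (hj : j + 1 ≤ 4 * (e + v + u)) :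
    ∃ w ∈ W e', E7 j (U7 (kap ^ v * bb ^ u * f)) (kap ^ v' * bb ^ u' * w) := by
  induction hf using Submodule.span_induction with
  | zero => exact ⟨0, Submodule.zero_mem _, E7.of_eq (by rw [mul_zero, mul_zero, U7_zero])⟩
  | add x y _ _ h1 h2 =>
    obtain ⟨w1, m1, e1⟩ := h1
    obtain ⟨w2, m2, e2⟩ := h2
    refine ⟨w1 + w2, Submodule.add_mem _ m1 m2, ?_⟩
    rw [mul_add, mul_add, U7_add]; exact e1.add e2
  | smul a x _ h =>
    obtain ⟨w1, m1, e1⟩ := h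
    refine ⟨C a * w1, W_Cmul _ m1, ?_⟩
    rw [zsm, mul_left_comm, U7_Cmul, mul_left_comm _ (C a)]
    exact e1.mulL _
  | mem f h =>
    obtain ⟨i, l, h1, rfl⟩ := h
    obtain ⟨w, hw, h2⟩ := hecke_mono (v + i) (u + l) v' u' e' (by omega) (by omega) (by omega)
      (by omega)
    refine ⟨w, hw, ?_⟩
    rw [← h2, T7, E7, show kap ^ v * bb ^ u * (kap ^ i * bb ^ l) = kap ^ (v + i) * bb ^ (u + l) by ring,
      sub_add_cancel_left, dvd_neg]
    refine Dvd.dvd.mul_right ?_ _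
    rw [map_pow]
    exact pow_dvd_pow _ (by omega)

lemma Ucheck {e i : ℕ} {f g : ℤ⟦X⟧} (hf : f ∈ W e) (hg : g ∈ W e) (hi : i + 1 ≤ 4 * e)
    (h : ∀ n < e + 1, (7 : ℤ) ^ i ∣ coeff n (U7 f) - coeff n g) : E7 i (U7 f) g := by
  obtain ⟨w, hw, h1⟩ := U_W (v := 0) (u := 0) (v' := 0) (u' := 0) (e' := e) (j := i) hf (by omega)
    (by omega) (by omega) (by omega)
  simp only [pow_zero, one_mul] at h1
  refine h1.trans ?_
  obtain ⟨k, hk, h2⟩ := W_sat (m := 7 ^ i) (Submodule.sub_mem _ hw hg) (by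
    intro n hn
    have a := (seven_coeff i _).1 h1.symm n
    have b := dvd_add a (h n hn)
    rw [map_sub, sub_add_sub_cancel] at b
    rw [map_sub]; exact_mod_cast b)
  rw [E7, h2]
  exact Dvd.intro _ (by push_cast; rfl)

/-- the form of weight twelve -/
def Hh : ℤ⟦X⟧ := (kap + C 64 * bb) * (kap - C 512 * bb) ^ 2

lemma kap_W : kap ∈ W 1 := by simpa using W_mono 1 0
lemma bb_W : bb ∈ W 1 := by simpa using W_mono 0 1

lemma W_add {d : ℕ} {f g : ℤ⟦X⟧} (hf : f ∈ W d) (hg : g ∈ W d) : f + g ∈ W d :=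
  Submodule.add_mem _ hf hg
lemma W_sub {d : ℕ} {f g : ℤ⟦X⟧} (hf : f ∈ W d) (hg : g ∈ W d) : f - g ∈ W d :=
  Submodule.sub_mem _ hf hg

lemma W_mul' {d e k : ℕ} {f g : ℤ⟦X⟧} (h : d + e = k) (hf : f ∈ W d) (hg : g ∈ W e) : f * g ∈ W k :=
  h ▸ W_mul hf hg

lemma Hh_W : Hh ∈ W 3 := by
  have h1 : kap + C 64 * bb ∈ W 1 := W_add kap_W (W_Cmul _ bb_W)
  have h2 : kap - C 512 * bb ∈ W 1 := W_sub kap_W (W_Cmul _ bb_W)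
  have h3 : (kap - C 512 * bb) ^ 2 ∈ W 2 := by
    rw [sq]; exact W_mul' (by norm_num) h2 h2
  exact W_mul' (by norm_num) h1 h3

lemma quo_id {A : Type*} [CommRing A] (x : A) (hx : x ^ 4 = 0) :
    (1 - 504 * x - 16632 * x ^ 2 - 122976 * x ^ 3) ^ 2 * ((1 - x - x ^ 2) ^ 24 * (1 - x ^ 2) ^ 24)
    = ((1 - x - x ^ 2) ^ 24 + 64 * (x * (1 - x ^ 2) ^ 24)) *
      ((1 - x - x ^ 2) ^ 24 - 512 * (x * (1 - x ^ 2) ^ 24)) ^ 2 := by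
  have a1 : (1 - x - x ^ 2) ^ 2 = 1 - 2 * x - x ^ 2 + 2 * x ^ 3 := by
    linear_combination hx
  have a3 : (1 - x - x ^ 2) ^ 3 = 1 - 3 * x + 5 * x ^ 3 := by
    rw [pow_succ, a1]; linear_combination (-1 - 2 * x) * hx
  have a6 : (1 - x - x ^ 2) ^ 6 = 1 - 6 * x + 9 * x ^ 2 + 10 * x ^ 3 := by
    rw [show 6 = 3 * 2 by rfl, pow_mul, a3]; linear_combination (25 * x ^ 2 - 30) * hx
  have a12 : (1 - x - x ^ 2) ^ 12 = 1 - 12 * x + 54 * x ^ 2 - 88 * x ^ 3 := by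
    rw [show 12 = 6 * 2 by rfl, pow_mul, a6]
    linear_combination (81 - 120 + 180 * x + 100 * x ^ 2) * hx
  have a24 : (1 - x - x ^ 2) ^ 24 = 1 - 24 * x + 252 * x ^ 2 - 1472 * x ^ 3 := by
    rw [show 24 = 12 * 2 by rfl, pow_mul, a12]
    linear_combination (54 ^ 2 + 24 * 88 - 108 * 88 * x + 88 ^ 2 * x ^ 2) * hx
  have b2 : (1 - x ^ 2) ^ 2 = 1 - 2 * x ^ 2 := by linear_combination hx
  have b4 : (1 - x ^ 2) ^ 4 = 1 - 4 * x ^ 2 := by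
    rw [show 4 = 2 * 2 by rfl, pow_mul, b2]; linear_combination 4 * hx
  have b8 : (1 - x ^ 2) ^ 8 = 1 - 8 * x ^ 2 := by
    rw [show 8 = 4 * 2 by rfl, pow_mul, b4]; linear_combination 16 * hx
  have b24 : (1 - x ^ 2) ^ 24 = 1 - 24 * x ^ 2 := by
    rw [show 24 = 8 * 3 by rfl, pow_mul, b8]; linear_combination (3 * 64 - 512 * x ^ 2) * hx
  have h5 : x ^ 5 = 0 := by rw [pow_succ, hx, zero_mul]
  have h6 : x ^ 6 = 0 := by rw [pow_succ, h5, zero_mul]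
  have h7 : x ^ 7 = 0 := by rw [pow_succ, h6, zero_mul]
  have h8 : x ^ 8 = 0 := by rw [pow_succ, h7, zero_mul]
  have h9 : x ^ 9 = 0 := by rw [pow_succ, h8, zero_mul]
  have h10 : x ^ 10 = 0 := by rw [pow_succ, h9, zero_mul]
  have h11 : x ^ 11 = 0 := by rw [pow_succ, h10, zero_mul]
  rw [a24, b24]
  ring_nf
  simp only [hx, h5, h6, h7, h8, h9, h10, h11]
  ring

lemma J_quo (b : ℕ) (p : ℤ⟦X⟧) (h : ∀ n < 4, coeff n (J b) = coeff n p) :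
    Ideal.Quotient.mk (Ideal.span {(PowerSeries.X : ℤ⟦X⟧) ^ 4}) (J b) = Ideal.Quotient.mk _ p := by
  rw [Ideal.Quotient.eq, Ideal.mem_span_singleton, X_pow_dvd_iff]
  intro n hn
  rw [map_sub, h n hn, sub_self]

lemma pent_coeff (b n : ℕ) (hb : b ≠ 0) (hn : n < 4) : coeff n (J b)
    = coeff n ((1 - (PowerSeries.X : ℤ⟦X⟧) ^ (b * 1)) * (1 - PowerSeries.X ^ (b * 2)) *
      (1 - PowerSeries.X ^ (b * 3)) * (1 - PowerSeries.X ^ (b * 4))) := by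
  rw [← coeff_prod_stable hb n 4 (by omega)]
  simp [Finset.prod_range_succ]

lemma Hh_E6 : E6 ^ 2 = Hh := by
  set I := Ideal.span {(PowerSeries.X : ℤ⟦X⟧) ^ 4} with hI
  set π := Ideal.Quotient.mk I with hπ
  set x := π PowerSeries.X with hx
  have x4 : x ^ 4 = 0 := by
    rw [hx, ← map_pow]; exact Ideal.Quotient.eq_zero_iff_mem.2 (Ideal.mem_span_singleton_self _)
  have h5 : x ^ 5 = 0 := by rw [pow_succ, x4, zero_mul]
  have h6 : x ^ 6 = 0 := by rw [pow_succ, h5, zero_mul]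
  have h7 : x ^ 7 = 0 := by rw [pow_succ, h6, zero_mul]
  have h8 : x ^ 8 = 0 := by rw [pow_succ, h7, zero_mul]
  have j1 : π (J 1) = 1 - x - x ^ 2 := by
    rw [hπ, J_quo 1 _ (fun n hn => pent_coeff 1 n one_ne_zero hn)]
    simp only [map_mul, map_sub, map_pow, map_one]
    linear_combination (2 * x - x ^ 4 - x ^ 5 + x ^ 6) * x4
  have j2 : π (J 2) = 1 - x ^ 2 := by
    rw [hπ, J_quo 2 _ (fun n hn => pent_coeff 2 n two_ne_zero hn)]
    simp only [map_mul, map_sub, map_pow, map_one]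
    linear_combination (-(1 - x ^ 2) * (1 + x ^ 2 + x ^ 4 - x ^ 6 - x ^ 8 - x ^ 10 + x ^ 14)) * x4
  have e6 : π E6 = 1 - 504 * x - 16632 * x ^ 2 - 122976 * x ^ 3 := by
    have : π E6 = π (1 - C 504 * PowerSeries.X - C 16632 * PowerSeries.X ^ 2
        - C 122976 * PowerSeries.X ^ 3) := by
      rw [hπ, Ideal.Quotient.eq, Ideal.mem_span_singleton, X_pow_dvd_iff]
      intro n hn
      have s2 : ArithmeticFunction.sigma 5 2 = 33 := by decide +kernel
      have s3 : ArithmeticFunction.sigma 5 3 = 244 := by decide +kernel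
      interval_cases n <;>
        simp [E6, coeff_C_mul, coeff_X_pow, coeff_one, s2, s3, -eq_intCast]
    rw [this]
    simp only [map_mul, map_sub, map_pow, map_one, map_ofNat, ← hx]
  have k1 : kap * (J 1 ^ 8 * J 2 ^ 8) = J 1 ^ 24 := by
    have := congrArg (· ^ 8) (J_Ji 2 two_ne_zero)
    simp only [mul_pow, one_pow] at this
    rw [kap]; linear_combination (J 1 ^ 24) * this
  have k2 : bb * (J 1 ^ 8 * J 2 ^ 8) = PowerSeries.X * J 2 ^ 24 := by
    have := congrArg (· ^ 8) (J_Ji 1 one_ne_zero)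
    simp only [mul_pow, one_pow] at this
    rw [bb]; linear_combination (PowerSeries.X * J 2 ^ 24) * this
  have key : π (E6 ^ 2 * (J 1 ^ 24 * J 2 ^ 24)) = π (Hh * (J 1 ^ 24 * J 2 ^ 24)) := by
    have : Hh * (J 1 ^ 24 * J 2 ^ 24) = (J 1 ^ 24 + C 64 * (PowerSeries.X * J 2 ^ 24)) *
        (J 1 ^ 24 - C 512 * (PowerSeries.X * J 2 ^ 24)) ^ 2 := by
      rw [show Hh * (J 1 ^ 24 * J 2 ^ 24) = (kap * (J 1 ^ 8 * J 2 ^ 8) + C 64 *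
        (bb * (J 1 ^ 8 * J 2 ^ 8))) * (kap * (J 1 ^ 8 * J 2 ^ 8) - C 512 *
        (bb * (J 1 ^ 8 * J 2 ^ 8))) ^ 2 by rw [Hh]; ring, k1, k2]
    rw [this]
    simp only [map_mul, map_sub, map_add, map_pow, ← hx, e6, j1, j2, map_ofNat]
    exact quo_id x x4
  have key2 : π (E6 ^ 2) = π Hh := by
    have u : J 1 ^ 24 * J 2 ^ 24 * (Ji 1 ^ 24 * Ji 2 ^ 24) = 1 := by
      rw [mul_mul_mul_comm, ← mul_pow, ← mul_pow, J_Ji 1 one_ne_zero, J_Ji 2 two_ne_zero]; simp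
    have := congrArg (· * π (Ji 1 ^ 24 * Ji 2 ^ 24)) key
    simp only [← map_mul, mul_assoc _ (J 1 ^ 24 * J 2 ^ 24)] at this
    rwa [u, mul_one, mul_one] at this
  rw [hπ, Ideal.Quotient.eq, Ideal.mem_span_singleton] at key2
  obtain ⟨r, hr⟩ := key2
  obtain ⟨g', hg'⟩ := W_pr Hh_W
  have h1 : Pr (4 * 3) _ _ := pr_E6.pow 2
  have h2 := h1.sub hg'
  rw [← map_pow, ← map_sub] at h2
  have h3 := h2.sturm (by rw [hr, map_mul]; exact ⟨_, by rw [map_pow, map_X]⟩)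
  exact sub_eq_zero.1 (map_inj (by rw [h3, map_zero]))

lemma exists_h : ∃ h : ℤ⟦X⟧, h ^ 4 = Hh ∧ E7 1 h 1 := by
  set z : ℤ⟦X⟧ := C (-126) * PowerSeries.mk fun n => (ArithmeticFunction.sigma 5 n : ℤ) with hz
  have hz0 : constantCoeff (-z) = 0 := by
    simp [hz]
  have hs := HasSubst.of_constantCoeff_zero' hz0
  set c0 : ℤ⟦X⟧ := PowerSeries.map (Nat.castRingHom ℤ) catalanSeries with hc0
  have e0 : c0 ^ 2 * PowerSeries.X + 1 = c0 := by
    have := congrArg (PowerSeries.map (Nat.castRingHom ℤ)) catalanSeries_sq_mul_X_add_one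
    simpa using this
  set c : ℤ⟦X⟧ := PowerSeries.subst (-z) c0 with hc
  have e1 : c ^ 2 * (-z) + 1 = c := by
    have := congrArg (substAlgHom hs) e0
    rw [map_add, map_mul, map_pow, map_one, substAlgHom_X] at this
    rwa [coe_substAlgHom] at this
  have e2 : 1 + 4 * z = E6 := by
    ext n
    have : (4 : ℤ⟦X⟧) * z = C (-504) * PowerSeries.mk fun n => (ArithmeticFunction.sigma 5 n : ℤ) := by
      rw [hz, ← mul_assoc, show (4 : ℤ⟦X⟧) = C 4 by rfl, ← map_mul]; norm_num
    rw [this, map_add, coeff_C_mul, coeff_mk, E6, coeff_mk, coeff_one]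
    by_cases hn : n = 0
    · simp [hn]
    · simp [hn]
  refine ⟨1 + 2 * (z * c), ?_, ?_⟩
  · rw [← Hh_E6, ← e2]
    have : (1 + 2 * (z * c)) ^ 2 = 1 + 4 * z := by linear_combination (-4 * z) * e1
    rw [← this]; ring
  · rw [E7, add_sub_cancel_left, hz, pow_one]
    refine Dvd.dvd.mul_left (Dvd.dvd.mul_right (Dvd.dvd.mul_right ⟨C (-18), ?_⟩ _) _) _
    rw [show (7 : ℤ⟦X⟧) = C 7 by rfl, ← map_mul]; norm_num

/-- a fourth root of `Hh` -/
def hh : ℤ⟦X⟧ := exists_h.choose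
lemma hh4 : hh ^ 4 = Hh := exists_h.choose_spec.1
lemma hh1 : E7 1 hh 1 := exists_h.choose_spec.2

end

section
open PowerSeries Finset

/-- homogeneous polynomial in `kap`, `bb` -/
def polS : List ℕ → ℤ⟦X⟧
  | [] => 0
  | c :: cs => C (c : ℤ) * kap ^ cs.length + bb * polS cs

def polN (m M K b : ℕ) : List ℕ → ℕ
  | [] => 0
  | c :: cs => nrm m BB M (nrm m BB M (c * pwN m BB M K cs.length) + nrm m BB M (b * polN m M K b cs))

def ev (m M : ℕ) (hs : List ℕ) (i l s : ℕ) (p : List ℕ) : ℕ :=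
  nrm m BB M (nrm m BB M (pwN m BB M (nrm m BB M kapL) i * pwN m BB M (nrm m BB M bbL) l) *
    nrm m BB M (pwN m BB M (polN m M (nrm m BB M kapL) (nrm m BB M bbL) hs) s *
      polN m M (nrm m BB M kapL) (nrm m BB M bbL) p))

abbrev hs7 : List ℕ := [1, 6, 6, 1]
abbrev hs49 : List ℕ := [1, 20, 20, 8]

def ckd (m N : ℕ) (hs : List ℕ) (i l : ℕ) (s : ℕ) (p : List ℕ) (i' l' t : ℕ) (p' : List ℕ) : Prop :=
  u7 BB N (ev m (7 * N) hs i l s p) = ev m N hs i' l' t p'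

instance (m N : ℕ) (hs : List ℕ) (i l : ℕ) (s : ℕ) (p : List ℕ) (i' l' t : ℕ) (p' : List ℕ) :
    Decidable (ckd m N hs i l s p i' l' t p') := by unfold ckd; infer_instance

theorem kerB : ckd 49 40 hs49 5 12 5 [0, 1, 0, 48, 0, 0, 0] 1 2 10 [0, 14, 42, 35, 7, 0] ∧
    ckd 49 40 hs49 5 12 5 [0, 0, 1, 0, 48, 0, 0] 1 2 10 [1, 20, 47, 16, 1, 13] := by
  decide +kernel

abbrev ck7 (i l i' l' t : ℕ) (p' : List ℕ) : Prop := ckd 7 19 hs7 i l 0 [1] i' l' t p'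

theorem kerA : (ck7 4 0 0 0 1 [1, 0] ∧ ck7 3 1 0 0 1 [0, 0] ∧ ck7 2 2 0 0 1 [0, 0] ∧
    ck7 1 3 0 0 1 [0, 0] ∧ ck7 0 4 0 0 1 [0, 1] ∧ ck7 5 6 0 0 3 [0, 3, 0] ∧ ck7 6 5 0 0 3 [0, 3, 0]) ∧
    (ck7 5 6 1 1 3 [3] ∧ ck7 6 5 1 1 3 [3] ∧ ck7 7 11 1 1 5 [0, 1] ∧ ck7 8 10 1 1 5 [0, 0] ∧
      ck7 9 9 1 1 5 [0, 0] ∧ ck7 10 8 1 1 5 [0, 0] ∧ ck7 11 7 1 1 5 [1, 0]) ∧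
    (ck7 6 0 0 0 1 [1, 0, 6, 0] ∧ ck7 5 1 0 0 1 [0, 0, 0, 0] ∧ ck7 4 2 0 0 1 [0, 0, 0, 0] ∧
      ck7 3 3 0 0 1 [0, 0, 0, 0] ∧ ck7 2 4 0 0 1 [0, 0, 0, 0] ∧ ck7 1 5 0 0 1 [0, 0, 0, 0] ∧
      ck7 0 6 0 0 1 [0, 6, 0, 1]) ∧
    ck7 5 5 0 0 3 [0, 0] ∧ ck7 3 2 0 0 1 [0, 6, 0] ∧ ck7 1 4 0 0 1 [0, 3, 0] := by
  decide +kernel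

attribute [local irreducible] nrm u7 jN invN pwN

lemma polS_W : ∀ (p : List ℕ) (d : ℕ), p.length = d + 1 → polS p ∈ W d := by
  intro p
  induction p with
  | nil => intro d h; simp at h
  | cons c cs ih =>
    intro d h
    simp only [List.length_cons, Nat.add_right_cancel_iff] at h
    rw [polS]
    refine W_add (W_Cmul _ ?_) ?_
    · simpa using W_mono' (i := cs.length) (l := 0) (by omega)
    · rcases d with _ | d
      · rw [List.length_eq_zero_iff] at h
        subst h
        simp only [polS, mul_zero]
        exact Submodule.zero_mem _
      · exact W_mul' (by omega) bb_W (ih d h)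

lemma Ag.cut {m m' B N N' x : ℕ} {f : ℤ⟦X⟧} (hm' : 0 < m') (hd : m' ∣ m) (hB : m ≤ B) (hN : N' ≤ N)
    (h : Ag m B N x f) : Ag m' B N' (nrm m' B N' x) f := by
  obtain ⟨c, h1, h2, h3⟩ := h
  have := h1 0
  obtain ⟨k, rfl⟩ := Nat.exists_eq_add_of_le hN
  refine Ag.of (y := vl B k (fun n => c (N' + n))) hm' (by omega) c (fun n _ => (h1 n).trans_le hB) ?_ ?_
  · rw [h2, vl, Finset.sum_range_add, vl, vl, Finset.mul_sum]
    congr 1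
    exact Finset.sum_congr rfl fun n _ => by ring
  · intro n hn
    exact (Int.natCast_dvd_natCast.2 hd).trans (h3 n (by omega))

lemma Ag.polS {m M K b : ℕ} (hm : 2 ≤ m) (hM : 0 < M) (hB : M * (m * m) < BB)
    (hK : Ag m BB M K kap) (hb : Ag m BB M b bb) : ∀ p : List ℕ, (∀ c ∈ p, c < m) →
    Ag m BB M (polN m M K b p) (polS p) := by
  have hB2 : 2 * m ≤ BB := by nlinarith
  intro p
  induction p with
  | nil => intro _; exact ⟨fun _ => 0, fun _ => (by norm_num : 0 < 2).trans_le hm, by simp [polN, vl], by simp [_root_.polS]⟩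
  | cons c cs ih =>
    intro h
    rw [_root_.polS, polN]
    refine Ag.add hB2 ?_ (Ag.mul hB hb (ih fun c hc => h c (List.mem_cons_of_mem _ hc)))
    refine Ag.mul hB ?_ (hK.pow hm hM hB _)
    have := Ag.mono (m := m) (B := BB) (N := M) 0 c hM (h c List.mem_cons_self)
    simpa using this

lemma Hh_polS : Hh = C 1 * kap ^ 3 + C (-960) * (kap ^ 2 * bb) + C 196608 * (kap * bb ^ 2)
    + C 16777216 * bb ^ 3 := by
  rw [Hh]
  have a : (C (-960) : ℤ⟦X⟧) = -960 := by simp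
  simp only [a, map_ofNat, map_one]
  ring

lemma ag_Hh {m M K b : ℕ} (hs : List ℕ) (hm : (m = 7 ∧ hs = hs7) ∨ (m = 49 ∧ hs = hs49)) (hM : 0 < M)
    (hB : M * (m * m) < BB)
    (hK : Ag m BB M K kap) (hb : Ag m BB M b bb) : Ag m BB M (polN m M K b hs) Hh := by
  have key : ∀ n, (m : ℤ) ∣ coeff n Hh - coeff n (polS hs) := by
    intro n
    rw [Hh_polS]
    rcases hm with ⟨rfl, rfl⟩ | ⟨rfl, rfl⟩
    · have : polS hs7 = C 1 * kap ^ 3 + C 6 * (kap ^ 2 * bb) + C 6 * (kap * bb ^ 2) + C 1 * bb ^ 3 := by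
        simp only [polS, List.length, Nat.cast_ofNat, Nat.cast_one]; ring
      rw [this]
      simp only [map_add, coeff_C_mul]
      push_cast
      omega
    · have : polS hs49 = C 1 * kap ^ 3 + C 20 * (kap ^ 2 * bb) + C 20 * (kap * bb ^ 2) + C 8 * bb ^ 3 := by
        simp only [polS, List.length, Nat.cast_ofNat, Nat.cast_one]; ring
      rw [this]
      simp only [map_add, coeff_C_mul]
      push_cast
      omega
  refine Ag.congr (f := polS hs) ?_ ?_
  · refine Ag.polS ?_ hM hB hK hb hs ?_
    · rcases hm with ⟨rfl, rfl⟩ | ⟨rfl, rfl⟩ <;> norm_num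
    · rcases hm with ⟨rfl, rfl⟩ | ⟨rfl, rfl⟩ <;> decide
  · intro n _
    exact key n

lemma ag_ev {m M : ℕ} (hs : List ℕ) (hm : (m = 7 ∧ hs = hs7) ∨ (m = 49 ∧ hs = hs49)) (hM : 0 < M)
    (hM' : M ≤ 280) (i l s : ℕ) (p : List ℕ) (hp : ∀ c ∈ p, c < m) :
    Ag m BB M (ev m M hs i l s p) (kap ^ i * bb ^ l * (Hh ^ s * polS p)) := by
  have hm2 : 2 ≤ m ∧ m ≤ 49 ∧ m ∣ 49 := by rcases hm with ⟨rfl, rfl⟩ | ⟨rfl, rfl⟩ <;> norm_num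
  obtain ⟨h2, h3, h4⟩ := hm2
  have hB : M * (m * m) < BB := by
    have : M * (m * m) ≤ 280 * (49 * 49) := Nat.mul_le_mul hM' (Nat.mul_le_mul h3 h3)
    exact this.trans_lt (by norm_num)
  have hK := ag_kap.cut (m' := m) (N' := M) (by omega) h4 (by norm_num) hM'
  have hb := ag_bb.cut (m' := m) (N' := M) (by omega) h4 (by norm_num) hM'
  exact Ag.mul hB (Ag.mul hB (hK.pow h2 hM hB i) (hb.pow h2 hM hB l))
    (Ag.mul hB ((ag_Hh hs hm hM hB hK hb).pow h2 hM hB s) (Ag.polS h2 hM hB hK hb p hp))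

lemma W_pow {f : ℤ⟦X⟧} {d : ℕ} (hf : f ∈ W d) (n : ℕ) : f ^ n ∈ W (d * n) := by
  induction n with
  | zero => simpa using W_mono 0 0
  | succ n ih => rw [pow_succ]; exact W_mul' (by ring) ih hf

lemma chk {m N k e d d' : ℕ} (hs : List ℕ) (i l s : ℕ) (p : List ℕ) (i' l' t : ℕ) (p' : List ℕ)
    (h : ckd m N hs i l s p i' l' t p')
    (hm : (m = 7 ∧ hs = hs7) ∨ (m = 49 ∧ hs = hs49)) (hk : m = 7 ^ k)
    (hN : e + 1 ≤ N) (hN' : N ≤ 40) (hp : ∀ c ∈ p, c < m) (hp' : ∀ c ∈ p', c < m)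
    (hd : p.length = d + 1) (hd' : p'.length = d' + 1) (he : i + l + (3 * s + d) = e)
    (he' : i' + l' + (3 * t + d') = e) (hke : k + 1 ≤ 4 * e) :
    E7 k (U7 (kap ^ i * bb ^ l * (Hh ^ s * polS p))) (kap ^ i' * bb ^ l' * (Hh ^ t * polS p')) := by
  have m49 : m ≤ 49 := by rcases hm with ⟨rfl, rfl⟩ | ⟨rfl, rfl⟩ <;> norm_num
  have hmB : m ≤ BB := m49.trans (by norm_num)
  refine Ucheck (e := e) (W_mul' he (W_mono i l) (W_mul (W_pow Hh_W s) (polS_W p d hd)))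
    (W_mul' he' (W_mono i' l') (W_mul (W_pow Hh_W t) (polS_W p' d' hd'))) hke ?_
  have a := (ag_ev hs hm (M := 7 * N) (by omega) (by omega) i l s p hp).U7 hmB
  have b := ag_ev hs hm (M := N) (by omega) (by omega) i' l' t p' hp'
  unfold ckd at h
  rw [h] at a
  intro n hn
  have := a.dvd hmB b n (by omega)
  rw [hk] at this
  exact_mod_cast this

lemma Hh1 : E7 1 Hh 1 := by
  rw [← hh4]; simpa using hh1.pow 4

lemma chk7 {i l i' l' t : ℕ} {p' : List ℕ} (h : ck7 i l i' l' t p')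
    (hN : i + l + 1 ≤ 19) (hp' : ∀ c ∈ p', c < 7)
    (he' : i' + l' + (3 * t + p'.length) = i + l + 1) (hl : 1 ≤ p'.length) (hke : 1 ≤ i + l) :
    E7 1 (U7 (kap ^ i * bb ^ l)) (kap ^ i' * bb ^ l' * polS p') := by
  have := chk (e := i + l) (k := 1) (d := 0) (d' := p'.length - 1) hs7 i l 0 [1] i' l' t p' h
    (Or.inl ⟨rfl, rfl⟩) rfl hN (by norm_num)
    (by decide) hp' rfl (by omega) (by omega) (by omega) (by omega)
  have e : Hh ^ 0 * polS [1] = 1 := by simp [polS]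
  rw [e, mul_one] at this
  refine this.trans (E7.mulL _ ?_)
  simpa using ((Hh1.pow t).mulR (polS p'))

end

section
open PowerSeries Finset

lemma JJ (b : ℕ) (hb : b ≠ 0) {p q p' q' : ℕ} (h : p + q' = p' + q) :
    J b ^ p * Ji b ^ q = J b ^ p' * Ji b ^ q' := by
  have e : ∀ n, J b ^ n * Ji b ^ n = 1 := fun n => by rw [← mul_pow, J_Ji b hb, one_pow]
  calc J b ^ p * Ji b ^ q = J b ^ p * Ji b ^ q * (J b ^ q' * Ji b ^ q') := by rw [e, mul_one]
    _ = J b ^ (p + q') * Ji b ^ q * Ji b ^ q' := by ring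
    _ = J b ^ p' * Ji b ^ q' * (J b ^ q * Ji b ^ q) := by rw [h]; ring
    _ = _ := by rw [e, mul_one]

lemma kb {m n A A' B B' : ℕ} (h1 : 16 * m + A' = A + 8 * n) (h2 : 16 * n + B' = B + 8 * m) :
    kap ^ m * bb ^ n = PowerSeries.X ^ n * (J 1 ^ A * Ji 1 ^ A') * (J 2 ^ B * Ji 2 ^ B') := by
  rw [← JJ 1 one_ne_zero h1, ← JJ 2 two_ne_zero h2, kap, bb]
  ring

def Psi (f : ℤ⟦X⟧) : ℤ⟦X⟧ := J 1 ^ 16 * Ji 2 ^ 5 * U7 (PowerSeries.X ^ 2 * J 2 ^ 3 * f)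

def Phi (f : ℤ⟦X⟧) : ℤ⟦X⟧ :=
  Ji 2 ^ 3 * PowerSeries.mk fun n => coeff (7 * n + 2) (J 2 ^ 5 * Ji 1 ^ 16 * f)

lemma X_Phi (f : ℤ⟦X⟧) : U7 (PowerSeries.X ^ 5 * (J 2 ^ 5 * Ji 1 ^ 16 * f))
    = PowerSeries.X * (J 2 ^ 3 * Phi f) := by
  rw [Phi, ← mul_assoc (J 2 ^ 3), ← mul_pow, J_Ji 2 two_ne_zero, one_pow, one_mul]
  ext n
  rw [U7_coeff, coeff_X_pow_mul']
  rcases n with _ | n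
  · simp
  · rw [if_pos (by omega), coeff_succ_X_mul, coeff_mk]
    congr 2

lemma Psi_add (f g : ℤ⟦X⟧) : Psi (f + g) = Psi f + Psi g := by
  simp only [Psi, mul_add, U7_add]
lemma Psi_C (a : ℤ) (g : ℤ⟦X⟧) : Psi (C a * g) = C a * Psi g := by
  rw [Psi, mul_left_comm, U7_Cmul, mul_left_comm]; rfl
lemma Phi_add (f g : ℤ⟦X⟧) : Phi (f + g) = Phi f + Phi g := by
  simp only [Phi, mul_add, map_add]
  rw [← mul_add]
  rfl
lemma Phi_C (a : ℤ) (g : ℤ⟦X⟧) : Phi (C a * g) = C a * Phi g := by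
  have e : (PowerSeries.mk fun n => coeff (7 * n + 2) (J 2 ^ 5 * Ji 1 ^ 16 * (C a * g)))
      = C a * PowerSeries.mk fun n => coeff (7 * n + 2) (J 2 ^ 5 * Ji 1 ^ 16 * g) := by
    ext n
    rw [coeff_mk, coeff_C_mul, coeff_mk, mul_left_comm, coeff_C_mul]
  rw [Phi, e, Phi, mul_left_comm]

lemma E7.cancelX {i a : ℕ} {f g : ℤ⟦X⟧} (h : E7 i (PowerSeries.X ^ a * f) (PowerSeries.X ^ a * g)) :
    E7 i f g := by
  rw [E7, seven_coeff] at *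
  intro n
  have := h (n + a)
  rwa [← mul_sub, coeff_X_pow_mul] at this

lemma E7.cancelkb {i c a : ℕ} {f g : ℤ⟦X⟧} (h : E7 i (kap ^ c * bb ^ a * f) (kap ^ c * bb ^ a * g)) :
    E7 i f g := by
  have e0 : ∀ f : ℤ⟦X⟧, kap ^ c * bb ^ a * f = PowerSeries.X ^ a *
      (((J 1 ^ (16 * c) * Ji 1 ^ (8 * a)) * (J 2 ^ (16 * a) * Ji 2 ^ (8 * c))) * f) := fun f => by
    rw [kb (A := 16 * c) (A' := 8 * a) (B := 16 * a) (B' := 8 * c) (by omega) (by omega)]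
    ring
  rw [e0, e0] at h
  refine E7.cancel (k := (J 1 ^ (16 * c) * Ji 1 ^ (8 * a)) * (J 2 ^ (16 * a) * Ji 2 ^ (8 * c)))
    (k' := (Ji 1 ^ (16 * c) * J 1 ^ (8 * a)) * (Ji 2 ^ (16 * a) * J 2 ^ (8 * c))) ?_ ?_
  · have e1 : J 1 * Ji 1 = 1 := J_Ji 1 one_ne_zero
    have e2 : J 2 * Ji 2 = 1 := J_Ji 2 two_ne_zero
    calc _ = (J 1 * Ji 1) ^ (16 * c + 8 * a) * (J 2 * Ji 2) ^ (16 * a + 8 * c) := by ring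
      _ = 1 := by rw [e1, e2]; simp
  · exact h.cancelX

lemma raw_aux (g : ℤ⟦X⟧) (j a x y : ℕ) :
    E7 (j + 1) (U7 (PowerSeries.X ^ (7 * a) * J 1 ^ (7 * (7 ^ j * x)) * J 2 ^ (7 * (7 ^ j * y)) * g))
      (PowerSeries.X ^ a * J 1 ^ (7 ^ j * x) * J 2 ^ (7 ^ j * y) * U7 g) := by
  rw [← U7_x7]
  refine E7.U7 (E7.mulR _ ?_)
  rw [map_mul, map_mul]
  refine ((E7.of_eq ?_).mul (frob' _ _ _)).mul (frob' _ _ _)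
  rw [map_pow, x7, expand_X, pow_mul]

lemma Psi_raw {j a c x y : ℕ} (f : ℤ⟦X⟧) (h1 : 16 * c = 7 ^ j * x + 8 * a)
    (h2 : 16 * a + 3 = 7 ^ j * y + 8 * c) :
    E7 (j + 1) (kap * U7 (kap ^ (7 * c + 1) * bb ^ (7 * a + 2) * f)) (kap ^ c * bb ^ a * Psi f) := by
  have e1 : kap ^ (7 * c + 1) * bb ^ (7 * a + 2) * f = PowerSeries.X ^ (7 * a) *
      J 1 ^ (7 * (7 ^ j * x)) * J 2 ^ (7 * (7 ^ j * y)) * (PowerSeries.X ^ 2 * J 2 ^ 3 * f) := by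
    rw [kb (A := 7 * (7 ^ j * x)) (A' := 0) (B := 7 * (7 ^ j * y) + 3) (B' := 0) (by omega) (by omega)]
    ring
  rw [e1]
  refine ((raw_aux _ j a x y).mulL _).trans (E7.of_eq ?_)
  rw [Psi]
  have k0 : kap = J 1 ^ 16 * Ji 2 ^ 8 := rfl
  have e2 : kap ^ c * bb ^ a * Ji 2 ^ 5 = PowerSeries.X ^ a * J 1 ^ (7 ^ j * x) *
      (J 2 ^ (7 ^ j * y) * Ji 2 ^ 8) := by
    rw [kb (A := 7 ^ j * x) (A' := 0) (B := 7 ^ j * y) (B' := 3) (by omega) (by omega)]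
    ring
  calc _ = (PowerSeries.X ^ a * J 1 ^ (7 ^ j * x) * (J 2 ^ (7 ^ j * y) * Ji 2 ^ 8)) *
        (J 1 ^ 16 * U7 (PowerSeries.X ^ 2 * J 2 ^ 3 * f)) := by rw [k0]; ring
    _ = _ := by rw [← e2]; ring

lemma Phi_raw {j a c x y : ℕ} (f : ℤ⟦X⟧) (h1 : 16 * c + 8 = 7 ^ j * x + 8 * a)
    (h2 : 16 * a + 5 = 7 ^ j * y + 8 * c) :
    E7 (j + 1) (U7 (kap ^ (7 * c + 5) * bb ^ (7 * a + 5) * f))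
      (kap ^ (c + 1) * bb ^ (a + 1) * Phi f) := by
  have e1 : kap ^ (7 * c + 5) * bb ^ (7 * a + 5) * f = PowerSeries.X ^ (7 * a) *
      J 1 ^ (7 * (7 ^ j * x)) * J 2 ^ (7 * (7 ^ j * y)) *
      (PowerSeries.X ^ 5 * (J 2 ^ 5 * Ji 1 ^ 16 * f)) := by
    rw [kb (A := 7 * (7 ^ j * x)) (A' := 16) (B := 7 * (7 ^ j * y) + 5) (B' := 0) (by omega) (by omega)]
    ring
  rw [e1]
  refine (raw_aux _ j a x y).trans (E7.of_eq ?_)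
  rw [X_Phi, kb (A := 7 ^ j * x) (A' := 0) (B := 7 ^ j * y + 3) (B' := 0) (by omega) (by omega)]
  ring

/-- approximate membership -/
def Cl (s d i : ℕ) (f : ℤ⟦X⟧) : Prop := ∃ w ∈ W d, E7 i (hh ^ s * f) w

lemma Cl.add {s d i : ℕ} {f g : ℤ⟦X⟧} (h : Cl s d i f) (h' : Cl s d i g) : Cl s d i (f + g) := by
  obtain ⟨w, m, e⟩ := h
  obtain ⟨w', m', e'⟩ := h'
  exact ⟨w + w', W_add m m', by rw [mul_add]; exact e.add e'⟩

lemma Cl.C {s d i : ℕ} {f : ℤ⟦X⟧} (a : ℤ) (h : Cl s d i f) : Cl s d i (C a * f) := by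
  obtain ⟨w, m, e⟩ := h
  exact ⟨_, W_Cmul a m, by rw [mul_left_comm]; exact e.mulL _⟩

lemma Cl.congr {s d i : ℕ} {f g : ℤ⟦X⟧} (h : Cl s d i f) (e : E7 i g f) : Cl s d i g := by
  obtain ⟨w, m, e'⟩ := h
  exact ⟨w, m, (e.mulL _).trans e'⟩

lemma Cl.mono {s d i i' : ℕ} {f : ℤ⟦X⟧} (h : Cl s d i f) (hi : i' ≤ i) : Cl s d i' f := by
  obtain ⟨w, m, e⟩ := h
  exact ⟨w, m, e.mono hi⟩

lemma Cl.up {s d i : ℕ} {f : ℤ⟦X⟧} (h : Cl s d i f) (k : ℕ) : Cl (s + 4 * k) (d + 3 * k) i f := by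
  obtain ⟨w, m, e⟩ := h
  refine ⟨Hh ^ k * w, W_mul' (by ring) (W_pow Hh_W k) m, ?_⟩
  rw [pow_add, pow_mul, hh4, mul_comm (hh ^ s), mul_assoc]
  exact e.mulL _

lemma Cl.seven {s d i : ℕ} {f : ℤ⟦X⟧} (h : Cl s d i f) : Cl s d (i + 1) (7 * f) := by
  obtain ⟨w, m, e⟩ := h
  refine ⟨PowerSeries.C 7 * w, W_Cmul _ m, ?_⟩
  rw [mul_left_comm]
  exact e.seven

lemma Cl.of_seven {s d i : ℕ} {f : ℤ⟦X⟧} (h : Cl s d (i + 1) (7 * f)) : Cl s d i f := by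
  obtain ⟨w, m, e⟩ := h
  rw [mul_left_comm] at e
  have e1 : (7 : ℤ⟦X⟧) ^ 1 ∣ w := by
    have := e.symm.mono (show 1 ≤ i + 1 by omega)
    rw [E7] at this
    have h2 := dvd_add this (show (7 : ℤ⟦X⟧) ^ 1 ∣ 7 * (hh ^ s * f) by rw [pow_one]; exact dvd_mul_right _ _)
    rwa [sub_add_cancel] at h2
  obtain ⟨w', m', rfl⟩ := W_sat (m := 7) m (by
    intro n _
    have := (seven_coeff 1 w).1 e1 n
    simpa using this)
  exact ⟨w', m', e.of_seven⟩

lemma hh_one (j k : ℕ) : E7 (j + 1) (hh ^ (7 ^ j * k)) 1 := by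
  have := (hh1.lift j).pow k
  rw [pow_mul]; simpa using this

lemma Cl.free {j r s' d : ℕ} {f : ℤ⟦X⟧} (h : Cl (7 ^ j * r) d (j + 1) f) (hs : 7 ^ j ∣ s') :
    Cl s' d (j + 1) f := by
  obtain ⟨w, m, e⟩ := h
  obtain ⟨k, rfl⟩ := hs
  have a := (hh_one j k).mulR f
  have b := (hh_one j r).mulR f
  exact ⟨w, m, a.trans (b.symm.trans e)⟩

lemma Cl.zero_s {j s d : ℕ} {f w : ℤ⟦X⟧} (m : w ∈ W d) (e : E7 (j + 1) f w) (hs : 7 ^ j ∣ s) :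
    Cl s d (j + 1) f :=
  Cl.free (r := 0) ⟨w, m, by simpa using e⟩ hs

lemma Cl.get {j r s d e : ℕ} {f : ℤ⟦X⟧} (h : Cl s d (j + 1) f) (hs : s + 4 * e = 7 ^ j * r) :
    ∃ w ∈ W (d + 3 * e), E7 (j + 1) f w := by
  have := h.up e
  rw [hs] at this
  obtain ⟨w, m, e⟩ := this.free (dvd_zero _)
  exact ⟨w, m, by simpa using e⟩

lemma Psi_Cl {j a c x y s d e r s' d' : ℕ} {f : ℤ⟦X⟧} (h1 : 16 * c = 7 ^ j * x + 8 * a)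
    (h2 : 16 * a + 3 = 7 ^ j * y + 8 * c) (hy : 1 ≤ y) (h : Cl s d (j + 1) f)
    (hs : s + 4 * e = 7 ^ j * r) (hs' : 7 ^ j ∣ s') (hd : d' = d + 3 * e + 6 * c + 6 * a + 4) :
    Cl s' d' (j + 1) (Psi f) := by
  obtain ⟨w, m, e1⟩ := h.get hs
  have hj : j < 7 ^ j * y := (Nat.lt_pow_self (by norm_num)).trans_le (Nat.le_mul_of_pos_right _ hy)
  obtain ⟨w', m', e2⟩ := U_W (v := 7 * c + 1) (u := 7 * a + 2) (v' := c) (u' := a)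
    (e' := d + 3 * e + 6 * c + 6 * a + 3) (j := j + 1) m (by omega) (by omega) (by omega) (by omega)
  have e3 := Psi_raw f h1 h2
  have e4 := ((e1.mulL (kap ^ (7 * c + 1) * bb ^ (7 * a + 2))).U7.trans e2).mulL kap
  refine Cl.zero_s (w := kap * w') (W_mul' (by omega) kap_W m') (E7.cancelkb (c := c) (a := a) ?_) hs'
  refine e3.symm.trans (e4.trans (E7.of_eq ?_))
  ring

lemma Phi_Cl {j a c x y s d e r s' d' : ℕ} {f : ℤ⟦X⟧} (h1 : 16 * c + 8 = 7 ^ j * x + 8 * a)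
    (h2 : 16 * a + 5 = 7 ^ j * y + 8 * c) (hy : 1 ≤ y) (h : Cl s d (j + 1) f)
    (hs : s + 4 * e = 7 ^ j * r) (hs' : 7 ^ j ∣ s') (hd : d' = d + 3 * e + 6 * c + 6 * a + 8) :
    Cl s' d' (j + 1) (Phi f) := by
  obtain ⟨w, m, e1⟩ := h.get hs
  have hj : j < 7 ^ j * y := (Nat.lt_pow_self (by norm_num)).trans_le (Nat.le_mul_of_pos_right _ hy)
  obtain ⟨w', m', e2⟩ := U_W (v := 7 * c + 5) (u := 7 * a + 5) (v' := c + 1) (u' := a + 1)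
    (e' := d + 3 * e + 6 * c + 6 * a + 8) (j := j + 1) m (by omega) (by omega) (by omega) (by omega)
  have e3 := Phi_raw f h1 h2
  have e4 := (e1.mulL (kap ^ (7 * c + 5) * bb ^ (7 * a + 5))).U7.trans e2
  exact Cl.zero_s (w := w') (hd ▸ m') (E7.cancelkb (e3.symm.trans e4)) hs'

lemma pow7 (j : ℕ) : ∃ q, 7 ^ j = 48 * q + 1 ∨ 7 ^ j = 48 * q + 7 := by
  induction j with
  | zero => exact ⟨0, by simp⟩
  | succ j ih =>
    obtain ⟨q, h | h⟩ := ih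
    · exact ⟨7 * q, Or.inr (by rw [pow_succ, h]; ring)⟩
    · exact ⟨7 * q + 1, Or.inl (by rw [pow_succ, h]; ring)⟩

lemma ex_ceil (n P : ℕ) (hP : 0 < P) : ∃ ρ, n ≤ P * ρ ∧ P * ρ < n + P := by
  refine ⟨(n + P - 1) / P, ?_, ?_⟩
  · have := Nat.lt_mul_div_succ (n + P - 1) hP
    rw [mul_add, mul_one] at this; omega
  · have := Nat.mul_div_le (n + P - 1) P
    omega

lemma Cl.up' {s d i s' d' k : ℕ} {f : ℤ⟦X⟧} (h : Cl s d i f) (hs : s' = s + 4 * k)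
    (hd : d' = d + 3 * k) : Cl s' d' i f := by subst hs hd; exact h.up k

lemma Psi_V {j n N : ℕ} {f : ℤ⟦X⟧} (h : Cl (4 * n + 5) (3 * n + 2) (j + 1) f)
    (hN : n + 5 * 7 ^ j ≤ N) : Cl (4 * N) (3 * N) (j + 1) (Psi f) := by
  obtain ⟨ρ, r1, r2⟩ := ex_ceil (n + 1) (7 ^ j) (by positivity)
  obtain ⟨q, hq | hq⟩ := pow7 j
  · have := Psi_Cl (a := 12 * q) (c := 6 * q) (x := 0) (y := 3) (e := 7 ^ j * ρ - n - 1 + 12 * q)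
      (r := 4 * ρ + 1) (s' := 4 * (7 ^ j * (ρ + 1))) (d' := 3 * (7 ^ j * (ρ + 1)))
      (by omega) (by omega) (by omega) h (by rw [show 7 ^ j * (4 * ρ + 1) = 4 * (7 ^ j * ρ) + 7 ^ j by ring]; omega)
      (Dvd.dvd.mul_left (Dvd.intro _ rfl) _) (by rw [mul_add, mul_one]; omega)
    refine this.up' (k := N - 7 ^ j * (ρ + 1)) ?_ ?_ <;> rw [mul_add, mul_one] <;> omega
  · have := Psi_Cl (a := 36 * q + 5) (c := 42 * q + 6) (x := 8) (y := 5) (e := 7 ^ j * ρ - n + 36 * q + 4)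
      (r := 4 * ρ + 3) (s' := 4 * (7 ^ j * (ρ + 4))) (d' := 3 * (7 ^ j * (ρ + 4)))
      (by omega) (by omega) (by omega) h (by rw [show 7 ^ j * (4 * ρ + 3) = 4 * (7 ^ j * ρ) + 3 * 7 ^ j by ring]; omega)
      (Dvd.dvd.mul_left (Dvd.intro _ rfl) _) (by rw [mul_add]; omega)
    refine this.up' (k := N - 7 ^ j * (ρ + 4)) ?_ ?_ <;> rw [mul_add] <;> omega

lemma Phi_O {j n N : ℕ} {f : ℤ⟦X⟧} (h : Cl (4 * n) (3 * n) (j + 1) f)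
    (hN : n + 5 * 7 ^ j ≤ N) : Cl (4 * N + 5) (3 * N + 2) (j + 1) (Phi f) := by
  obtain ⟨ρ, r1, r2⟩ := ex_ceil n (7 ^ j) (by positivity)
  obtain ⟨q, hq | hq⟩ := pow7 j
  · have := Phi_Cl (a := 36 * q) (c := 42 * q) (x := 8) (y := 5) (e := 7 ^ j * ρ - n)
      (r := 4 * ρ) (s' := 7 ^ j * (4 * ρ + 13)) (d' := 3 * (7 ^ j * ρ) + 468 * q + 8)
      (by omega) (by omega) (by omega) h (by rw [mul_left_comm]; omega)
      (Dvd.intro _ rfl) (by omega)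
    refine this.up' (k := N - (7 ^ j * ρ + 156 * q + 2)) ?_ ?_
    · rw [mul_add, mul_left_comm]; omega
    · omega
  · have := Phi_Cl (a := 12 * q + 1) (c := 6 * q) (x := 0) (y := 3) (e := 7 ^ j * ρ - n)
      (r := 4 * ρ) (s' := 7 ^ j * (4 * ρ + 3)) (d' := 3 * (7 ^ j * ρ) + 108 * q + 14)
      (by omega) (by omega) (by omega) h (by rw [mul_left_comm]; omega)
      (Dvd.intro _ rfl) (by omega)
    refine this.up' (k := N - (7 ^ j * ρ + 36 * q + 4)) ?_ ?_
    · rw [mul_add, mul_left_comm]; omega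
    · omega

end

section
open PowerSeries Finset

attribute [local irreducible] ckd

lemma pull {I L i1 i0 l1 l0 : ℕ} (hI : I = 7 * i1 + i0) (hL : L = 7 * l1 + l0) :
    E7 1 (U7 (kap ^ I * bb ^ L)) (kap ^ i1 * bb ^ l1 * U7 (kap ^ i0 * bb ^ l0)) := by
  subst hI hL
  rw [← U7_x7]
  refine E7.U7 ?_
  have e : kap ^ (7 * i1 + i0) * bb ^ (7 * l1 + l0)
      = ((kap ^ 7) ^ i1 * (bb ^ 7) ^ l1) * (kap ^ i0 * bb ^ l0) := by ring
  rw [e, map_mul, map_pow, map_pow]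
  exact E7.mulR _ (((frob kap).pow i1).mul ((frob bb).pow l1))

lemma U_lin (S : Submodule ℤ ℤ⟦X⟧) {d : ℕ} (k0 k1 K : ℤ⟦X⟧)
    (H : ∀ I L, I + L = d → ∃ w ∈ S, E7 1 (k1 * U7 (k0 * (kap ^ I * bb ^ L))) (K * w))
    {f : ℤ⟦X⟧} (hf : f ∈ W d) : ∃ w ∈ S, E7 1 (k1 * U7 (k0 * f)) (K * w) := by
  induction hf using Submodule.span_induction with
  | mem f h =>
    obtain ⟨I, L, h, rfl⟩ := h
    exact H I L h
  | zero => exact ⟨0, Submodule.zero_mem _, E7.of_eq (by rw [mul_zero, mul_zero, U7_zero, mul_zero])⟩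
  | add x y _ _ h1 h2 =>
    obtain ⟨w, m, e⟩ := h1
    obtain ⟨w', m', e'⟩ := h2
    refine ⟨w + w', Submodule.add_mem _ m m', ?_⟩
    rw [mul_add, U7_add, mul_add, mul_add]
    exact e.add e'
  | smul a x _ h =>
    obtain ⟨w, m, e⟩ := h
    refine ⟨a • w, Submodule.smul_mem _ _ m, ?_⟩
    rw [zsm, zsm, mul_left_comm, U7_Cmul, mul_left_comm, mul_left_comm K]
    exact e.mulL _

lemma base_Psi {i l : ℕ} (hi : i < 7) (hl : l < 7) (h : i + l = 4 ∨ i + l = 11) :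
    ∃ w ∈ W ((i + l) / 4 - (i + l) / 11 + (i + l) / 11), E7 1 (U7 (kap ^ i * bb ^ l)) w := by
  have key : ∀ t p', ck7 i l 0 0 t p' → (∀ c ∈ p', c < 7) →
      0 + 0 + (3 * t + p'.length) = i + l + 1 → 1 ≤ p'.length → p'.length = (i + l) / 4 + 1 →
      ∃ w ∈ W ((i + l) / 4 - (i + l) / 11 + (i + l) / 11), E7 1 (U7 (kap ^ i * bb ^ l)) w := by
    intro t p' h1 h2 h3 h4 h5
    have := chk7 h1 (by omega) h2 h3 h4 (by omega)
    exact ⟨_, polS_W p' _ (by omega), this.trans (E7.of_eq (by rw [pow_zero, pow_zero, one_mul, one_mul]))⟩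
  obtain ⟨⟨k1, k2, k3, k4, k5, k6, k7⟩, -⟩ := kerA
  have : (i = 4 ∧ l = 0) ∨ (i = 3 ∧ l = 1) ∨ (i = 2 ∧ l = 2) ∨ (i = 1 ∧ l = 3) ∨ (i = 0 ∧ l = 4) ∨
    (i = 5 ∧ l = 6) ∨ (i = 6 ∧ l = 5) := by omega
  rcases this with ⟨rfl, rfl⟩ | ⟨rfl, rfl⟩ | ⟨rfl, rfl⟩ | ⟨rfl, rfl⟩ | ⟨rfl, rfl⟩ | ⟨rfl, rfl⟩ | ⟨rfl, rfl⟩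
  · exact key _ _ k1 (by decide) rfl (by decide) rfl
  · exact key _ _ k2 (by decide) rfl (by decide) rfl
  · exact key _ _ k3 (by decide) rfl (by decide) rfl
  · exact key _ _ k4 (by decide) rfl (by decide) rfl
  · exact key _ _ k5 (by decide) rfl (by decide) rfl
  · exact key _ _ k6 (by decide) rfl (by decide) rfl
  · exact key _ _ k7 (by decide) rfl (by decide) rfl

lemma base_Phi {i l : ℕ} (hi : i < 7) (hl : l < 7) (h : i + l = 1 ∨ i + l = 8) :
    ∃ w ∈ W ((i + l) / 8), E7 1 (U7 (kap ^ (5 + i) * bb ^ (5 + l))) (kap ^ 1 * bb ^ 1 * w) := by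
  have key : ∀ a b t p', ck7 a b 1 1 t p' → a = 5 + i → b = 5 + l → (∀ c ∈ p', c < 7) →
      1 + 1 + (3 * t + p'.length) = a + b + 1 → 1 ≤ p'.length → p'.length = (i + l) / 8 + 1 →
      ∃ w ∈ W ((i + l) / 8), E7 1 (U7 (kap ^ (5 + i) * bb ^ (5 + l))) (kap ^ 1 * bb ^ 1 * w) := by
    intro a b t p' h1 ha hb h2 h3 h4 h5
    subst ha hb
    have := chk7 h1 (by omega) h2 h3 h4 (by omega)
    exact ⟨_, polS_W p' _ (by omega), this⟩
  obtain ⟨-, ⟨k1, k2, k3, k4, k5, k6, k7⟩, -⟩ := kerA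
  have : (i = 0 ∧ l = 1) ∨ (i = 1 ∧ l = 0) ∨ (i = 2 ∧ l = 6) ∨ (i = 3 ∧ l = 5) ∨ (i = 4 ∧ l = 4) ∨
    (i = 5 ∧ l = 3) ∨ (i = 6 ∧ l = 2) := by omega
  rcases this with ⟨rfl, rfl⟩ | ⟨rfl, rfl⟩ | ⟨rfl, rfl⟩ | ⟨rfl, rfl⟩ | ⟨rfl, rfl⟩ | ⟨rfl, rfl⟩ | ⟨rfl, rfl⟩
  · exact key _ _ _ _ k1 rfl rfl (by decide) rfl (by decide) rfl
  · exact key _ _ _ _ k2 rfl rfl (by decide) rfl (by decide) rfl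
  · exact key _ _ _ _ k3 rfl rfl (by decide) rfl (by decide) rfl
  · exact key _ _ _ _ k4 rfl rfl (by decide) rfl (by decide) rfl
  · exact key _ _ _ _ k5 rfl rfl (by decide) rfl (by decide) rfl
  · exact key _ _ _ _ k6 rfl rfl (by decide) rfl (by decide) rfl
  · exact key _ _ _ _ k7 rfl rfl (by decide) rfl (by decide) rfl

lemma Psi_mod7 (f : ℤ⟦X⟧) : E7 1 (kap * U7 (kap ^ 1 * bb ^ 2 * f)) (Psi f) := by
  have := Psi_raw (j := 0) (a := 0) (c := 0) (x := 0) (y := 3) f (by norm_num) (by norm_num)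
  simpa using this

lemma Phi_mod7 (f : ℤ⟦X⟧) : E7 1 (U7 (kap ^ 5 * bb ^ 5 * f)) (kap ^ 1 * bb ^ 1 * Phi f) := by
  have := Phi_raw (j := 0) (a := 0) (c := 0) (x := 8) (y := 5) f (by norm_num) (by norm_num)
  simpa only [mul_zero, zero_add] using this

lemma drop_Psi {n N : ℕ} {f : ℤ⟦X⟧} (hN : n + 5 ≤ 7 * N) (h : Cl (4 * n + 5) (3 * n + 2) 1 f) :
    Cl (4 * N + 0) (3 * N + 0) 1 (Psi f) := by
  obtain ⟨w, m, e⟩ := Cl.get (j := 0) (e := 7 * N - 5 - n) (r := 4 * n + 5 + 4 * (7 * N - 5 - n)) h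
    (by rw [pow_zero, one_mul])
  obtain ⟨w', m', e'⟩ := U_lin (W (3 * N - 1)) (kap ^ 1 * bb ^ 2) 1 1 (by
    intro I L hIL
    have e0 : kap ^ 1 * bb ^ 2 * (kap ^ I * bb ^ L) = kap ^ (I + 1) * bb ^ (L + 2) := by ring
    rw [e0]
    have p := pull (I := I + 1) (L := L + 2) (i1 := (I + 1) / 7) (i0 := (I + 1) % 7) (l1 := (L + 2) / 7)
      (l0 := (L + 2) % 7) (by omega) (by omega)
    obtain ⟨v, mv, ev⟩ := base_Psi (i := (I + 1) % 7) (l := (L + 2) % 7) (Nat.mod_lt _ (by norm_num))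
      (Nat.mod_lt _ (by norm_num)) (by omega)
    refine ⟨kap ^ ((I + 1) / 7) * bb ^ ((L + 2) / 7) * v, W_mul' (by omega) (W_mono _ _) mv, ?_⟩
    rw [one_mul, one_mul]
    exact p.trans (ev.mulL _)) m
  rw [one_mul, one_mul] at e'
  refine Cl.zero_s (j := 0) (w := kap * w') (W_mul' (by omega) kap_W m') ?_ (by simp)
  exact (Psi_mod7 f).symm.trans (((e.mulL _).U7.trans e').mulL _)

lemma drop_Phi {n N : ℕ} {f : ℤ⟦X⟧} (hN : n ≤ 7 * N + 5) (h : Cl (4 * n + 0) (3 * n + 0) 1 f) :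
    Cl (4 * N + 5) (3 * N + 2) 1 (Phi f) := by
  obtain ⟨w, m, e⟩ := Cl.get (j := 0) (e := 7 * N + 5 - n) (r := 4 * n + 0 + 4 * (7 * N + 5 - n)) h
    (by rw [pow_zero, one_mul])
  obtain ⟨w', m', e'⟩ := U_lin (W (3 * N + 2)) (kap ^ 5 * bb ^ 5) 1 (kap ^ 1 * bb ^ 1) (by
    intro I L hIL
    have e0 : kap ^ 5 * bb ^ 5 * (kap ^ I * bb ^ L) = kap ^ (I + 5) * bb ^ (L + 5) := by ring
    rw [e0]
    have p := pull (I := I + 5) (L := L + 5) (i1 := I / 7) (i0 := 5 + I % 7) (l1 := L / 7)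
      (l0 := 5 + L % 7) (by omega) (by omega)
    obtain ⟨v, mv, ev⟩ := base_Phi (i := I % 7) (l := L % 7) (Nat.mod_lt _ (by norm_num))
      (Nat.mod_lt _ (by norm_num)) (by omega)
    refine ⟨kap ^ (I / 7) * bb ^ (L / 7) * v, W_mul' (by omega) (W_mono _ _) mv, ?_⟩
    rw [one_mul, mul_left_comm]
    exact p.trans (ev.mulL _)) m
  rw [one_mul] at e'
  refine Cl.zero_s (j := 0) (w := w') m' ?_ (by simp)
  exact E7.cancelkb ((Phi_mod7 f).symm.trans ((e.mulL _).U7.trans e'))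

lemma exists_hi : ∃ g : ℤ⟦X⟧, g * hh = 1 := by
  have h1 : constantCoeff hh ^ 4 = 1 := by
    rw [← map_pow, hh4, Hh_polS, kap, bb]
    have hj : ∀ b : ℕ, b ≠ 0 → constantCoeff (Ji b) = 1 := fun b hb => by
      have := congrArg constantCoeff (J_Ji b hb)
      rwa [map_mul, J_const b hb, one_mul, map_one] at this
    simp [J_const, hj]
  have : IsUnit hh := by
    rw [PowerSeries.isUnit_iff_constantCoeff]
    exact IsUnit.of_pow_eq_one h1 (by norm_num)
  obtain ⟨u, hu⟩ := this
  exact ⟨↑u⁻¹, by rw [← hu]; simp⟩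

def hi : ℤ⟦X⟧ := exists_hi.choose
lemma hi_hh : hi * hh = 1 := exists_hi.choose_spec

lemma Cl_exact {d : ℕ} {w : ℤ⟦X⟧} (s i : ℕ) (hw : w ∈ W d) : Cl s d i (hi ^ s * w) :=
  ⟨w, hw, E7.of_eq (by rw [← mul_assoc, ← mul_pow, mul_comm hh, hi_hh, one_pow, one_mul])⟩

lemma op_gen (F : ℤ⟦X⟧ → ℤ⟦X⟧) (hadd : ∀ f g, F (f + g) = F f + F g) (h7 : ∀ a f, F (C a * f) = C a * F f)
    (D : ℕ → ℕ → Prop) (s0 d0 s1 d1 : ℕ)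
    (hdrop : ∀ n N f, D n N → Cl (4 * n + s0) (3 * n + d0) 1 f → Cl (4 * N + s1) (3 * N + d1) 1 (F f))
    (hrule : ∀ j n N f, Cl (4 * n + s0) (3 * n + d0) (j + 1) f → n + 5 * 7 ^ j ≤ N →
      Cl (4 * N + s1) (3 * N + d1) (j + 1) (F f)) :
    ∀ (i : ℕ) (o : ℕ → ℕ) (f : ℤ⟦X⟧) (N : ℕ), Monotone o →
      (∀ l ≤ i, Cl (4 * o l + s0) (3 * o l + d0) (l + 1) f) → D (o i) N →
      (∀ l < i, o l + 5 * 7 ^ (i - l) ≤ N) → Cl (4 * N + s1) (3 * N + d1) (i + 1) (F f) := by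
  intro i
  induction i with
  | zero => intro o f N _ h hD _; exact hdrop _ _ _ hD (h 0 le_rfl)
  | succ i ih =>
    intro o f N ho h hD hr
    obtain ⟨w, m, e⟩ := h 0 (by omega)
    have x0 := fun i => Cl_exact (4 * o 0 + s0) i m
    set x := hi ^ (4 * o 0 + s0) * w with hx
    have e1 : E7 1 f x := by
      have := e.mulL (hi ^ (4 * o 0 + s0))
      rwa [← mul_assoc, ← mul_pow, hi_hh, one_pow, one_mul] at this
    obtain ⟨f', hf⟩ := e1
    rw [pow_one] at hf
    have hf1 : 7 * f' = f + C (-1) * x := by rw [← hf]; simp [sub_eq_add_neg]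
    have hf2 : f = x + C 7 * f' := by
      have : (C 7 : ℤ⟦X⟧) = 7 := by simp
      rw [this, ← hf]; ring
    have A := ih (fun l => o (l + 1)) f' N (fun a b hab => ho (by omega)) (fun l hl => Cl.of_seven (by
      rw [hf1]
      refine (h (l + 1) (by omega)).add (Cl.C _ ?_)
      have := ho (show 0 ≤ l + 1 by omega)
      exact (x0 _).up' (k := o (l + 1) - o 0) (by omega) (by omega))) hD (fun l hl => by
        have := hr (l + 1) (by omega)
        rwa [show i + 1 - (l + 1) = i - l by omega] at this)
    have B := hrule (i + 1) (o 0) N x (x0 _) (by simpa using hr 0 (by omega))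
    rw [hf2, hadd, h7]
    refine B.add ?_
    have : (C 7 : ℤ⟦X⟧) = 7 := by simp
    rw [this]
    exact A.seven

def oo : ℕ → ℕ
  | 0 => 5
  | i + 1 => 49 * oo i + 30

lemma oo_ge (i : ℕ) : 5 ≤ oo i := by induction i with
  | zero => exact le_rfl
  | succ i ih => rw [oo]; omega
lemma oo_mono : Monotone oo := monotone_nat_of_le_succ fun i => by rw [oo]; omega
lemma oo_Psi (l k : ℕ) : oo l + 5 * 7 ^ (k + 1) ≤ 7 * oo (l + k) + 5 := by
  induction k with
  | zero => have := oo_ge l; simp only [zero_add, pow_one, add_zero]; omega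
  | succ k ih => rw [← add_assoc, oo, pow_succ]; omega
lemma oo_Phi (l k : ℕ) : 7 * oo l + 5 + 5 * 7 ^ (k + 1) ≤ oo (l + k + 1) := by
  induction k with
  | zero => have := oo_ge l; simp only [zero_add, pow_one, oo]; omega
  | succ k ih => rw [← add_assoc, oo, pow_succ]; omega
lemma oo_two (i : ℕ) : 2 + 5 * 7 ^ (i + 2) ≤ oo (i + 1) := by
  induction i with
  | zero => decide
  | succ i ih => rw [oo, pow_succ]; omega

def Mo (f : ℤ⟦X⟧) : Prop := ∀ i, Cl (4 * oo i + 5) (3 * oo i + 2) (i + 1) f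
def Mu (f : ℤ⟦X⟧) : Prop := ∀ i, Cl (4 * oo i + 5) (3 * oo i + 2) (i + 2) f
def Me (f : ℤ⟦X⟧) : Prop := ∀ i, Cl (4 * (7 * oo i + 5) + 0) (3 * (7 * oo i + 5) + 0) (i + 1) f

lemma Mo.add {f g : ℤ⟦X⟧} (h : Mo f) (h' : Mo g) : Mo (f + g) := fun i => (h i).add (h' i)
lemma Mo.smul {f : ℤ⟦X⟧} (a : ℤ) (h : Mo f) : Mo (C a * f) := fun i => (h i).C a
lemma Mu.mo {f : ℤ⟦X⟧} (h : Mu f) : Mo f := fun i => (h i).mono (by omega)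
lemma Mu.seven {f : ℤ⟦X⟧} (h : Mu (7 * f)) : Mo f := fun i => (h i).of_seven

lemma Mo.psi {f : ℤ⟦X⟧} (h : Mo f) (i : ℕ) :
    Cl (4 * (7 * oo i + 5) + 0) (3 * (7 * oo i + 5) + 0) (i + 2) (Psi f) := by
  refine op_gen Psi Psi_add Psi_C (fun n N => n + 5 ≤ 7 * N) 5 2 0 0 (fun n N f => drop_Psi)
    (fun j n N f => Psi_V) (i + 1) oo f _ oo_mono (fun l _ => h l) (by simp only [oo]; omega) ?_
  intro l hl
  have := oo_Psi l (i - l)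
  rwa [show i - l + 1 = i + 1 - l by omega, show l + (i - l) = i by omega] at this

lemma Me.phi {f : ℤ⟦X⟧} (h : Me f) : Mo (Phi f) := fun i => by
  refine op_gen Phi Phi_add Phi_C (fun n N => n ≤ 7 * N + 5) 0 0 5 2 (fun n N f => drop_Phi)
    (fun j n N f => Phi_O) i (fun l => 7 * oo l + 5) f _ (fun a b hab => by have := oo_mono hab; dsimp only; omega)
    (fun l _ => h l) le_rfl ?_
  intro l hl
  have := oo_Phi l (i - l - 1)
  rwa [show i - l - 1 + 1 = i - l by omega, show l + (i - l - 1) + 1 = i by omega] at this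

end

section
open PowerSeries Finset

attribute [local irreducible] ckd

def g1 : ℤ⟦X⟧ := kap ^ 3 * bb * (kap ^ 2 - bb ^ 2)
def g2 : ℤ⟦X⟧ := kap ^ 2 * bb ^ 2 * (kap ^ 2 - bb ^ 2)
def f1 : ℤ⟦X⟧ := hi ^ 8 * g1
def f2 : ℤ⟦X⟧ := hi ^ 8 * g2

lemma g1_W : g1 ∈ W 6 := by
  have : g1 = kap ^ 5 * bb ^ 1 - kap ^ 3 * bb ^ 3 := by rw [g1]; ring
  rw [this]
  exact W_sub (W_mono' rfl) (W_mono' rfl)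
lemma g2_W : g2 ∈ W 6 := by
  have : g2 = kap ^ 4 * bb ^ 2 - kap ^ 2 * bb ^ 4 := by rw [g2]; ring
  rw [this]
  exact W_sub (W_mono' rfl) (W_mono' rfl)

lemma f1_Cl (i : ℕ) : Cl (4 * 2) (3 * 2) i f1 := Cl_exact 8 i g1_W
lemma f2_Cl (i : ℕ) : Cl (4 * 2) (3 * 2) i f2 := Cl_exact 8 i g2_W

lemma hi8 : E7 1 (hi ^ 8) 1 := by
  have := (hh1.pow 8).mulL (hi ^ 8)
  rw [← mul_pow, hi_hh, one_pow, mul_one] at this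
  exact this.symm

lemma f_mod (g : ℤ⟦X⟧) : E7 1 (hi ^ 8 * g) g := by simpa using hi8.mulR g

lemma baseA {i l : ℕ} (h : i + l = 6) : ∃ a b : ℤ,
    (a = 0 ∨ i = 6) ∧ (b = 0 ∨ l = 6) ∧
    E7 1 (U7 (kap ^ i * bb ^ l)) ((C a * kap + C b * bb) * (kap ^ 2 - bb ^ 2)) := by
  have key : ∀ p' a b, ck7 i l 0 0 1 p' → (∀ c ∈ p', c < 7) → p'.length = 4 →
      (a = 0 ∨ i = 6) → (b = 0 ∨ l = 6) → E7 1 (polS p') ((C a * kap + C b * bb) * (kap ^ 2 - bb ^ 2)) →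
      ∃ a b : ℤ, (a = 0 ∨ i = 6) ∧ (b = 0 ∨ l = 6) ∧
    E7 1 (U7 (kap ^ i * bb ^ l)) ((C a * kap + C b * bb) * (kap ^ 2 - bb ^ 2)) := by
    intro p' a b h1 h2 h3 ha hb h4
    have := chk7 h1 (by omega) h2 (by omega) (by omega) (by omega)
    rw [pow_zero, pow_zero, one_mul, one_mul] at this
    exact ⟨a, b, ha, hb, this.trans h4⟩
  obtain ⟨-, -, ⟨k1, k2, k3, k4, k5, k6, k7⟩, -⟩ := kerA
  have z : E7 1 (polS [0, 0, 0, 0]) ((C 0 * kap + C 0 * bb) * (kap ^ 2 - bb ^ 2)) :=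
    E7.of_eq (by simp [polS])
  have : (i = 6 ∧ l = 0) ∨ (i = 5 ∧ l = 1) ∨ (i = 4 ∧ l = 2) ∨ (i = 3 ∧ l = 3) ∨ (i = 2 ∧ l = 4) ∨
    (i = 1 ∧ l = 5) ∨ (i = 0 ∧ l = 6) := by omega
  rcases this with ⟨rfl, rfl⟩ | ⟨rfl, rfl⟩ | ⟨rfl, rfl⟩ | ⟨rfl, rfl⟩ | ⟨rfl, rfl⟩ | ⟨rfl, rfl⟩ | ⟨rfl, rfl⟩
  · refine key _ 1 0 k1 (by decide) rfl (by simp) (by simp) ⟨kap * bb ^ 2, ?_⟩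
    simp [polS]; ring
  · exact key _ 0 0 k2 (by decide) rfl (by simp) (by simp) z
  · exact key _ 0 0 k3 (by decide) rfl (by simp) (by simp) z
  · exact key _ 0 0 k4 (by decide) rfl (by simp) (by simp) z
  · exact key _ 0 0 k5 (by decide) rfl (by simp) (by simp) z
  · exact key _ 0 0 k6 (by decide) rfl (by simp) (by simp) z
  · refine key _ 0 (-1) k7 (by decide) rfl (by simp) (by simp) ⟨kap ^ 2 * bb, ?_⟩
    simp [polS]; ring

lemma psi_A {x : ℤ⟦X⟧} (h : Mo x) : ∃ c1 c2 : ℤ, E7 1 (Psi x) (C c1 * f1 + C c2 * f2) := by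
  obtain ⟨w, m, e⟩ := Cl.get (j := 0) (e := 0) (r := 25) (h 0) (by simp [oo])
  have m : w ∈ W 17 := m
  obtain ⟨w', m', e'⟩ := U_lin (Submodule.span ℤ {g1, g2}) (kap ^ 1 * bb ^ 2) kap 1 (by
    intro I L hIL
    have e0 : kap ^ 1 * bb ^ 2 * (kap ^ I * bb ^ L) = kap ^ (I + 1) * bb ^ (L + 2) := by ring
    rw [e0]; simp only [one_mul]
    have p := pull (I := I + 1) (L := L + 2) (i1 := (I + 1) / 7) (i0 := (I + 1) % 7) (l1 := (L + 2) / 7)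
      (l0 := (L + 2) % 7) (by omega) (by omega)
    obtain ⟨a, b, ha, hb, ev⟩ := baseA (i := (I + 1) % 7) (l := (L + 2) % 7) (by omega)
    have hh : (I + 1) / 7 + (L + 2) / 7 = 2 := by omega
    have ha : a = 0 ∨ (L + 2) / 7 = 1 ∨ (L + 2) / 7 = 2 := by omega
    have hb : b = 0 ∨ (L + 2) / 7 = 0 ∨ (L + 2) / 7 = 1 := by omega
    have E := ((p.trans (ev.mulL _)).mulL kap)
    generalize (I + 1) / 7 = i1 at *
    generalize (L + 2) / 7 = l1 at *
    refine ⟨_, ?_, E⟩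
    have s1 : g1 ∈ Submodule.span ℤ {g1, g2} := Submodule.subset_span (by simp)
    have s2 : g2 ∈ Submodule.span ℤ {g1, g2} := Submodule.subset_span (by simp)
    have t1 : kap * (kap ^ i1 * bb ^ l1 * ((C a * kap + C b * bb) * (kap ^ 2 - bb ^ 2)))
      = C a * (kap ^ (i1 + 2) * bb ^ l1 * (kap ^ 2 - bb ^ 2))
        + C b * (kap ^ (i1 + 1) * bb ^ (l1 + 1) * (kap ^ 2 - bb ^ 2)) := by ring
    rw [t1]
    refine Submodule.add_mem _ ?_ ?_
    · rcases ha with rfl | ha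
      · simp
      rw [← zsm]
      refine Submodule.smul_mem _ _ ?_
      rcases ha with rfl | rfl
      · obtain rfl : i1 = 1 := by omega
        convert s1 using 1; rw [g1]; ring
      · obtain rfl : i1 = 0 := by omega
        convert s2 using 1; rw [g2]
    · rcases hb with rfl | hb
      · simp
      rw [← zsm]
      refine Submodule.smul_mem _ _ ?_
      rcases hb with rfl | rfl
      · obtain rfl : i1 = 2 := by omega
        convert s1 using 1; rw [g1]; ring
      · obtain rfl : i1 = 1 := by omega
        convert s2 using 1; rw [g2]) m
  rw [one_mul] at e'
  obtain ⟨c1, c2, hc⟩ := Submodule.mem_span_pair.1 m'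
  refine ⟨c1, c2, (Psi_mod7 x).symm.trans (((e.mulL _).U7.mulL _).trans (e'.trans ?_))⟩
  rw [← hc, zsm, zsm]
  exact (((f_mod g1).mulL _).add ((f_mod g2).mulL _)).symm

lemma hi8' : E7 2 (hi ^ 8) (Hh ^ 5) := by
  have := (hh_one 1 4).mulL (hi ^ 8)
  have e : hi ^ 8 * hh ^ (7 ^ 1 * 4) = (hi * hh) ^ 8 * (hh ^ 4) ^ 5 := by ring
  rw [e, hi_hh, one_pow, one_mul, mul_one, hh4] at this
  exact this.symm

lemma Phi_49 {p p' : List ℕ} {g : ℤ⟦X⟧} (h : ckd 49 40 hs49 5 12 5 p 1 2 10 p')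
    (hp : ∀ c ∈ p, c < 49) (hp' : ∀ c ∈ p', c < 49) (hl : p.length = 7) (hl' : p'.length = 6)
    (hg : E7 2 g (polS p)) : E7 2 (Phi (hi ^ 8 * g)) (Hh ^ 10 * polS p') := by
  have a := chk (e := 38) (k := 2) (d := 6) (d' := 5) hs49 5 12 5 p 1 2 10 p' h (Or.inr ⟨rfl, rfl⟩) rfl
    (by norm_num) le_rfl hp hp' hl hl' rfl rfl (by norm_num)
  have b := Phi_raw (j := 1) (a := 1) (c := 0) (x := 0) (y := 3) (hi ^ 8 * g) (by norm_num) (by norm_num)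
  have c := ((hi8'.mul hg).mulL (kap ^ 5 * bb ^ 12)).U7
  exact E7.cancelkb (c := 1) (a := 2) (b.symm.trans (c.trans a))

lemma Phi_49_Cl {p' : List ℕ} {f : ℤ⟦X⟧} (hl' : p'.length = 6)
    (h : E7 2 (Phi f) (Hh ^ 10 * polS p')) : Cl 25 17 2 (Phi f) := by
  refine ⟨Hh ^ 4 * polS p', W_mul' rfl (W_pow Hh_W 4) (polS_W p' 5 hl'), ?_⟩
  refine (h.mulL _).trans ?_
  have a := (hh_one 1 7).mulR (Hh ^ 4 * polS p')
  rw [one_mul] at a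
  refine (E7.of_eq ?_).trans a
  rw [← hh4]; ring

lemma Mu_of {f : ℤ⟦X⟧} (h : Cl 25 17 2 (Phi f)) (hf : ∀ i, Cl (4 * 2) (3 * 2) i f) : Mu (Phi f) := by
  intro i
  rcases i with _ | i
  · exact h
  · exact Phi_O (j := i + 2) (hf _) (oo_two i)

lemma phi_f1 : E7 2 (Phi f1) (Hh ^ 10 * polS [0, 14, 42, 35, 7, 0]) := by
  refine Phi_49 kerB.1 (by decide) (by decide) rfl rfl ⟨-(kap ^ 3 * bb ^ 3), ?_⟩
  simp [polS, g1]; ring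
lemma phi_f2 : E7 2 (Phi f2) (Hh ^ 10 * polS [1, 20, 47, 16, 1, 13]) := by
  refine Phi_49 kerB.2 (by decide) (by decide) rfl rfl ⟨-(kap ^ 2 * bb ^ 4), ?_⟩
  simp [polS, g2]; ring

def vv : ℤ⟦X⟧ := Phi f2
lemma vv_Mo : Mo vv := (Mu_of (Phi_49_Cl rfl phi_f2) f2_Cl).mo

lemma phi_f1' : ∃ y, Mo y ∧ Phi f1 = 7 * y := by
  have h : E7 1 (Phi f1) 0 := by
    refine (phi_f1.mono (by norm_num)).trans
      ⟨Hh ^ 10 * (2 * kap ^ 4 * bb + 6 * kap ^ 3 * bb ^ 2 + 5 * kap ^ 2 * bb ^ 3 + kap * bb ^ 4), ?_⟩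
    simp [polS]; ring
  obtain ⟨y, hy⟩ := h
  rw [sub_zero, pow_one] at hy
  have := Mu_of (Phi_49_Cl rfl phi_f1) f1_Cl
  rw [hy] at this
  exact ⟨y, this.seven, hy⟩

lemma Hh_mod : E7 1 Hh (kap ^ 3 - kap ^ 2 * bb - kap * bb ^ 2 + bb ^ 3) := by
  refine ⟨- 137 * (kap ^ 2 * bb) + 28087 * (kap * bb ^ 2) + 2396745 * bb ^ 3, ?_⟩
  rw [Hh]; simp; ring

lemma vv_mod : E7 1 vv (kap ^ 2 - bb ^ 2) := by
  have a := phi_f2.mono (show 1 ≤ 2 by norm_num)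
  have b : E7 1 (polS [1, 20, 47, 16, 1, 13])
      ((kap ^ 3 - kap ^ 2 * bb - kap * bb ^ 2 + bb ^ 3) * (kap ^ 2 - bb ^ 2)) := by
    refine ⟨3 * kap ^ 4 * bb + 7 * kap ^ 3 * bb ^ 2 + 2 * kap ^ 2 * bb ^ 3 + 2 * bb ^ 5, ?_⟩
    simp [polS]; ring
  have c := (Hh_mod.symm.trans Hh1).mulR (kap ^ 2 - bb ^ 2)
  have d := (Hh1.pow 10).mul (b.trans c)
  exact a.trans (d.trans (E7.of_eq (by ring)))

lemma psi_vv : E7 1 (Psi vv) (C 3 * f1 + C (-3) * f2) := by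
  have a := ((vv_mod.mulL (kap ^ 1 * bb ^ 2)).U7.mulL kap)
  have e : kap ^ 1 * bb ^ 2 * (kap ^ 2 - bb ^ 2) = kap ^ 3 * bb ^ 2 - kap ^ 1 * bb ^ 4 := by ring
  rw [e, U7_sub] at a
  obtain ⟨-, -, -, -, k1, k2⟩ := kerA
  have b1 := chk7 k1 (by norm_num) (by decide) rfl (by decide) (by norm_num)
  have b2 := chk7 k2 (by norm_num) (by decide) rfl (by decide) (by norm_num)
  have b := (b1.sub b2).mulL kap
  have c := ((Hh_mod.symm.trans Hh1).mulL (3 * kap ^ 2 * bb)).symm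
  have d := (((f_mod g1).mulL (C 3)).add ((f_mod g2).mulL (C (-3)))).symm
  refine (Psi_mod7 vv).symm.trans (a.trans (b.trans ((E7.of_eq ?_).trans (c.trans ((E7.of_eq ?_).trans d)))))
  · simp [polS]; ring
  · simp [g1, g2]; ring

def TT (f : ℤ⟦X⟧) : ℤ⟦X⟧ := Phi (Psi f)
lemma TT_add (f g : ℤ⟦X⟧) : TT (f + g) = TT f + TT g := by rw [TT, Psi_add, Phi_add]; rfl
lemma TT_C (a : ℤ) (g : ℤ⟦X⟧) : TT (C a * g) = C a * TT g := by rw [TT, Psi_C, Phi_C]; rfl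

lemma TT_of {x : ℤ⟦X⟧} (h : Mo x) {c1 c2 : ℤ} (e : E7 1 (Psi x) (C c1 * f1 + C c2 * f2)) :
    ∃ y, Mo y ∧ TT x = C c2 * vv + C 7 * y := by
  obtain ⟨y, hy⟩ := e
  have c7 : (C 7 : ℤ⟦X⟧) = 7 := by simp
  rw [pow_one] at hy
  have hy1 : 7 * y = Psi x + C (-1) * (C c1 * f1 + C c2 * f2) := by
    rw [← hy]; simp only [map_neg, map_one]; ring
  have hy2 : Psi x = C 7 * y + (C c1 * f1 + C c2 * f2) := by rw [c7, ← hy]; ring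
  have m : Me y := fun i => Cl.of_seven (by
    rw [hy1]
    refine (h.psi i).add (Cl.C _ (Cl.add (Cl.C _ ?_) (Cl.C _ ?_)))
    · exact (f1_Cl _).up' (k := 7 * oo i + 3) (by omega) (by omega)
    · exact (f2_Cl _).up' (k := 7 * oo i + 3) (by omega) (by omega))
  obtain ⟨y1, m1, h1⟩ := phi_f1'
  refine ⟨Phi y + C c1 * y1, m.phi.add (m1.smul _), ?_⟩
  rw [TT, hy2, Phi_add, Phi_add, Phi_C, Phi_C, Phi_C, h1, c7, vv]
  ring

lemma TT_Mo {x : ℤ⟦X⟧} (h : Mo x) : ∃ c y, Mo y ∧ TT x = C c * vv + C 7 * y := by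
  obtain ⟨c1, c2, e⟩ := psi_A h
  obtain ⟨y, m, e⟩ := TT_of h e
  exact ⟨c2, y, m, e⟩

lemma TT_mem {x : ℤ⟦X⟧} (h : Mo x) : Mo (TT x) := by
  obtain ⟨c, y, m, e⟩ := TT_Mo h
  rw [e]
  exact (vv_Mo.smul _).add (m.smul _)

lemma TTn_add (n : ℕ) (f g : ℤ⟦X⟧) : TT^[n] (f + g) = TT^[n] f + TT^[n] g := by
  induction n generalizing f g with
  | zero => rfl
  | succ n ih => rw [Function.iterate_succ_apply, TT_add, ih]; rfl
lemma TTn_C (n : ℕ) (a : ℤ) (g : ℤ⟦X⟧) : TT^[n] (C a * g) = C a * TT^[n] g := by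
  induction n generalizing g with
  | zero => rfl
  | succ n ih => rw [Function.iterate_succ_apply, TT_C, ih]; rfl

lemma TTn_vv (n : ℕ) : ∃ m, Mo m ∧ TT^[n] vv = C ((-3) ^ n) * vv + C 7 * m := by
  induction n with
  | zero => exact ⟨C 0 * vv, vv_Mo.smul 0, by simp⟩
  | succ n ih =>
    obtain ⟨m, hm, e⟩ := ih
    obtain ⟨y, hy, e'⟩ := TT_of vv_Mo psi_vv
    refine ⟨C ((-3) ^ n) * y + TT m, (hy.smul _).add (TT_mem hm), ?_⟩
    rw [Function.iterate_succ_apply', e, TT_add, TT_C, TT_C, e', pow_succ]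
    simp only [map_mul]
    ring

lemma TT_key (n : ℕ) : ∀ x, Mo x → ∃ c y, Mo y ∧ TT^[n + 1] x = C c * TT^[n] vv + C (7 ^ (n + 1)) * y := by
  induction n with
  | zero => intro x hx; simpa using TT_Mo hx
  | succ n ih =>
    intro x hx
    obtain ⟨c, y, hy, e⟩ := ih x hx
    obtain ⟨c', y', hy', e'⟩ := TT_Mo hy
    obtain ⟨m, hm, e2⟩ := TTn_vv (n + 1)
    have : (7 : ℤ) ∣ 2 ^ (n + 1) * (-3) ^ (n + 1) - 1 := by
      rw [← mul_pow]
      have := sub_dvd_pow_sub_pow (2 * (-3) : ℤ) 1 (n + 1)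
      rw [one_pow] at this
      exact dvd_trans (by norm_num) this
    obtain ⟨k, hk⟩ := this
    have hk' : (C (2 ^ (n + 1)) : ℤ⟦X⟧) * C ((-3) ^ (n + 1)) = 1 + C 7 * C k := by
      rw [← map_mul, ← map_mul, ← map_one C, ← map_add]
      congr 1; linarith
    refine ⟨c + 7 ^ (n + 1) * c' * 2 ^ (n + 1), y' + C (-c') * (C k * vv + C (2 ^ (n + 1)) * m),
      hy'.add (((vv_Mo.smul _).add (hm.smul _)).smul _), ?_⟩
    have hv : vv = C (2 ^ (n + 1)) * TT^[n + 1] vv - C 7 * (C k * vv + C (2 ^ (n + 1)) * m) := by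
      rw [e2]
      linear_combination (-vv) * hk'
    rw [Function.iterate_succ_apply', e, TT_add, TT_C, TT_C, e', ← Function.iterate_succ_apply' TT]
    rw [pow_succ (7 : ℤ) (n + 1)]
    simp only [map_add, map_mul, map_neg]
    linear_combination (C (7 ^ (n + 1)) * C c') * hv

lemma Phi_one : ∃ m, Mo m ∧ Phi 1 = C 7 * m := by
  obtain ⟨-, -, -, k, -⟩ := kerA
  have b := chk7 k (by norm_num) (by decide) rfl (by decide) (by norm_num)
  have h : E7 1 (Phi 1) 0 := by
    have := Phi_mod7 1
    rw [mul_one] at this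
    refine E7.cancelkb (c := 1) (a := 1) (this.symm.trans (b.trans (E7.of_eq ?_)))
    simp [polS]
  obtain ⟨y, hy⟩ := h
  rw [sub_zero, pow_one] at hy
  have o : ∀ i, Cl 0 0 i (1 : ℤ⟦X⟧) := fun i => ⟨1, by simpa using W_mono 0 0, E7.of_eq (by simp)⟩
  have : Mu (Phi 1) := by
    refine Mu_of ?_ fun i => (o i).up' (k := 2) rfl rfl
    have := Phi_Cl (j := 1) (a := 1) (c := 0) (x := 0) (y := 3) (e := 0) (r := 0) (s' := 21) (d' := 14)
      (by norm_num) (by norm_num) (by norm_num) (o 2) (by norm_num) (by norm_num) (by norm_num)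
    exact this.up' (k := 1) rfl rfl
  rw [hy] at this
  exact ⟨y, this.seven, by rw [hy]; simp⟩

lemma final_P (α : ℕ) (h : 1 ≤ α) : ∃ x : ℤ, E7 α (TT^[α] (Phi 1)) (C x * TT^[α - 1] (Phi 1)) := by
  obtain ⟨m, hm, e⟩ := Phi_one
  have c7 : (C 7 : ℤ⟦X⟧) = 7 := by simp
  rw [e, TTn_C, TTn_C]
  rcases α with _ | _ | n
  · omega
  · refine ⟨0, ?_⟩
    rw [E7, map_zero, zero_mul, sub_zero, c7]
    simp
  · obtain ⟨c, y, hy, e1⟩ := TT_key n m hm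
    obtain ⟨c', y', hy', e2⟩ := TT_key n vv vv_Mo
    refine ⟨c', ?_⟩
    rw [Nat.add_sub_cancel, Function.iterate_succ_apply' TT (n + 1), e1, TT_add, TT_C, TT_C,
      ← Function.iterate_succ_apply' TT, e2]
    refine ⟨C c * y' + TT y - C c' * y, ?_⟩
    rw [pow_succ' (7 : ℤ⟦X⟧) (n + 1)]
    have e7 : (C (7 ^ (n + 1)) : ℤ⟦X⟧) = 7 ^ (n + 1) := by rw [map_pow, c7]
    rw [c7, e7]
    ring

end

section
open PowerSeries Finset

lemma U_ofPS (U : LaurentSeries ℤ → LaurentSeries ℤ)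
    (hU : ∀ (f : LaurentSeries ℤ) (n : ℤ), (U f).coeff n = f.coeff (7 * n)) (f : ℤ⟦X⟧) :
    U (HahnSeries.ofPowerSeries ℤ ℤ f) = HahnSeries.ofPowerSeries ℤ ℤ (U7 f) := by
  ext n
  rw [hU]
  rcases lt_or_ge n 0 with h | h
  · rw [HahnSeries.ofPowerSeries_apply, HahnSeries.embDomain_of_notMem_range, HahnSeries.ofPowerSeries_apply,
      HahnSeries.embDomain_of_notMem_range]
    · rintro ⟨k, hk⟩; simp at hk; omega
    · rintro ⟨k, hk⟩; simp at hk; omega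
  · obtain ⟨k, rfl⟩ := Int.eq_ofNat_of_zero_le h
    rw [show (7 * (k : ℤ)) = ((7 * k : ℕ) : ℤ) by push_cast; rfl]
    rw [HahnSeries.ofPowerSeries_apply_coeff, HahnSeries.ofPowerSeries_apply_coeff, U7_coeff]

lemma J_x7 (b : ℕ) (hb : b ≠ 0) : J (7 * b) = x7 (J b) := by
  rw [J_expand b hb, J_expand (7 * b) (by omega), x7]
  rw [PowerSeries.expand_mul_eq_comp (hp := by norm_num) (hq := hb)]
  rfl

def ZZ : ℤ⟦X⟧ := J 7 ^ 16 * Ji 14 ^ 5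

lemma Ji_x7 (b : ℕ) (hb : b ≠ 0) : Ji (7 * b) = x7 (Ji b) := by
  have h1 := J_Ji (7 * b) (by omega)
  have h2 : x7 (Ji b) * J (7 * b) = 1 := by
    rw [J_x7 b hb, ← map_mul, mul_comm, J_Ji b hb, map_one]
  calc Ji (7 * b) = (x7 (Ji b) * J (7 * b)) * Ji (7 * b) := by rw [h2, one_mul]
    _ = _ := by rw [mul_assoc, h1, mul_one]

lemma step_odd (f : ℤ⟦X⟧) : U7 (PowerSeries.X ^ 12 * J 2 ^ 5 * J 49 ^ 16 * Ji 1 ^ 16 * Ji 98 ^ 5 * f)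
    = PowerSeries.X ^ 2 * J 2 ^ 3 * x7 (J 1 ^ 16 * Ji 2 ^ 5) * Phi f := by
  have e : PowerSeries.X ^ 12 * J 2 ^ 5 * J 49 ^ 16 * Ji 1 ^ 16 * Ji 98 ^ 5 * f
      = x7 (PowerSeries.X * J 7 ^ 16 * Ji 14 ^ 5) * (PowerSeries.X ^ 5 * (J 2 ^ 5 * Ji 1 ^ 16 * f)) := by
    rw [map_mul, map_mul, map_pow, map_pow, ← J_x7 7 (by norm_num), ← Ji_x7 14 (by norm_num)]
    have : x7 PowerSeries.X = PowerSeries.X ^ 7 := by rw [x7, expand_X]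
    rw [this]; ring
  rw [e, U7_x7, X_Phi, map_mul, map_pow, map_pow, ← J_x7 1 one_ne_zero, ← Ji_x7 2 two_ne_zero]
  ring

lemma step_even (f : ℤ⟦X⟧) : U7 (PowerSeries.X ^ 2 * J 2 ^ 3 * x7 (J 1 ^ 16 * Ji 2 ^ 5) * f) = Psi f := by
  rw [Psi, ← U7_x7]
  congr 1; ring

lemma A_aux {A : LaurentSeries ℤ} {a b c d : ℤ⟦X⟧} (h : A * HahnSeries.ofPowerSeries ℤ ℤ a =
    HahnSeries.ofPowerSeries ℤ ℤ b) (hc : a * c = 1) (hd : b * c = d) :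
    A = HahnSeries.ofPowerSeries ℤ ℤ d := by
  rw [← hd, map_mul, ← h, mul_assoc, ← map_mul, hc, map_one, mul_one]

end

section
open PowerSeries Finset

/-- in the d₅ tower (`A₅ = q^{12}·J_2^5·J_49^{16}/(J_1^{16}·J_98^5)`,
`L_0 = 1`, `L_{2β+1} = U_7(A₅·L_{2β})`, `L_{2β+2} = U_7(L_{2β+1})`), for every `α ≥ 1`
there is an integer `x` with `L_{2α+1} ≡ x·L_{2α−1} (mod 7^α)` coefficientwise. -/
theorem stmt18
    (U : LaurentSeries ℤ → LaurentSeries ℤ)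
    (hU : ∀ (f : LaurentSeries ℤ) (n : ℤ), (U f).coeff n = f.coeff (7 * n))
    (A5 : LaurentSeries ℤ)
    (hA5 : A5 * HahnSeries.ofPowerSeries ℤ ℤ ((J 1) ^ 16 * (J 98) ^ 5)
        = HahnSeries.ofPowerSeries ℤ ℤ (PowerSeries.X ^ 12 * (J 2) ^ 5 * (J 49) ^ 16))
    (L : ℕ → LaurentSeries ℤ) (hL0 : L 0 = 1)
    (hLodd : ∀ β : ℕ, L (2 * β + 1) = U (A5 * L (2 * β)))
    (hLeven : ∀ β : ℕ, L (2 * β + 2) = U (L (2 * β + 1)))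
    (α : ℕ) (hα : 1 ≤ α) :
    ∃ x : ℤ, ∀ n : ℤ,
      Int.ModEq (7 ^ α) ((L (2 * α + 1)).coeff n) (x * (L (2 * α - 1)).coeff n) := by
  have hA : A5 = HahnSeries.ofPowerSeries ℤ ℤ
      (PowerSeries.X ^ 12 * J 2 ^ 5 * J 49 ^ 16 * Ji 1 ^ 16 * Ji 98 ^ 5) := by
    have h1 : (J 1 ^ 16 * J 98 ^ 5) * (Ji 1 ^ 16 * Ji 98 ^ 5) = 1 := by
      calc _ = (J 1 * Ji 1) ^ 16 * (J 98 * Ji 98) ^ 5 := by ring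
        _ = 1 := by rw [J_Ji 1 one_ne_zero, J_Ji 98 (by norm_num)]; simp
    exact A_aux hA5 h1 (by ring)
  have odd : ∀ β f, L (2 * β) = HahnSeries.ofPowerSeries ℤ ℤ f → L (2 * β + 1) =
      HahnSeries.ofPowerSeries ℤ ℤ (PowerSeries.X ^ 2 * J 2 ^ 3 * x7 (J 1 ^ 16 * Ji 2 ^ 5) * Phi f) := by
    intro β f h
    rw [hLodd, h, hA, ← map_mul, U_ofPS U hU, step_odd]
  have main : ∀ β, L (2 * β + 1) = HahnSeries.ofPowerSeries ℤ ℤ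
      (PowerSeries.X ^ 2 * J 2 ^ 3 * x7 (J 1 ^ 16 * Ji 2 ^ 5) * TT^[β] (Phi 1)) := by
    intro β
    induction β with
    | zero => exact odd 0 1 (by rw [map_one]; exact hL0)
    | succ β ih =>
      rw [Function.iterate_succ_apply', TT]
      refine odd (β + 1) _ ?_
      rw [show 2 * (β + 1) = 2 * β + 2 by ring, hLeven, ih, U_ofPS U hU, step_even]
  obtain ⟨x, hx⟩ := final_P α hα
  refine ⟨x, fun n => ?_⟩
  have h2 : L (2 * α - 1) = L (2 * (α - 1) + 1) := congrArg L (by omega)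
  rw [h2, main, main]
  have hx' := hx.mulL (PowerSeries.X ^ 2 * J 2 ^ 3 * x7 (J 1 ^ 16 * Ji 2 ^ 5))
  rw [mul_left_comm, E7, seven_coeff] at hx'
  rcases lt_or_ge n 0 with h | h
  · rw [HahnSeries.ofPowerSeries_apply, HahnSeries.embDomain_of_notMem_range, HahnSeries.ofPowerSeries_apply,
      HahnSeries.embDomain_of_notMem_range, mul_zero]
    · rintro ⟨k, hk⟩; simp at hk; omega
    · rintro ⟨k, hk⟩; simp at hk; omega
  · obtain ⟨k, rfl⟩ := Int.eq_ofNat_of_zero_le h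
    rw [HahnSeries.ofPowerSeries_apply_coeff, HahnSeries.ofPowerSeries_apply_coeff]
    have := hx' k
    rw [map_sub, coeff_C_mul] at this
    exact (Int.modEq_iff_dvd.2 this).symm

end
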